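/- Let Ω ⊂ [0,∞)² be such that X_Ω = μ⁻¹(Ω) ⊂ ℂ² is a convex toric domain. Let a = max{x : (x,0) ∈ Ω}, b = max{y : (0,y) ∈ Ω}, and w = max{x + y : (x,y) ∈ Ω}. Then c₂ᵐⁱⁿ(X_Ω) = c₂ᵐᵃˣ(X_Ω) = min(2·min(a,b), w). -/

import Mathlib

/-!
For ellipsoids in `ℂ²`, `N₂(a, b) = min (2 min(a, b)) (max(a, b))`. The theorem follows from three
facts: `N₂` is monotone under symplectic embeddings of ellipsoids (`nk_mono`); the toric domain is
contained in ellipsoids with `N₂` arbitrarily close to `M = min (2 min(a, b)) w`, namely the ball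
`E(w, w)` and long ellipsoids with one width slightly larger than `a` or `b`; and ellipsoids with
`N₂` arbitrarily close to `M` embed into the toric domain. The first fact gives
`ckmin ≤ ckmax`, the other two give `ckmax ≤ M ≤ ckmin` (`main_of_emb`).

**Monotonicity of `N₂`.** It reduces to two obstructions for the ellipsoid `E(c/2, c)`: if it embeds
into `E(a₁, a₂)` with `2 * a₁ ≤ a₂` then `c/2 ≤ a₁` (`obstructionA`), and if it embeds into the
ball `E(w, w)` then `c ≤ w` (`obstructionB`). Both come from periodic orbits. An embedding that
violates the inequality yields a Hamiltonian on `ℂ²` which is a function `f` of the quadratic form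
of the small ellipsoid inside the image, a function `g` of the quadratic form of the large one
outside, and quadratic at infinity (`EmbSetup`). Orbits outside the image have nonpositive action
(`classify_out`), and those inside are explicit circles (`classify_in`). On the other hand, there is
a one-periodic orbit of positive action: the action functional, restricted to loops with finitely
many Fourier modes, has a linking geometry, so that Brouwer's theorem (`linkingA`) and gradient
descent (`minimaxA`) produce almost critical points, which accumulate at a periodic orbit
(`compactPS`, `exists_hsolA`). For `obstructionA` this is a contradiction, since the slope of `f`
is too small for nonconstant one-periodic orbits inside.

For `obstructionB` the slope of `f` exceeds `c/2`, and simple orbits in the plane of the first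
coordinate exist; they all have the same action `a₀`. Rotation of the loop parameter preserves the
action functional, and the unstable space now contains two modes on which it acts with weight one.
The equivariant linking theorem (`linkingB`, `minimaxB`) gives an orbit of positive action which
moreover, if its action is `a₀`, has vanishing first Fourier coefficient for any prescribed compactly supported
observable (`exists_hsolB`), in the spirit of Lusternik and Schnirelmann. Choosing for the
observable the first coordinate, cut off and transported by the embedding, excludes the simple
orbits.

**Embedding ellipsoids.** Let `c = M / 2`. By convexity the toric domain contains the toric domain
`quadDomain c p` over a quadrilateral with vertices `(0,0)`, `(c,0)`, `(p,2c-p)`, `(0,c)`. Every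
ellipsoid `E(c', 2 * c')` with `c' < c`, where `N₂` is `2 * c'`, embeds into it (`emb_ellipsoid`).
In symplectic polar coordinates, a linear symplectic change of the action and angle coordinates
(`twist`) followed by a shear depending on one action only (`shear`) bends the moment triangle of
the ellipsoid along a line so that it fits into the quadrilateral. Polar coordinates are singular
on the axes; this is avoided by first applying area preserving maps of the plane that move a disk
off a slit, or into a strip, at arbitrarily small cost of area (`exists_slit`, `exists_strip`).
-/

open Set MeasureTheory
open scoped Real ENNReal Pointwise

noncomputable section

/-- The standard symplectic form `ω = Σᵢ dxᵢ ∧ dyᵢ` on `ℂⁿ ≅ ℝ²ⁿ`. -/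
def stdSymp (n : ℕ) (v w : Fin n → ℂ) : ℝ :=
  ∑ i, ((starRingEnd ℂ) (v i) * w i).im

/-- `X` symplectically embeds into `X'` (both subsets of `ℂⁿ`): there is an injective map
`φ : X → ℂⁿ` with image in `X'`, smooth on the interior of `X`, whose derivative preserves
the standard symplectic form at every interior point. -/
def SympEmb (n : ℕ) (X X' : Set (Fin n → ℂ)) : Prop :=
  ∃ φ : (Fin n → ℂ) → (Fin n → ℂ),
    Set.InjOn φ X ∧ φ '' X ⊆ X' ∧ ContDiffOn ℝ (⊤ : ℕ∞) φ (interior X) ∧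
    ∀ x ∈ interior X, ∀ v w : Fin n → ℂ,
      stdSymp n (fderiv ℝ φ x v) (fderiv ℝ φ x w) = stdSymp n v w

/-- The ellipsoid `E(a₁,…,aₙ) ⊂ ℂⁿ`. -/
def ellipsoid {n : ℕ} (a : Fin n → ℝ) : Set (Fin n → ℂ) :=
  {z | ∑ i, Real.pi * ‖z i‖ ^ 2 / a i ≤ 1}

/-- The polydisk `P(a₁,…,aₙ) ⊂ ℂⁿ`. -/
def polydisk {n : ℕ} (a : Fin n → ℝ) : Set (Fin n → ℂ) :=
  {z | ∀ i, Real.pi * ‖z i‖ ^ 2 ≤ a i}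

/-- `Nk k a` is the `k`-th smallest element (with multiplicity) of the multiset
`{m · aᵢ : m ∈ ℤ_{>0}, 1 ≤ i ≤ n}`. -/
def Nk {n : ℕ} (k : ℕ) (a : Fin n → ℝ) : ℝ :=
  sInf {t : ℝ | k ≤ {p : Fin n × ℕ | ((p.2 : ℝ) + 1) * a p.1 ≤ t}.ncard}

/-- `c_k^max(X)`: the infimum of `N_k(a)` over ellipsoids `E(a)` into which `X`
symplectically embeds. -/
def ckmax (n k : ℕ) (X : Set (Fin n → ℂ)) : ℝ :=
  sInf {c : ℝ | ∃ a : Fin n → ℝ, (∀ i, 0 < a i) ∧ SympEmb n X (ellipsoid a) ∧ c = Nk k a}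

/-- `c_k^min(X)`: the supremum of `N_k(a)` over ellipsoids `E(a)` symplectically
embedding into `X`. -/
def ckmin (n k : ℕ) (X : Set (Fin n → ℂ)) : ℝ :=
  sSup {c : ℝ | ∃ a : Fin n → ℝ, (∀ i, 0 < a i) ∧ SympEmb n (ellipsoid a) X ∧ c = Nk k a}

/-- The moment map `μ(z₁,…,zₙ) = (π|z₁|²,…,π|zₙ|²)`. -/
def momentMap (n : ℕ) (z : Fin n → ℂ) : Fin n → ℝ := fun i => Real.pi * ‖z i‖ ^ 2

/-- The toric domain `X_Ω = μ⁻¹(Ω)`. -/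
def toricDomain {n : ℕ} (Ω : Set (Fin n → ℝ)) : Set (Fin n → ℂ) :=
  momentMap n ⁻¹' Ω

/-- `X_Ω` is a convex toric domain: `Ω ⊆ [0,∞)ⁿ`, the symmetrization
`Ω̂ = {x : (|x₁|,…,|xₙ|) ∈ Ω}` is compact and convex, and `Ω` is the closure of a
nonempty relatively open subset of `[0,∞)ⁿ`. -/
def IsConvexToricDomain {n : ℕ} (Ω : Set (Fin n → ℝ)) : Prop :=
  Ω ⊆ {x | ∀ i, 0 ≤ x i} ∧
  IsCompact {x : Fin n → ℝ | (fun i => |x i|) ∈ Ω} ∧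
  Convex ℝ {x : Fin n → ℝ | (fun i => |x i|) ∈ Ω} ∧
  ∃ V : Set (Fin n → ℝ), IsOpen V ∧ (V ∩ {x | ∀ i, 0 ≤ x i}).Nonempty ∧
    Ω = closure (V ∩ {x | ∀ i, 0 ≤ x i})

/-- The quadrilateral `Q_ε` with vertices `(0,0)`, `(1,0)`, `(ε,ε)`, `(0,1)`, i.e. the union
of the triangles `conv{(0,0),(1,0),(ε,ε)}` and `conv{(0,0),(ε,ε),(0,1)}`. -/
def Qeps (ε : ℝ) : Set (Fin 2 → ℝ) :=
  convexHull ℝ {![0, 0], ![1, 0], ![ε, ε]} ∪ convexHull ℝ {![0, 0], ![ε, ε], ![0, 1]}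

/-! ### Brouwer's theorem -/

/-- Values at `1` of polynomials of degree at most `n` are a fixed affine combination of their
values at `n + 1` given nodes. -/
lemma exists_interpolation (n : ℕ) (T : ℝ) (hT : 0 < T) :
    ∃ (s : Finset ℝ) (c : ℝ → ℝ), (∀ t ∈ s, 0 < t ∧ t < T) ∧ ∑ t ∈ s, c t = 1 ∧
      ∀ p : Polynomial ℝ, p.natDegree ≤ n → p.eval 1 = ∑ t ∈ s, c t * p.eval t := by
  obtain ⟨s, hs, hcard⟩ := (Set.Ioo_infinite hT).exists_subset_card_eq (n + 1)
  have hinj : Set.InjOn (id : ℝ → ℝ) s := Function.injective_id.injOn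
  have key : ∀ p : Polynomial ℝ, p.natDegree ≤ n →
      p.eval 1 = ∑ t ∈ s, (Lagrange.basis s id t).eval 1 * p.eval t := by
    intro p hp
    have hd : p.degree < (s.card : WithBot ℕ) := by
      rw [hcard]
      refine lt_of_le_of_lt Polynomial.degree_le_natDegree ?_
      exact_mod_cast Nat.lt_succ_of_le hp
    have h := Lagrange.eq_interpolate hinj hd
    conv_lhs => rw [h]
    rw [Lagrange.interpolate_apply, Polynomial.eval_finsetSum]
    refine Finset.sum_congr rfl fun t _ => ?_
    simp [mul_comm]
  refine ⟨s, fun t => (Lagrange.basis s id t).eval 1, fun t ht => hs ht, ?_, key⟩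
  have := key 1 (by simp)
  simpa using this.symm

lemma exists_det_polynomial {E : Type*} [NormedAddCommGroup E] [NormedSpace ℝ E]
    [FiniteDimensional ℝ E] (A : E →L[ℝ] E) :
    ∃ p : Polynomial ℝ, p.natDegree ≤ Module.finrank ℝ E ∧
      ∀ t : ℝ, p.eval t = (ContinuousLinearMap.id ℝ E + t • A).det := by
  let b := Module.finBasis ℝ E
  let M := LinearMap.toMatrix b b (A : E →ₗ[ℝ] E)
  refine ⟨Matrix.det ((Polynomial.X : Polynomial ℝ) • M.map Polynomial.C +
    (1 : Matrix _ _ ℝ).map Polynomial.C), ?_, ?_⟩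
  · simpa using Polynomial.natDegree_det_X_add_C_le M 1
  · intro t
    rw [ContinuousLinearMap.det, ← LinearMap.det_toMatrix b, ← Polynomial.coe_evalRingHom,
      RingHom.map_det]
    congr 1
    ext i j
    simp only [RingHom.mapMatrix_apply, Matrix.map_apply, Matrix.add_apply, Matrix.smul_apply,
      Polynomial.coe_evalRingHom, smul_eq_mul, Polynomial.eval_add, Polynomial.eval_mul,
      Polynomial.eval_X, Polynomial.eval_C, LinearMap.toMatrix_apply, M]
    rw [← LinearMap.toMatrix_id b, LinearMap.toMatrix_apply]
    simp
    ring

/-- There is no `C¹` retraction of the unit ball onto the unit sphere. -/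
theorem no_retraction {E : Type*} [NormedAddCommGroup E] [InnerProductSpace ℝ E]
    [FiniteDimensional ℝ E] (F : E → E) (hF : ContDiff ℝ 1 F) (h1 : ∀ x, ‖F x‖ = 1)
    (h2 : ∀ x, ‖x‖ = 1 → F x = x) : False := by
  borelize E
  set B : Set E := Metric.closedBall 0 1 with hB
  have hBc : IsCompact B := isCompact_closedBall 0 1
  set G : E → E := fun x => F x - x with hG
  have hGc : ContDiff ℝ 1 G := hF.sub contDiff_id
  have hGd : Differentiable ℝ G := hGc.differentiable (by norm_num)
  have hFd : Differentiable ℝ F := hF.differentiable (by norm_num)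
  have hcont : Continuous (fderiv ℝ G) := hGc.continuous_fderiv (by norm_num)
  obtain ⟨C, hC⟩ := hBc.exists_bound_of_continuousOn hcont.continuousOn
  have hC0 : 0 ≤ C := (norm_nonneg _).trans (hC 0 (by simp [hB]))
  have hLip : ∀ x ∈ B, ∀ y ∈ B, ‖G x - G y‖ ≤ C * ‖x - y‖ := fun x hx y hy =>
    (convex_closedBall (0 : E) 1).norm_image_sub_le_of_norm_fderiv_le
      (fun z _ => hGd z) hC hy hx
  classical
  set G0 : E → E := fun x => if ‖x‖ ≤ 1 then G x else 0 with hG0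
  have hmix : ∀ x y : E, ‖x‖ ≤ 1 → 1 < ‖y‖ → ‖G x‖ ≤ C * ‖x - y‖ := by
    intro x y hx hy
    have hc : ContinuousOn (fun s : ℝ => ‖AffineMap.lineMap x y s‖) (Icc 0 1) := by
      have : Continuous (AffineMap.lineMap (k := ℝ) x y) := AffineMap.lineMap_continuous
      fun_prop
    obtain ⟨s, hs, hs1⟩ := intermediate_value_Icc zero_le_one hc
      (show (1 : ℝ) ∈ _ by simpa using ⟨hx, hy.le⟩)
    set z := AffineMap.lineMap x y s with hz
    have hz1 : ‖z‖ = 1 := hs1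
    have hGz : G z = 0 := by simp [hG, h2 z hz1]
    have hxz : x - z = s • (x - y) := by
      simp only [hz, AffineMap.lineMap_apply_module]; module
    have h := hLip x (by simpa [hB] using hx) z (by simp [hB, hz1])
    rw [hGz, sub_zero, hxz, norm_smul, Real.norm_eq_abs, abs_of_nonneg hs.1] at h
    refine h.trans (mul_le_mul_of_nonneg_left ?_ hC0)
    exact mul_le_of_le_one_left (norm_nonneg _) hs.2
  have hLip0 : ∀ x y, ‖G0 x - G0 y‖ ≤ C * ‖x - y‖ := by
    intro x y
    simp only [hG0]
    split_ifs with hx hy hy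
    · exact hLip x (by simpa [hB] using hx) y (by simpa [hB] using hy)
    · simpa using hmix x y hx (not_le.1 hy)
    · simpa [norm_sub_rev x y] using hmix y x hy (not_le.1 hx)
    · simpa using mul_nonneg hC0 (norm_nonneg _)
  -- determinants are positive near the identity
  have hdet : ∀ᶠ A : E →L[ℝ] E in nhds (ContinuousLinearMap.id ℝ E), 0 < A.det := by
    have hc : Continuous fun A : E →L[ℝ] E => A.det := ContinuousLinearMap.continuous_det
    refine (hc.tendsto _).eventually (lt_mem_nhds ?_)
    change (0 : ℝ) < LinearMap.det ((ContinuousLinearMap.id ℝ E : E →L[ℝ] E) : E →ₗ[ℝ] E)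
    simp
  obtain ⟨ε, hε, hdet⟩ := Metric.eventually_nhds_iff.1 hdet
  set T : ℝ := min 1 (min ε 1 / (C + 1)) with hT
  have hT0 : 0 < T := by positivity
  have hTC : ∀ t, 0 < t → t < T → t * C < min ε 1 := by
    intro t h0 ht
    have h3 : t < min ε 1 / (C + 1) := ht.trans_le (min_le_right _ _)
    rw [lt_div_iff₀ (by positivity)] at h3
    nlinarith
  have hvol : ∀ t, 0 < t → t < T →
      ∫ x in B, (ContinuousLinearMap.id ℝ E + t • fderiv ℝ G x).det = volume.real B := by
    intro t h0 ht
    have htC := hTC t h0 ht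
    have hpos : ∀ x ∈ B, 0 < (ContinuousLinearMap.id ℝ E + t • fderiv ℝ G x).det := by
      intro x hx
      apply hdet
      rw [dist_eq_norm, add_sub_cancel_left, norm_smul, Real.norm_eq_abs, abs_of_pos h0]
      exact lt_of_le_of_lt (mul_le_mul_of_nonneg_left (hC x hx) h0.le)
        (htC.trans_le (min_le_left _ _))
    set f : E → E := fun x => x + t • G x with hf
    have hfd : ∀ x ∈ B, HasFDerivWithinAt f (ContinuousLinearMap.id ℝ E + t • fderiv ℝ G x) B x :=
      fun x _ => ((hasFDerivAt_id x).add ((hGd x).hasFDerivAt.const_smul t)).hasFDerivWithinAt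
    have hinj : InjOn f B := by
      intro x hx y hy hxy
      have h3 : x - y = t • (G y - G x) := by
        simp only [hf] at hxy
        rw [smul_sub, sub_eq_sub_iff_add_eq_add, hxy]
        abel
      have h4 := hLip y hy x hx
      have h5 : ‖x - y‖ ≤ t * C * ‖x - y‖ := by
        conv_lhs => rw [h3]
        rw [norm_smul, Real.norm_eq_abs, abs_of_pos h0, mul_assoc, norm_sub_rev x y]
        exact mul_le_mul_of_nonneg_left h4 h0.le
      have h6 : t * C < 1 := htC.trans_le (min_le_right _ _)
      have h7 : ‖x - y‖ = 0 := by nlinarith [norm_nonneg (x - y)]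
      exact sub_eq_zero.1 (norm_eq_zero.1 h7)
    have himg : f '' B = B := by
      apply Subset.antisymm
      · rintro _ ⟨x, hx, rfl⟩
        have ht1 : t < 1 := ht.trans_le (min_le_left _ _)
        have : f x = (1 - t) • x + t • F x := by simp only [hf, hG]; module
        rw [this]
        exact (convex_closedBall (0 : E) 1) hx (by simp [h1]) (by linarith) h0.le (by ring)
      · intro y hy
        have hcw : ContractingWith (Real.toNNReal (t * C)) (fun x => y - t • G0 x) := by
          refine ⟨?_, LipschitzWith.of_dist_le_mul fun a b => ?_⟩
          · rw [Real.toNNReal_lt_one]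
            exact htC.trans_le (min_le_right _ _)
          · rw [dist_eq_norm, dist_eq_norm]
            have : (y - t • G0 a) - (y - t • G0 b) = t • (G0 b - G0 a) := by module
            rw [this, norm_smul, Real.norm_eq_abs, abs_of_pos h0,
              Real.coe_toNNReal _ (by positivity), mul_assoc]
            have := hLip0 b a
            rw [norm_sub_rev b a] at this
            exact mul_le_mul_of_nonneg_left this h0.le
        obtain ⟨x, hx⟩ : ∃ x, y - t • G0 x = x :=
          ⟨_, (ContractingWith.fixedPoint_isFixedPt hcw)⟩
        by_cases hxn : ‖x‖ ≤ 1
        · refine ⟨x, by simpa [hB] using hxn, ?_⟩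
          simp only [hG0, if_pos hxn] at hx
          simp only [hf]
          exact (sub_eq_iff_eq_add.1 hx).symm
        · simp only [hG0, if_neg hxn, smul_zero, sub_zero] at hx
          exact absurd (by simpa [hB, hx] using hy) hxn
    have h := integral_image_eq_integral_abs_det_fderiv_smul volume
      (hBc.measurableSet) hfd hinj (fun _ => (1 : ℝ))
    rw [himg] at h
    simp only [smul_eq_mul, mul_one] at h
    rw [setIntegral_congr_fun hBc.measurableSet
      (fun x hx => (abs_of_pos (hpos x hx)).symm), ← h]
    simp
  have hzero : ∀ x, (ContinuousLinearMap.id ℝ E + (1 : ℝ) • fderiv ℝ G x).det = 0 := by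
    intro x
    have hDF : ContinuousLinearMap.id ℝ E + (1 : ℝ) • fderiv ℝ G x = fderiv ℝ F x := by
      have : fderiv ℝ G x = fderiv ℝ F x - ContinuousLinearMap.id ℝ E := by
        simp only [hG]
        rw [fderiv_fun_sub (hFd x) differentiableAt_fun_id, fderiv_fun_id]
      rw [this]; module
    rw [hDF]
    by_contra hne
    have horth : ∀ v, inner ℝ (F x) (fderiv ℝ F x v) = 0 := by
      intro v
      have h3 : HasFDerivAt (fun y => ‖F y‖ ^ 2) _ x := (hFd x).hasFDerivAt.norm_sq
      have h4 : (fun y => ‖F y‖ ^ 2) = fun _ => (1 : ℝ) := by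
        ext y; simp [h1]
      rw [h4] at h3
      have h5 := congrArg (fun L : E →L[ℝ] ℝ => L v) (h3.unique (hasFDerivAt_const (1 : ℝ) x))
      simpa using h5
    obtain ⟨v, hv⟩ : ∃ v, fderiv ℝ F x v = F x := by
      have hu : IsUnit (LinearMap.det (fderiv ℝ F x : E →ₗ[ℝ] E)) := isUnit_iff_ne_zero.2 hne
      exact ((LinearMap.equivOfDetNeZero _ hne).surjective (F x))
    have h6 := horth v
    rw [hv, real_inner_self_eq_norm_sq, h1] at h6
    norm_num at h6
  obtain ⟨s, c, hs, hc1, hc⟩ := exists_interpolation (Module.finrank ℝ E) T hT0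
  have hfin : ∀ t ∈ s, IntegrableOn
      (fun x => c t * (ContinuousLinearMap.id ℝ E + t • fderiv ℝ G x).det) B := by
    intro t _
    refine ContinuousOn.integrableOn_compact hBc (Continuous.continuousOn ?_)
    have hcd : Continuous fun A : E →L[ℝ] E => A.det := ContinuousLinearMap.continuous_det
    exact continuous_const.mul (hcd.comp (continuous_const.add (hcont.const_smul t)))
  have hsum : ∀ x, ∑ t ∈ s, c t * (ContinuousLinearMap.id ℝ E + t • fderiv ℝ G x).det = 0 := by
    intro x
    obtain ⟨p, hp, hpe⟩ := exists_det_polynomial (fderiv ℝ G x)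
    have h3 := hc p hp
    rw [hpe, hzero] at h3
    rw [h3]
    exact Finset.sum_congr rfl fun t _ => by rw [hpe]
  have htot : ∑ t ∈ s, ∫ x in B, c t * (ContinuousLinearMap.id ℝ E + t • fderiv ℝ G x).det = 0 := by
    rw [← integral_finsetSum s hfin]
    simp [hsum]
  have : ∑ t ∈ s, c t * volume.real B = 0 := by
    rw [← htot]
    refine Finset.sum_congr rfl fun t ht => ?_
    rw [integral_const_mul, hvol t (hs t ht).1 (hs t ht).2]
  rw [← Finset.sum_mul, hc1, one_mul] at this
  have hpos : 0 < volume.real B := by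
    rw [measureReal_def, ENNReal.toReal_pos_iff]
    exact ⟨Metric.measure_closedBall_pos _ _ one_pos, hBc.measure_lt_top⟩
  exact hpos.ne' this

/-- Brouwer's theorem in the form used below: a continuous map that agrees with a translation
near infinity has a zero. This is the version for Euclidean spaces. -/
theorem exists_zero_inner {E : Type*} [NormedAddCommGroup E] [InnerProductSpace ℝ E]
    [FiniteDimensional ℝ E] (T : E → E) (hT : Continuous T) (R : ℝ)
    (hR : ∀ x, R ≤ ‖x‖ → T x = x) : ∃ x, T x = 0 := by
  by_contra! hne
  set R' := max R 1 with hR'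
  have hR'0 : 0 < R' := lt_of_lt_of_le one_pos (le_max_right _ _)
  have hTR : ∀ x, R' ≤ ‖x‖ → T x = x := fun x hx => hR x ((le_max_left _ _).trans hx)
  obtain ⟨x0, -, hx0⟩ := (isCompact_closedBall (0 : E) R').exists_isMinOn
    ⟨0, by simp [hR'0.le]⟩ (f := fun x => ‖T x‖) (hT.norm.continuousOn)
  set m := min ‖T x0‖ R' with hm
  have hm0 : 0 < m := lt_min (norm_pos_iff.2 (hne x0)) hR'0
  have hmT : ∀ x, m ≤ ‖T x‖ := by
    intro x
    by_cases hx : ‖x‖ ≤ R'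
    · exact (min_le_left _ _).trans (hx0 (by simpa using hx))
    · rw [hTR x (not_le.1 hx).le]
      exact (min_le_right _ _).trans (not_le.1 hx).le
  obtain ⟨g, hg, hgd, hgs⟩ := Continuous.exists_contDiff_approx 1 (hT.sub continuous_id)
    (continuous_const (y := m)) (fun _ => hm0)
  set f : E → E := fun x => x + g x with hf
  have hfc : ContDiff ℝ 1 f := contDiff_id.add (by exact_mod_cast hg)
  have hfne : ∀ x, f x ≠ 0 := by
    intro x hx
    have h1 := hgd x
    rw [dist_eq_norm] at h1
    have h2 : g x = -x := by rw [← sub_eq_zero, sub_neg_eq_add, add_comm]; exact hx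
    have h3 : g x - (T - (id : E → E)) x = - T x := by rw [h2, Pi.sub_apply, id]; abel
    rw [h3, norm_neg] at h1
    exact absurd (hmT x) (not_le.2 h1)
  have hfR : ∀ x, R' ≤ ‖x‖ → f x = x := by
    intro x hx
    have : g x = 0 := by
      by_contra h
      exact (hgs h) (by simp [hTR x hx])
    simp [hf, this]
  refine no_retraction (fun x => ‖f (R' • x)‖⁻¹ • f (R' • x)) ?_ ?_ ?_
  · have h1 : ContDiff ℝ 1 fun x : E => f (R' • x) := hfc.comp (contDiff_const_smul R')
    exact ((h1.norm ℝ fun x => hfne _).inv fun x => norm_ne_zero_iff.2 (hfne _)).smul h1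
  · intro x
    rw [norm_smul, norm_inv, norm_norm, inv_mul_cancel₀ (norm_ne_zero_iff.2 (hfne _))]
  · intro x hx
    have h1 : ‖R' • x‖ = R' := by rw [norm_smul, hx, mul_one, Real.norm_of_nonneg hR'0.le]
    rw [hfR _ h1.ge, h1, smul_smul, inv_mul_cancel₀ hR'0.ne', one_smul]

theorem exists_zero_of_eq_sub {E : Type*} [NormedAddCommGroup E] [NormedSpace ℝ E]
    [FiniteDimensional ℝ E] (T : E → E) (hT : Continuous T) (R : ℝ) (p : E)
    (hR : ∀ x, R ≤ ‖x‖ → T x = x - p) : ∃ x, T x = 0 := by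
  let e := toEuclidean (E := E)
  have hb : ∃ C : ℝ, ∀ y, ‖e.symm y‖ ≤ C * ‖y‖ :=
    ⟨_, (e.symm : EuclideanSpace ℝ (Fin (Module.finrank ℝ E)) →L[ℝ] E).le_opNorm⟩
  have hb' : ∃ C : ℝ, ∀ y, ‖e y‖ ≤ C * ‖y‖ :=
    ⟨_, (e : E →L[ℝ] EuclideanSpace ℝ (Fin (Module.finrank ℝ E))).le_opNorm⟩
  obtain ⟨C, hC⟩ := hb'
  obtain ⟨x, hx⟩ := exists_zero_inner (fun y => e (T (e.symm y + p)))
    (by fun_prop) ((|C| + 1) * (|R| + ‖p‖)) (by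
      intro y hy
      rw [hR, add_sub_cancel_right, e.apply_symm_apply]
      have h1 := hC (e.symm y)
      rw [e.apply_symm_apply] at h1
      have h2 : ‖e.symm y‖ ≤ ‖e.symm y + p‖ + ‖p‖ := by
        simpa using norm_sub_le (e.symm y + p) p
      have h3 : C * ‖e.symm y‖ ≤ (|C| + 1) * ‖e.symm y‖ :=
        mul_le_mul_of_nonneg_right (by linarith [le_abs_self C]) (norm_nonneg _)
      have h4 : |R| + ‖p‖ ≤ ‖e.symm y‖ :=
        le_of_mul_le_mul_left (hy.trans (h1.trans h3)) (by positivity)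
      linarith [le_abs_self R])
  exact ⟨e.symm x + p, by simpa using hx⟩

/-- `ZeroProp K g`: the boundary values of `g` on `∂K` force a zero in `K`, i.e. every continuous
map on `K` with the same boundary values as `g` has a zero. -/
def ZeroProp {E : Type*} [NormedAddCommGroup E] (K : Set E) (g : E → E) : Prop :=
  ∀ T : E → E, ContinuousOn T K → (∀ x ∈ frontier K, T x = g x) → ∃ x ∈ K, T x = 0

theorem zeroProp_sub {E : Type*} [NormedAddCommGroup E] [NormedSpace ℝ E]
    [FiniteDimensional ℝ E] {K : Set E} (hK : IsCompact K) {p : E} (hp : p ∈ K) :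
    ZeroProp K (fun x => x - p) := by
  classical
  intro T hT hTb
  obtain ⟨R, hR⟩ := hK.isBounded.exists_norm_le
  have hc : Continuous (K.piecewise T (fun x => x - p)) := by
    refine continuous_piecewise hTb (by rwa [hK.isClosed.closure_eq]) ?_
    exact (continuous_id.sub continuous_const).continuousOn
  obtain ⟨x, hx⟩ := exists_zero_of_eq_sub _ hc (R + 1) p (fun x hx => by
    have : x ∉ K := fun h => by linarith [hR x h]
    simp [this])
  by_cases hxK : x ∈ K
  · exact ⟨x, hxK, by simpa [hxK] using hx⟩
  · rw [piecewise_eq_of_notMem _ _ _ hxK, sub_eq_zero] at hx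
    exact absurd (hx ▸ hp) hxK

theorem ZeroProp.homotopy {E : Type*} [NormedAddCommGroup E] [NormedSpace ℝ E]
    [FiniteDimensional ℝ E] {K : Set E} (hK : IsCompact K) (G : ℝ → E → E)
    (hG : ContinuousOn (fun q : ℝ × E => G q.1 q.2) (Icc 0 1 ×ˢ K))
    (hne : ∀ t ∈ Icc (0 : ℝ) 1, ∀ x ∈ frontier K, G t x ≠ 0) (h0 : ZeroProp K (G 0)) :
    ZeroProp K (G 1) := by
  intro T hT hTb
  set S : ℝ × E → E := fun q => G q.1 q.2 + (T q.2 - G 1 q.2) with hS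
  have hG1 : ContinuousOn (fun q : ℝ × E => G 1 q.2) (Icc 0 1 ×ˢ K) :=
    hG.comp (f := fun q : ℝ × E => ((1 : ℝ), q.2)) (by fun_prop)
      (fun q hq => ⟨by simp, hq.2⟩)
  have hSc : ContinuousOn S (Icc 0 1 ×ˢ K) :=
    hG.add ((hT.comp continuous_snd.continuousOn fun q hq => hq.2).sub hG1)
  have hcomp : IsCompact (Icc (0 : ℝ) 1 ×ˢ K) := isCompact_Icc.prod hK
  set Z : Set E := Prod.snd '' ((Icc (0 : ℝ) 1 ×ˢ K) ∩ S ⁻¹' {0}) with hZ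
  have hZc : IsClosed Z :=
    ((hcomp.of_isClosed_subset (hSc.preimage_isClosed_of_isClosed hcomp.isClosed
      isClosed_singleton) inter_subset_left).image continuous_snd).isClosed
  have hdisj : Disjoint (frontier K) Z := by
    rw [Set.disjoint_left]
    rintro x hx ⟨⟨t, y⟩, ⟨hty, hy⟩, rfl⟩
    have h1 : S (t, y) = 0 := hy
    simp only [hS, hTb y hx, sub_self, add_zero] at h1
    exact hne t hty.1 y hx h1
  obtain ⟨τ, hτ0, hτ1, hτ⟩ := exists_continuous_zero_one_of_isClosed isClosed_frontier hZc hdisj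
  obtain ⟨x, hxK, hx⟩ := h0 (fun x => S (τ x, x))
    (hSc.comp (τ.continuous.prodMk continuous_id).continuousOn fun x hx => ⟨hτ x, hx⟩)
    (fun x hx => by simp [hS, hτ0 hx, hTb x hx])
  have hxZ : x ∈ Z := ⟨(τ x, x), ⟨⟨hτ x, hxK⟩, hx⟩, rfl⟩
  have h1 := hτ1 hxZ
  simp only [h1, hS, Pi.one_apply] at hx
  exact ⟨x, hxK, by simpa using hx⟩

/-! ### Linking -/

section Linking

variable {J : Type*} [Fintype J] [DecidableEq J] (wt : J → ℤ)

/-- Squared norm of the part of `x` of positive weight. -/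
def posSq (x : J → ℂ) : ℝ := ∑ j, if 0 < wt j then ‖x j‖ ^ 2 else 0

lemma continuous_posSq : Continuous (posSq wt) := by
  unfold posSq
  refine continuous_finsetSum _ fun j _ => ?_
  split_ifs <;> fun_prop

lemma frontier_halfBall {E : Type*} [NormedAddCommGroup E] [NormedSpace ℝ E]
    (R : ℝ) (φ : E → ℝ) (hφ : Continuous φ) :
    ∀ q ∈ frontier {q : E | 0 ≤ φ q ∧ ‖q‖ ≤ R}, (0 ≤ φ q ∧ ‖q‖ ≤ R) ∧ (φ q = 0 ∨ ‖q‖ = R) := by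
  intro q hq
  have hcl : IsClosed {q : E | 0 ≤ φ q ∧ ‖q‖ ≤ R} :=
    (isClosed_le continuous_const hφ).inter (isClosed_le continuous_norm continuous_const)
  have hqK : 0 ≤ φ q ∧ ‖q‖ ≤ R := hcl.frontier_subset hq
  refine ⟨hqK, ?_⟩
  by_contra! h
  have hop : IsOpen {q : E | 0 < φ q ∧ ‖q‖ < R} :=
    (isOpen_lt continuous_const hφ).inter (isOpen_lt continuous_norm continuous_const)
  have : q ∈ interior {q : E | 0 ≤ φ q ∧ ‖q‖ ≤ R} :=
    interior_maximal (s := {q : E | 0 ≤ φ q ∧ ‖q‖ ≤ R}) (t := {q : E | 0 < φ q ∧ ‖q‖ < R})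
      (fun y hy => ⟨hy.1.le, hy.2.le⟩) hop ⟨lt_of_le_of_ne hqK.1 (Ne.symm h.1), lt_of_le_of_ne hqK.2 h.2⟩
  exact hq.2 this

/-- Assembles a vector from its components of weight `≤ 0` and its component at `e`. -/
def embA (e : J) (w : {j // wt j ≤ 0} → ℂ) (r : ℂ) : J → ℂ := fun j =>
  if h : wt j ≤ 0 then w ⟨j, h⟩ else if j = e then r else 0

/-- Linking without symmetry: `p₀ + W ⊕ ℂe` meets the deformed sphere of radius `r₀` in the
positive space. -/
theorem linkingA (e : J) (he : 0 < wt e) (h : ℝ → (J → ℂ) → (J → ℂ))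
    (hc : Continuous fun q : ℝ × (J → ℂ) => h q.1 q.2) (h0 : ∀ x, h 0 x = x)
    (p : J → ℂ) (r0 : ℝ) (hr0 : 0 < r0) (R : ℝ)
    (hb : ∀ τ ∈ Icc (0 : ℝ) 1, ∀ x : J → ℂ, (∀ j, 0 < wt j → j ≠ e → x j = 0) →
      (x e = 0 ∨ R ≤ ‖x‖) → (∀ j, wt j ≤ 0 → h τ x j = p j) → posSq wt (h τ x) = r0 ^ 2 →
      False) :
    ∃ x : J → ℂ, (∀ j, 0 < wt j → j ≠ e → x j = 0) ∧ (∀ j, wt j ≤ 0 → h 1 x j = p j) ∧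
      posSq wt (h 1 x) = r0 ^ 2 := by
  have heW : ¬ wt e ≤ 0 := not_le.2 he
  let emb : ({j // wt j ≤ 0} → ℂ) × ℝ → J → ℂ := fun q => embA wt e q.1 (q.2 : ℂ)
  have hembc : Continuous emb := by
    refine continuous_pi fun j => ?_
    simp only [emb, embA]
    split_ifs <;> fun_prop
  have hemb0 : ∀ q j, 0 < wt j → j ≠ e → emb q j = 0 := by
    intro q j hj hje
    simp [emb, embA, not_le.2 hj, hje]
  have hembW : ∀ (q : ({j // wt j ≤ 0} → ℂ) × ℝ) j (hj : wt j ≤ 0), emb q j = q.1 ⟨j, hj⟩ := by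
    intro q j hj; simp [emb, embA, hj]
  have hembe : ∀ q : ({j // wt j ≤ 0} → ℂ) × ℝ, emb q e = (q.2 : ℂ) := by intro q; simp [emb, embA, heW]
  have hpos : ∀ q : ({j // wt j ≤ 0} → ℂ) × ℝ, posSq wt (emb q) = q.2 ^ 2 := by
    intro q
    unfold posSq
    rw [Finset.sum_eq_single e]
    · simp [he, hembe]
    · intro j _ hj
      split_ifs with h1
      · simp [hemb0 q j h1 hj]
      · rfl
    · simp
  have hnorm : ∀ q : ({j // wt j ≤ 0} → ℂ) × ℝ, ‖q‖ ≤ ‖emb q‖ := by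
    intro q
    refine norm_prod_le_iff.2 ⟨(pi_norm_le_iff_of_nonneg (norm_nonneg _)).2 fun j => ?_, ?_⟩
    · rw [← hembW q j j.2]; exact norm_le_pi_norm (emb q) j
    · have := norm_le_pi_norm (emb q) e
      rwa [hembe, Complex.norm_real] at this
  let pc : ({j // wt j ≤ 0} → ℂ) × ℝ := (fun j => p j, r0)
  set R1 := max R (‖pc‖ + 1) with hR1
  set K : Set (({j // wt j ≤ 0} → ℂ) × ℝ) := {q : ({j // wt j ≤ 0} → ℂ) × ℝ | 0 ≤ q.2 ∧ ‖q‖ ≤ R1} with hK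
  have hKc : IsCompact K := by
    refine (isCompact_closedBall (0 : ({j // wt j ≤ 0} → ℂ) × ℝ) R1).of_isClosed_subset
      ((isClosed_le continuous_const continuous_snd).inter
        (isClosed_le continuous_norm continuous_const)) fun q hq => by simpa using hq.2
  have hfr := frontier_halfBall (E := ({j // wt j ≤ 0} → ℂ) × ℝ) R1 Prod.snd continuous_snd
  have hpc : ‖pc‖ < R1 := lt_of_lt_of_le (by linarith) (le_max_right R _)
  have hpcK : pc ∈ K := ⟨hr0.le, hpc.le⟩
  let G0 : ℝ → (({j // wt j ≤ 0} → ℂ) × ℝ) → ({j // wt j ≤ 0} → ℂ) × ℝ := fun s q =>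
    (fun j => q.1 j - p j, s * (q.2 ^ 2 - r0 ^ 2) + (1 - s) * (q.2 - r0))
  let G1 : ℝ → (({j // wt j ≤ 0} → ℂ) × ℝ) → ({j // wt j ≤ 0} → ℂ) × ℝ := fun τ q =>
    (fun j => h τ (emb q) j - p j, posSq wt (h τ (emb q)) - r0 ^ 2)
  have z0 : ZeroProp K (G0 0) := by
    have : G0 0 = fun q => q - pc := by
      funext q
      refine Prod.ext ?_ ?_
      · funext j; simp [G0, pc]
      · simp [G0, pc]
    rw [this]
    exact zeroProp_sub hKc hpcK
  have z1 : ZeroProp K (G0 1) := by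
    refine z0.homotopy hKc G0 ?_ ?_
    · refine Continuous.continuousOn ?_
      simp only [G0]; fun_prop
    · intro s hs q hq hz
      obtain ⟨⟨hq0, hqR⟩, hq1⟩ := hfr q hq
      have e1 : q.1 = pc.1 := by
        funext j
        have := congrFun (congrArg Prod.fst hz) j
        exact sub_eq_zero.1 this
      have e2 : q.2 = r0 := by
        have : s * (q.2 ^ 2 - r0 ^ 2) + (1 - s) * (q.2 - r0) = 0 := congrArg Prod.snd hz
        have h3 : (q.2 - r0) * (s * (q.2 + r0) + (1 - s)) = 0 := by linarith
        rcases mul_eq_zero.1 h3 with h4 | h4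
        · linarith
        · have hs0 := hs.1; have hs1 := hs.2
          rcases eq_or_lt_of_le hs0 with h5 | h5
          · rw [← h5] at h4; norm_num at h4
          · nlinarith [mul_pos h5 hr0, mul_nonneg hs0 hq0]
      have : q = pc := Prod.ext e1 e2
      rcases hq1 with h1 | h1
      · rw [e2] at h1; exact hr0.ne' h1
      · rw [this] at h1; exact hpc.ne h1
  have z2 : ZeroProp K (G1 0) := by
    have : G1 0 = G0 1 := by
      funext q
      refine Prod.ext ?_ ?_
      · funext j
        simp only [G1, G0, h0]
        rw [hembW q j j.2]
      · simp [G1, G0, h0, hpos]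
    rw [this]; exact z1
  have hG1c : Continuous fun q : ℝ × (({j // wt j ≤ 0} → ℂ) × ℝ) => G1 q.1 q.2 := by
    have hh : Continuous fun q : ℝ × (({j // wt j ≤ 0} → ℂ) × ℝ) => h q.1 (emb q.2) :=
      hc.comp (continuous_fst.prodMk (hembc.comp continuous_snd))
    refine Continuous.prodMk (continuous_pi fun j => ?_) ?_
    · exact ((continuous_apply _).comp hh).sub continuous_const
    · exact ((continuous_posSq wt).comp hh).sub continuous_const
  have hG1z : ∀ τ q, G1 τ q = 0 →
      (∀ j, wt j ≤ 0 → h τ (emb q) j = p j) ∧ posSq wt (h τ (emb q)) = r0 ^ 2 := by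
    intro τ q hz
    refine ⟨fun j hj => ?_, ?_⟩
    · exact sub_eq_zero.1 (congrFun (congrArg Prod.fst hz) ⟨j, hj⟩)
    · exact sub_eq_zero.1 (congrArg Prod.snd hz)
  have z3 : ZeroProp K (G1 1) := by
    refine z2.homotopy hKc G1 hG1c.continuousOn ?_
    intro τ hτ q hq hz
    obtain ⟨⟨hq0, hqR⟩, hq1⟩ := hfr q hq
    obtain ⟨e1, e2⟩ := hG1z τ q hz
    refine hb τ hτ (emb q) (hemb0 q) ?_ e1 e2
    rcases hq1 with h1 | h1
    · left; rw [hembe, h1]; simp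
    · right; exact ((le_max_left _ _).trans h1.ge).trans (hnorm q)
  obtain ⟨q, -, hq⟩ := z3 (G1 1)
    ((hG1c.comp (continuous_const.prodMk continuous_id)).continuousOn) (fun _ _ => rfl)
  obtain ⟨e1, e2⟩ := hG1z 1 q hq
  exact ⟨emb q, hemb0 q, e1, e2⟩

/-- Assembles a vector from its components of weight `≤ 0` and its components at `e₁`, `e₂`. -/
def embB (e1 e2 : J) (w : {j // wt j ≤ 0} → ℂ) (ζ2 r : ℂ) : J → ℂ := fun j =>
  if h : wt j ≤ 0 then w ⟨j, h⟩ else if j = e1 then r else if j = e2 then ζ2 else 0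

/-- The equations solved in `linkingB`, on the slice where the `e₁`-component is real, perturbed
equivariantly by the parameter `v`. -/
def sysB (e1 e2 : J) (h : ℝ → (J → ℂ) → (J → ℂ)) (l : ℝ → (J → ℂ) → ℂ) (p : J → ℂ) (r0 : ℝ)
    (v : ({j // wt j ≤ 0} → ℂ) × ℂ × ℝ) (τ : ℝ) (q : ({j // wt j ≤ 0} → ℂ) × ℂ × ℝ) :
    ({j // wt j ≤ 0} → ℂ) × ℂ × ℝ :=
  (fun j => h τ (embB wt e1 e2 q.1 q.2.1 q.2.2) j - p j +
      (starRingEnd ℂ) q.2.1 ^ (wt j).natAbs * v.1 j,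
    l τ (embB wt e1 e2 q.1 q.2.1 q.2.2) + q.2.1 * v.2.1,
    posSq wt (h τ (embB wt e1 e2 q.1 q.2.1 q.2.2)) - r0 ^ 2 + v.2.2)

lemma contDiff_embB (e1 e2 : J) {F : Type*} [NormedAddCommGroup F] [NormedSpace ℝ F]
    {w : F → {j // wt j ≤ 0} → ℂ} {ζ r : F → ℂ} (hw : ContDiff ℝ 1 w) (hζ : ContDiff ℝ 1 ζ)
    (hr : ContDiff ℝ 1 r) : ContDiff ℝ 1 fun x => embB wt e1 e2 (w x) (ζ x) (r x) := by
  refine contDiff_pi.2 fun j => ?_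
  simp only [embB]
  split_ifs with h
  · exact (contDiff_apply ℝ ℂ (⟨j, h⟩ : {j // wt j ≤ 0})).comp hw
  · exact hr
  · exact hζ
  · exact contDiff_const

lemma contDiff_posSq : ContDiff ℝ 1 (posSq wt) := by
  unfold posSq
  refine ContDiff.sum fun j _ => ?_
  split_ifs
  · exact (contDiff_apply ℝ ℂ j).norm_sq ℝ
  · exact contDiff_const

/-- Generic perturbations have no zero on the boundary face `r = 0`, away from `ζ₂ = 0`:
by equivariance the bad parameters are the image of a locally Lipschitz map from a space of smaller
dimension. -/
lemma dense_good (e1 e2 : J) (hne : e1 ≠ e2) (he1 : wt e1 = 1) (he2 : wt e2 = 1)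
    (h : ℝ → (J → ℂ) → (J → ℂ)) (hl : LocallyLipschitz fun q : ℝ × (J → ℂ) => h q.1 q.2)
    (l : ℝ → (J → ℂ) → ℂ) (ll : LocallyLipschitz fun q : ℝ × (J → ℂ) => l q.1 q.2)
    (heq : ∀ τ x (u : ℂ), ‖u‖ = 1 →
      h τ (fun j => u ^ wt j * x j) = fun j => u ^ wt j * h τ x j)
    (leq : ∀ τ x (u : ℂ), ‖u‖ = 1 → l τ (fun j => u ^ wt j * x j) = u * l τ x)
    (p : J → ℂ) (hp : ∀ j, p j ≠ 0 → wt j = 0) (r0 : ℝ) :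
    Dense {v : ({j // wt j ≤ 0} → ℂ) × ℂ × ℝ | ∀ τ (q : ({j // wt j ≤ 0} → ℂ) × ℂ × ℝ),
      q.2.2 = 0 → q.2.1 ≠ 0 → sysB wt e1 e2 h l p r0 v τ q ≠ 0} := by
  let ι : ({j // wt j ≤ 0} → ℂ) × ℝ × ℝ → ℝ × (J → ℂ) := fun a =>
    (a.2.2, embB wt e1 e2 a.1 ((Real.exp a.2.1 : ℝ) : ℂ) 0)
  have hι : LocallyLipschitz ι := by
    refine ContDiff.locallyLipschitz (𝕂 := ℝ) ?_
    refine (contDiff_snd.comp contDiff_snd).prodMk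
      (contDiff_embB wt e1 e2 contDiff_fst ?_ contDiff_const)
    exact Complex.ofRealCLM.contDiff.comp (Real.contDiff_exp.comp (contDiff_fst.comp contDiff_snd))
  -- the parameter solving the perturbed system at a given point
  let Ψ : ((ℝ × (J → ℂ) × ℂ) ) → ({j // wt j ≤ 0} → ℂ) × ℂ × ℝ := fun b =>
    (fun j => ((Real.exp (-(wt j).natAbs * b.1) : ℝ) : ℂ) * (p j - b.2.1 j),
      -(((Real.exp (-b.1) : ℝ) : ℂ) * b.2.2), r0 ^ 2 - posSq wt b.2.1)
  have hΨ : LocallyLipschitz Ψ := by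
    refine ContDiff.locallyLipschitz (𝕂 := ℝ) ?_
    refine ContDiff.prodMk (contDiff_pi.2 fun j => ?_) (ContDiff.prodMk ?_ ?_)
    · refine (Complex.ofRealCLM.contDiff.comp (Real.contDiff_exp.comp
        (contDiff_const.mul contDiff_fst))).mul (contDiff_const.sub ?_)
      exact (contDiff_apply ℝ ℂ (j : J)).comp (contDiff_fst.comp contDiff_snd)
    · exact ((Complex.ofRealCLM.contDiff.comp (Real.contDiff_exp.comp contDiff_fst.neg)).mul
        (contDiff_snd.comp contDiff_snd)).neg
    · exact contDiff_const.sub ((contDiff_posSq wt).comp (contDiff_fst.comp contDiff_snd))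
  let Φ : ({j // wt j ≤ 0} → ℂ) × ℝ × ℝ → ({j // wt j ≤ 0} → ℂ) × ℂ × ℝ := fun a =>
    Ψ (a.2.1, h (ι a).1 (ι a).2, l (ι a).1 (ι a).2)
  have hΦ : LocallyLipschitz Φ := by
    have h1 : LocallyLipschitz fun a : ({j // wt j ≤ 0} → ℂ) × ℝ × ℝ => a.2.1 :=
      ContDiff.locallyLipschitz (𝕂 := ℝ) (contDiff_fst.comp contDiff_snd)
    exact hΨ.comp (h1.prodMk ((hl.comp hι).prodMk (ll.comp hι)))
  have hdim : dimH (range Φ) < Module.finrank ℝ (({j // wt j ≤ 0} → ℂ) × ℂ × ℝ) := by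
    refine (dimH_range_le_of_locally_lipschitzOn hΦ).trans_lt ?_
    rw [Real.dimH_univ_eq_finrank]
    have : Module.finrank ℝ (({j // wt j ≤ 0} → ℂ) × ℝ × ℝ) <
        Module.finrank ℝ (({j // wt j ≤ 0} → ℂ) × ℂ × ℝ) := by
      simp [Module.finrank_prod, Complex.finrank_real_complex]
    exact_mod_cast this
  refine (dense_compl_of_dimH_lt_finrank hdim).mono ?_
  intro v hv τ q hr hζ hz
  apply hv
  set ζ := q.2.1 with hζd
  set s : ℝ := ‖ζ‖ with hs
  have hs0 : 0 < s := norm_pos_iff.2 hζ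
  have hsC : (s : ℂ) ≠ 0 := by exact_mod_cast hs0.ne'
  set u : ℂ := (starRingEnd ℂ) ζ / s with hu
  have hu1 : ‖u‖ = 1 := by
    rw [hu, norm_div, Complex.norm_conj, Complex.norm_real, norm_norm, div_self hs0.ne']
  have hu0 : u ≠ 0 := by rw [← norm_ne_zero_iff, hu1]; norm_num
  have huζ : u * ζ = s := by
    rw [hu, div_mul_eq_mul_div, mul_comm, Complex.mul_conj, Complex.normSq_eq_norm_sq,
      div_eq_iff hsC]
    push_cast; ring
  have hcu : (starRingEnd ℂ) ζ = u * s := by rw [hu, div_mul_cancel₀ _ hsC]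
  set x := embB wt e1 e2 q.1 ζ q.2.2 with hx
  refine ⟨(fun j => u ^ wt j * q.1 j, Real.log s, τ), ?_⟩
  have hιx : (ι (fun j => u ^ wt j * q.1 j, Real.log s, τ)).2 = fun j => u ^ wt j * x j := by
    funext j
    simp only [ι, hx, embB, Real.exp_log hs0]
    split_ifs with h1 h2 h3
    · rfl
    · rw [hr]; simp
    · rw [h3, he2, zpow_one, huζ]
    · simp
  have hzj : ∀ j : {j // wt j ≤ 0},
      h τ x j - p j + (starRingEnd ℂ) ζ ^ (wt j).natAbs * v.1 j = 0 :=
    fun j => congrFun (congrArg Prod.fst hz) j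
  have hzl : l τ x + ζ * v.2.1 = 0 := congrArg (fun a => a.2.1) hz
  have hzr : posSq wt (h τ x) - r0 ^ 2 + v.2.2 = 0 := congrArg (fun a => a.2.2) hz
  have hι1 : (ι (fun j => u ^ wt j * q.1 j, Real.log s, τ)).1 = τ := rfl
  simp only [Φ, hι1, hιx, heq _ _ _ hu1, leq _ _ _ hu1, Ψ]
  refine Prod.ext ?_ (Prod.ext ?_ ?_)
  · funext j
    have hj := j.2
    simp only
    obtain ⟨n, hn⟩ : ∃ n : ℕ, wt j = -(n : ℤ) := ⟨(wt j).natAbs, by omega⟩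
    have hpj : p j = u ^ wt j * p j := by
      by_cases h1 : p j = 0
      · simp [h1]
      · rw [hp j h1]; simp
    have h2 : p j - u ^ wt j * h τ x j = (s : ℂ) ^ n * v.1 j := by
      have h3 := hzj j
      have hnn : (wt j).natAbs = n := by omega
      rw [hnn, hcu, mul_pow] at h3
      rw [hpj, ← mul_sub]
      have h4 : p j - h τ x j = u ^ n * (s : ℂ) ^ n * v.1 j := by linear_combination -h3
      rw [h4, hn, zpow_neg, zpow_natCast]
      field_simp
    have hnn : (wt j).natAbs = n := by omega
    rw [h2, hnn]
    have h5 : Real.exp (-(n : ℝ) * Real.log s) = (s ^ n)⁻¹ := by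
      rw [neg_mul, Real.exp_neg, ← Real.log_pow, Real.exp_log (by positivity)]
    rw [h5]
    push_cast
    field_simp
  · simp only [Real.exp_neg, Real.exp_log hs0]
    have : u * l τ x = - (s * v.2.1) := by
      rw [← huζ]; linear_combination u * hzl
    rw [this]
    push_cast
    field_simp
  · have hpq : posSq wt (fun j => u ^ wt j * h τ x j) = posSq wt (h τ x) := by
      unfold posSq
      refine Finset.sum_congr rfl fun j _ => ?_
      rw [norm_mul, norm_zpow, hu1, one_zpow, one_mul]
    simp only [hpq]
    linarith

/-- Equivariant linking: `p₀ + W ⊕ ℂe₁ ⊕ ℂe₂` meets the deformed sphere of radius `r₀` in the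
positive space, inside the zero set of the equivariant function `l`. -/
theorem linkingB (e1 e2 : J) (hne : e1 ≠ e2) (he1 : wt e1 = 1) (he2 : wt e2 = 1)
    (h : ℝ → (J → ℂ) → (J → ℂ)) (hl : LocallyLipschitz fun q : ℝ × (J → ℂ) => h q.1 q.2)
    (h0 : ∀ x, h 0 x = x)
    (l : ℝ → (J → ℂ) → ℂ) (ll : LocallyLipschitz fun q : ℝ × (J → ℂ) => l q.1 q.2)
    (l0 : ∀ x, l 0 x = x e2)
    (heq : ∀ τ x (u : ℂ), ‖u‖ = 1 →
      h τ (fun j => u ^ wt j * x j) = fun j => u ^ wt j * h τ x j)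
    (leq : ∀ τ x (u : ℂ), ‖u‖ = 1 → l τ (fun j => u ^ wt j * x j) = u * l τ x)
    (p : J → ℂ) (hp : ∀ j, p j ≠ 0 → wt j = 0) (r0 : ℝ) (hr0 : 0 < r0) (R : ℝ)
    (hb : ∀ τ ∈ Icc (0 : ℝ) 1, ∀ x : J → ℂ, (∀ j, 0 < wt j → j ≠ e1 → j ≠ e2 → x j = 0) →
      ((x e1 = 0 ∧ x e2 = 0) ∨ R ≤ ‖x‖) → (∀ j, wt j ≤ 0 → h τ x j = p j) →
      posSq wt (h τ x) = r0 ^ 2 → False) :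
    ∃ x : J → ℂ, (∀ j, 0 < wt j → j ≠ e1 → j ≠ e2 → x j = 0) ∧
      (∀ j, wt j ≤ 0 → h 1 x j = p j) ∧ posSq wt (h 1 x) = r0 ^ 2 ∧ l 1 x = 0 := by
  have hc := hl.continuous
  have lc := ll.continuous
  have he1W : ¬ wt e1 ≤ 0 := by omega
  have he2W : ¬ wt e2 ≤ 0 := by omega
  let emb : ({j // wt j ≤ 0} → ℂ) × ℂ × ℝ → J → ℂ := fun q => embB wt e1 e2 q.1 q.2.1 q.2.2
  have hembc : Continuous emb :=
    (contDiff_embB wt e1 e2 contDiff_fst (contDiff_fst.comp contDiff_snd)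
      (Complex.ofRealCLM.contDiff.comp (contDiff_snd.comp contDiff_snd))).continuous
  have hemb0 : ∀ q j, 0 < wt j → j ≠ e1 → j ≠ e2 → emb q j = 0 := by
    intro q j hj hj1 hj2
    simp [emb, embB, not_le.2 hj, hj1, hj2]
  have hembW : ∀ (q : ({j // wt j ≤ 0} → ℂ) × ℂ × ℝ) j (hj : wt j ≤ 0),
      emb q j = q.1 ⟨j, hj⟩ := by
    intro q j hj; simp [emb, embB, hj]
  have hembe1 : ∀ q, emb q e1 = (q.2.2 : ℂ) := by intro q; simp [emb, embB, he1W]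
  have hembe2 : ∀ q, emb q e2 = q.2.1 := by intro q; simp [emb, embB, he2W, hne.symm]
  have hpos : ∀ q, posSq wt (emb q) = q.2.2 ^ 2 + ‖q.2.1‖ ^ 2 := by
    intro q
    unfold posSq
    rw [← Finset.sum_subset (Finset.subset_univ {e1, e2}), Finset.sum_pair hne]
    · simp [he1, he2, hembe1, hembe2]
    · intro j _ hj
      simp only [Finset.mem_insert, Finset.mem_singleton, not_or] at hj
      split_ifs with h1
      · simp [hemb0 q j h1 hj.1 hj.2]
      · rfl
  have hnorm : ∀ q, ‖q‖ ≤ ‖emb q‖ := by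
    intro q
    refine norm_prod_le_iff.2 ⟨(pi_norm_le_iff_of_nonneg (norm_nonneg _)).2 fun j => ?_,
      norm_prod_le_iff.2 ⟨?_, ?_⟩⟩
    · rw [← hembW q j j.2]; exact norm_le_pi_norm (emb q) j
    · rw [← hembe2 q]; exact norm_le_pi_norm (emb q) e2
    · have := norm_le_pi_norm (emb q) e1
      rwa [hembe1, Complex.norm_real] at this
  let pc : ({j // wt j ≤ 0} → ℂ) × ℂ × ℝ := (fun j => p j, 0, r0)
  set R1 := max R (‖pc‖ + 1) with hR1
  set K : Set (({j // wt j ≤ 0} → ℂ) × ℂ × ℝ) := {q | 0 ≤ q.2.2 ∧ ‖q‖ ≤ R1} with hK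
  have hKc : IsCompact K := by
    refine (isCompact_closedBall (0 : ({j // wt j ≤ 0} → ℂ) × ℂ × ℝ) R1).of_isClosed_subset
      ((isClosed_le continuous_const (continuous_snd.comp continuous_snd)).inter
        (isClosed_le continuous_norm continuous_const)) fun q hq => by simpa using hq.2
  have hfr := frontier_halfBall (E := ({j // wt j ≤ 0} → ℂ) × ℂ × ℝ) R1 (fun q => q.2.2)
    (continuous_snd.comp continuous_snd)
  have hpc : ‖pc‖ < R1 := lt_of_lt_of_le (by linarith) (le_max_right R _)
  have hpcK : pc ∈ K := ⟨hr0.le, hpc.le⟩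
  let G0 : ({j // wt j ≤ 0} → ℂ) × ℂ × ℝ → ℝ → ({j // wt j ≤ 0} → ℂ) × ℂ × ℝ →
      ({j // wt j ≤ 0} → ℂ) × ℂ × ℝ := fun v s q =>
    (fun j => q.1 j - p j + s * ((starRingEnd ℂ) q.2.1 ^ (wt j).natAbs * v.1 j),
      q.2.1 + s * (q.2.1 * v.2.1),
      s * (q.2.2 ^ 2 + ‖q.2.1‖ ^ 2 - r0 ^ 2 + v.2.2) + (1 - s) * (q.2.2 - r0))
  let G1 := sysB wt e1 e2 h l p r0
  have hG0c : Continuous fun a : (({j // wt j ≤ 0} → ℂ) × ℂ × ℝ) × ℝ ×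
      (({j // wt j ≤ 0} → ℂ) × ℂ × ℝ) => G0 a.1 a.2.1 a.2.2 := by
    simp only [G0]
    fun_prop
  have hG1c : Continuous fun a : (({j // wt j ≤ 0} → ℂ) × ℂ × ℝ) × ℝ ×
      (({j // wt j ≤ 0} → ℂ) × ℂ × ℝ) => G1 a.1 a.2.1 a.2.2 := by
    have hh : Continuous fun a : (({j // wt j ≤ 0} → ℂ) × ℂ × ℝ) × ℝ ×
      (({j // wt j ≤ 0} → ℂ) × ℂ × ℝ) => h a.2.1 (emb a.2.2) :=
      hc.comp (f := fun a : (({j // wt j ≤ 0} → ℂ) × ℂ × ℝ) × ℝ ×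
      (({j // wt j ≤ 0} → ℂ) × ℂ × ℝ) => (a.2.1, emb a.2.2)) (by fun_prop)
    have lh : Continuous fun a : (({j // wt j ≤ 0} → ℂ) × ℂ × ℝ) × ℝ ×
      (({j // wt j ≤ 0} → ℂ) × ℂ × ℝ) => l a.2.1 (emb a.2.2) :=
      lc.comp (f := fun a : (({j // wt j ≤ 0} → ℂ) × ℂ × ℝ) × ℝ ×
      (({j // wt j ≤ 0} → ℂ) × ℂ × ℝ) => (a.2.1, emb a.2.2)) (by fun_prop)
    refine Continuous.prodMk (continuous_pi fun j => ?_) (Continuous.prodMk ?_ ?_)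
    · exact (((continuous_apply _).comp hh).sub continuous_const).add (by fun_prop)
    · exact lh.add (by fun_prop)
    · exact (((continuous_posSq wt).comp hh).sub continuous_const).add (by fun_prop)
  have hG1z : ∀ τ q, G1 0 τ q = 0 → (∀ j, wt j ≤ 0 → h τ (emb q) j = p j) ∧
      posSq wt (h τ (emb q)) = r0 ^ 2 ∧ l τ (emb q) = 0 := by
    intro τ q hz
    refine ⟨fun j hj => ?_, ?_, ?_⟩
    · have h1 := congrFun (congrArg Prod.fst hz) ⟨j, hj⟩
      simp only [G1, sysB, Prod.fst_zero, Pi.zero_apply, mul_zero, add_zero] at h1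
      exact sub_eq_zero.1 h1
    · have h1 := congrArg (fun a => a.2.2) hz
      simp only [G1, sysB, Prod.snd_zero, add_zero] at h1
      exact sub_eq_zero.1 h1
    · have h1 := congrArg (fun a => a.2.1) hz
      simpa only [G1, sysB, Prod.snd_zero, Prod.fst_zero, mul_zero, add_zero] using h1
  -- nonvanishing on the frontier for small parameters
  have hfrc : IsCompact (frontier K) :=
    hKc.of_isClosed_subset isClosed_frontier hKc.isClosed.frontier_subset
  have ev0 : ∀ᶠ v in nhds (0 : ({j // wt j ≤ 0} → ℂ) × ℂ × ℝ),
      ∀ a ∈ Icc (0 : ℝ) 1 ×ˢ frontier K, G0 v a.1 a.2 ≠ 0 := by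
    refine (isCompact_Icc.prod hfrc).eventually_forall_of_forall_eventually
      (P := fun v a => G0 v a.1 a.2 ≠ 0) ?_
    rintro ⟨s, q⟩ ⟨hs, hq⟩
    refine hG0c.continuousAt.eventually_ne ?_
    intro hz
    obtain ⟨⟨hq0, hqR⟩, hq1⟩ := hfr q hq
    have e1 : q.1 = pc.1 := by
      funext j
      have := congrFun (congrArg Prod.fst hz) j
      simp only [G0, Prod.fst_zero, Pi.zero_apply, mul_zero, add_zero] at this
      exact sub_eq_zero.1 this
    have e2 : q.2.1 = 0 := by
      have := congrArg (fun a => a.2.1) hz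
      simpa only [G0, Prod.snd_zero, Prod.fst_zero, mul_zero, add_zero] using this
    have e3 : q.2.2 = r0 := by
      have h2 := congrArg (fun a => a.2.2) hz
      simp only [G0, Prod.snd_zero, e2, norm_zero, add_zero] at h2
      have h3 : (q.2.2 - r0) * (s * (q.2.2 + r0) + (1 - s)) = 0 := by linarith
      rcases mul_eq_zero.1 h3 with h4 | h4
      · linarith
      · have hs0 := hs.1; have hs1 := hs.2
        rcases eq_or_lt_of_le hs0 with h5 | h5
        · change 0 = s at h5
          rw [← h5] at h4; norm_num at h4
        · nlinarith [mul_pos h5 hr0, mul_nonneg hs0 hq0]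
    have : q = pc := Prod.ext e1 (Prod.ext e2 e3)
    rcases hq1 with h1 | h1
    · rw [e3] at h1; exact hr0.ne' h1
    · rw [this] at h1; exact hpc.ne h1
  set C1 : Set (({j // wt j ≤ 0} → ℂ) × ℂ × ℝ) :=
    K ∩ {q | (q.2.2 = 0 ∧ q.2.1 = 0) ∨ ‖q‖ = R1} with hC1
  have hC1c : IsCompact C1 := by
    refine hKc.inter_right (IsClosed.union (IsClosed.inter ?_ ?_) ?_)
    · exact isClosed_eq (by fun_prop) continuous_const
    · exact isClosed_eq (by fun_prop) continuous_const
    · exact isClosed_eq continuous_norm continuous_const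
  have ev1 : ∀ᶠ v in nhds (0 : ({j // wt j ≤ 0} → ℂ) × ℂ × ℝ),
      ∀ a ∈ Icc (0 : ℝ) 1 ×ˢ C1, G1 v a.1 a.2 ≠ 0 := by
    refine (isCompact_Icc.prod hC1c).eventually_forall_of_forall_eventually
      (P := fun v a => G1 v a.1 a.2 ≠ 0) ?_
    rintro ⟨s, q⟩ ⟨hs, hq⟩
    refine hG1c.continuousAt.eventually_ne ?_
    intro hz
    obtain ⟨f1, f2, f3⟩ := hG1z s q hz
    refine hb s hs (emb q) (hemb0 q) ?_ f1 f2
    rcases hq.2 with h1 | h1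
    · left; rw [hembe1, hembe2, h1.1, h1.2]; simp
    · right; exact ((le_max_left _ _).trans h1.ge).trans (hnorm q)
  have hclosed : IsClosed {v | ∃ q ∈ K, G1 v 1 q = 0} := by
    haveI : CompactSpace K := isCompact_iff_compactSpace.1 hKc
    have h1 : {v | ∃ q ∈ K, G1 v 1 q = 0} =
        Prod.fst '' {a : (({j // wt j ≤ 0} → ℂ) × ℂ × ℝ) × K | G1 a.1 1 a.2 = 0} := by
      ext v
      constructor
      · rintro ⟨q, hq, hz⟩
        exact ⟨(v, ⟨q, hq⟩), hz, rfl⟩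
      · rintro ⟨⟨v', q⟩, hz, rfl⟩
        exact ⟨q, q.2, hz⟩
    rw [h1]
    refine isClosedMap_fst_of_compactSpace _ (isClosed_eq ?_ continuous_const)
    exact hG1c.comp (continuous_fst.prodMk
      (continuous_const.prodMk (continuous_subtype_val.comp continuous_snd)))
  have hdense := dense_good wt e1 e2 hne he1 he2 h hl l ll heq leq p hp r0
  have hmem : (0 : ({j // wt j ≤ 0} → ℂ) × ℂ × ℝ) ∈ {v | ∃ q ∈ K, G1 v 1 q = 0} := by
    refine hclosed.closure_subset ?_
    rw [mem_closure_iff_nhds]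
    intro t ht
    obtain ⟨v, hvg, ⟨hv0, hv1⟩, hvt⟩ := hdense.inter_nhds_nonempty
      (Filter.inter_mem (ev0.and ev1) ht)
    refine ⟨v, hvt, ?_⟩
    have z0 : ZeroProp K (G0 v 0) := by
      have : G0 v 0 = fun q => q - pc := by
        funext q
        refine Prod.ext ?_ (Prod.ext ?_ ?_)
        · funext j; simp [G0, pc]
        · simp [G0, pc]
        · simp [G0, pc]
      rw [this]
      exact zeroProp_sub hKc hpcK
    have z1 : ZeroProp K (G0 v 1) := by
      refine z0.homotopy hKc (G0 v) ?_ (fun s hs q hq => hv0 (s, q) ⟨hs, hq⟩)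
      exact (hG0c.comp (continuous_const.prodMk continuous_id)).continuousOn
    have z2 : ZeroProp K (G1 v 0) := by
      have : G1 v 0 = G0 v 1 := by
        funext q
        refine Prod.ext ?_ (Prod.ext ?_ ?_)
        · funext j
          simp only [G1, sysB, G0, h0]
          have := hembW q j j.2
          simp only [emb] at this
          rw [this]
          simp
        · have := hembe2 q
          simp only [emb] at this
          simp [G1, sysB, G0, l0, this]
        · have := hpos q
          simp only [emb] at this
          simp [G1, sysB, G0, h0, this]
      rw [this]; exact z1
    have z3 : ZeroProp K (G1 v 1) := by
      refine z2.homotopy hKc (G1 v) ?_ ?_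
      · exact (hG1c.comp (continuous_const.prodMk continuous_id)).continuousOn
      · intro τ hτ q hq
        obtain ⟨hqK, hq1⟩ := hfr q hq
        by_cases hζ : ‖q‖ = R1 ∨ q.2.1 = 0
        · refine hv1 (τ, q) ⟨hτ, hqK, ?_⟩
          tauto
        · push Not at hζ
          exact hvg τ q (hq1.resolve_right hζ.1) hζ.2
    exact z3 (G1 v 1)
      ((hG1c.comp (continuous_const.prodMk (continuous_const.prodMk continuous_id))).continuousOn)
      (fun _ _ => rfl)
  obtain ⟨q, -, hq⟩ := hmem
  obtain ⟨f1, f2, f3⟩ := hG1z 1 q hq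
  exact ⟨emb q, hemb0 q, f1, f2, f3⟩

end Linking

/-! ### Trigonometric polynomials on `[0,1]` -/

/-- The character `t ↦ exp(2πikt)` of period one. -/
def ex (k : ℤ) (t : ℝ) : ℂ := Complex.exp (2 * π * Complex.I * k * t)

lemma ex_add (k l : ℤ) (t : ℝ) : ex (k + l) t = ex k t * ex l t := by
  simp only [ex, ← Complex.exp_add]; congr 1; push_cast; ring

lemma ex_zero (t : ℝ) : ex 0 t = 1 := by simp [ex]

lemma ex_at_zero (k : ℤ) : ex k 0 = 1 := by simp [ex]

lemma ex_shift (k : ℤ) (t s : ℝ) : ex k (t + s) = ex k t * ex k s := by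
  simp only [ex, ← Complex.exp_add]; congr 1; push_cast; ring

lemma ex_one (k : ℤ) : ex k 1 = 1 := by
  simp only [ex]
  rw [Complex.exp_eq_one_iff]
  exact ⟨k, by push_cast; ring⟩

lemma ex_zpow (k : ℤ) (t : ℝ) : ex k t = ex 1 t ^ k := by
  simp only [ex]
  rw [← Complex.exp_int_mul]; congr 1; push_cast; ring

lemma norm_ex (k : ℤ) (t : ℝ) : ‖ex k t‖ = 1 := by
  simp only [ex]
  rw [show 2 * (π : ℂ) * Complex.I * k * t = ((2 * π * k * t : ℝ) : ℂ) * Complex.I by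
    push_cast; ring]
  exact Complex.norm_exp_ofReal_mul_I _

lemma conj_ex (k : ℤ) (t : ℝ) : (starRingEnd ℂ) (ex k t) = ex (-k) t := by
  simp only [ex]
  rw [← Complex.exp_conj]; congr 1
  simp only [map_mul, Complex.conj_I, Complex.conj_ofReal, map_intCast, map_ofNat]
  push_cast; ring

@[fun_prop]
lemma continuous_ex (k : ℤ) : Continuous (ex k) := by
  unfold ex; fun_prop

lemma hasDerivAt_ex (k : ℤ) (t : ℝ) :
    HasDerivAt (ex k) (2 * π * Complex.I * k * ex k t) t := by
  have h : HasDerivAt (fun s : ℝ => 2 * π * Complex.I * k * (s : ℂ)) (2 * π * Complex.I * k) t := by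
    simpa using (Complex.ofRealCLM.hasDerivAt (x := t)).const_mul (2 * π * Complex.I * k)
  have h2 := h.cexp
  rw [mul_comm (Complex.exp _)] at h2
  exact h2

lemma integral_ex (k : ℤ) : ∫ t in (0:ℝ)..1, ex k t = if k = 0 then 1 else 0 := by
  split_ifs with h
  · subst h; simp [ex_zero]
  · have hk : (2 * π * Complex.I * k : ℂ) ≠ 0 := by
      simp [Real.pi_ne_zero, h]
    have := intervalIntegral.integral_eq_sub_of_hasDerivAt
      (f := ex k) (f' := fun t => 2 * π * Complex.I * k * ex k t) (a := 0) (b := 1)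
      (fun t _ => hasDerivAt_ex k t) ((by fun_prop : Continuous _).intervalIntegrable _ _)
    rw [intervalIntegral.integral_const_mul, ex_one, ex_at_zero, sub_self] at this
    exact (mul_eq_zero.1 this).resolve_left hk

/-- The `k`-th Fourier coefficient of a function on `[0,1]`. -/
def fc (f : ℝ → ℂ) (k : ℤ) : ℂ := ∫ t in (0:ℝ)..1, f t * ex (-k) t

/-- The trigonometric polynomial with coefficients `c j` at the frequencies `ν j`. -/
def trig {ι : Type*} (S : Finset ι) (ν : ι → ℤ) (c : ι → ℂ) (t : ℝ) : ℂ :=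
  ∑ j ∈ S, c j * ex (ν j) t

@[fun_prop]
lemma continuous_trig {ι : Type*} (S : Finset ι) (ν : ι → ℤ) (c : ι → ℂ) :
    Continuous (trig S ν c) := by
  unfold trig; exact continuous_finsetSum _ fun j _ => by fun_prop

lemma integral_mul_conj_trig {ι : Type*} (S : Finset ι) (ν : ι → ℤ) (c : ι → ℂ) (f : ℝ → ℂ)
    (hf : Continuous f) :
    ∫ t in (0:ℝ)..1, f t * (starRingEnd ℂ) (trig S ν c t) =
      ∑ j ∈ S, fc f (ν j) * (starRingEnd ℂ) (c j) := by
  have : ∀ t, f t * (starRingEnd ℂ) (trig S ν c t) =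
      ∑ j ∈ S, f t * ex (-ν j) t * (starRingEnd ℂ) (c j) := by
    intro t
    simp only [trig, map_sum, map_mul, conj_ex, Finset.mul_sum]
    exact Finset.sum_congr rfl fun j _ => by ring
  simp only [this]
  rw [intervalIntegral.integral_finsetSum]
  · refine Finset.sum_congr rfl fun j _ => ?_
    rw [intervalIntegral.integral_mul_const]; rfl
  · intro j _; exact (by fun_prop : Continuous _).intervalIntegrable _ _

lemma fc_trig {ι : Type*} (S : Finset ι) (ν : ι → ℤ) (hν : InjOn ν S) (c : ι → ℂ)
    {j : ι} (hj : j ∈ S) : fc (trig S ν c) (ν j) = c j := by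
  have : ∀ t, trig S ν c t * ex (-ν j) t = ∑ i ∈ S, c i * ex (ν i - ν j) t := by
    intro t
    simp only [trig, Finset.sum_mul, sub_eq_add_neg, ex_add, mul_assoc]
  simp only [fc, this]
  rw [intervalIntegral.integral_finsetSum]
  · simp only [intervalIntegral.integral_const_mul, integral_ex]
    rw [Finset.sum_eq_single j]
    · simp
    · intro i hi hij
      rw [if_neg, mul_zero]
      intro h; exact hij (hν hi hj (sub_eq_zero.1 h))
    · exact fun h => absurd hj h
  · intro i _; exact (by fun_prop : Continuous _).intervalIntegrable _ _

lemma ofReal_normSq' (z : ℂ) : ((‖z‖ ^ 2 : ℝ) : ℂ) = z * (starRingEnd ℂ) z := by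
  rw [Complex.mul_conj, Complex.normSq_eq_norm_sq]

lemma parseval_trig {ι : Type*} (S : Finset ι) (ν : ι → ℤ) (hν : InjOn ν S) (c : ι → ℂ) :
    ∫ t in (0:ℝ)..1, ‖trig S ν c t‖ ^ 2 = ∑ j ∈ S, ‖c j‖ ^ 2 := by
  have h := integral_mul_conj_trig S ν c (trig S ν c) (by fun_prop)
  simp only [← ofReal_normSq'] at h
  rw [intervalIntegral.integral_ofReal] at h
  rw [← Complex.ofReal_inj, h]
  push_cast
  refine Finset.sum_congr rfl fun j hj => ?_
  rw [fc_trig S ν hν c hj, ← ofReal_normSq']; push_cast; rfl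

lemma bessel {ι : Type*} (S : Finset ι) (ν : ι → ℤ) (hν : InjOn ν S) (f : ℝ → ℂ)
    (hf : Continuous f) :
    ∑ j ∈ S, ‖fc f (ν j)‖ ^ 2 ≤ ∫ t in (0:ℝ)..1, ‖f t‖ ^ 2 := by
  set c : ι → ℂ := fun j => fc f (ν j) with hc
  have h1 := integral_mul_conj_trig S ν c f hf
  have h2 := parseval_trig S ν hν c
  have h3 : 0 ≤ ∫ t in (0:ℝ)..1, ‖f t - trig S ν c t‖ ^ 2 :=
    intervalIntegral.integral_nonneg zero_le_one fun t _ => by positivity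
  have h4 : ∀ t, ‖f t - trig S ν c t‖ ^ 2 = ‖f t‖ ^ 2 -
      2 * (f t * (starRingEnd ℂ) (trig S ν c t)).re + ‖trig S ν c t‖ ^ 2 := by
    intro t
    simp only [← Complex.normSq_eq_norm_sq, Complex.normSq_sub]; ring
  simp only [h4] at h3
  rw [intervalIntegral.integral_add, intervalIntegral.integral_sub,
    intervalIntegral.integral_const_mul, h2] at h3
  · have h5 : ∫ t in (0:ℝ)..1, (f t * (starRingEnd ℂ) (trig S ν c t)).re =
        ∑ j ∈ S, ‖c j‖ ^ 2 := by
      have := intervalIntegral.intervalIntegral_re (𝕜 := ℂ) (μ := volume) (a := 0) (b := 1)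
        (f := fun t => f t * (starRingEnd ℂ) (trig S ν c t))
        ((by fun_prop : Continuous _).intervalIntegrable _ _)
      simp only [RCLike.re_to_complex] at this
      rw [this, h1]
      simp only [← ofReal_normSq', hc, Complex.re_sum, Complex.ofReal_re]
    rw [h5] at h3
    linarith
  all_goals exact (by fun_prop : Continuous _).intervalIntegrable _ _

/-- The absolutely convergent Fourier series with coefficients `c`. -/
def fseries (c : ℤ → ℂ) (t : ℝ) : ℂ := ∑' k, c k * ex k t

lemma summable_fseries {c : ℤ → ℂ} (hc : Summable fun k => ‖c k‖) (t : ℝ) :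
    Summable fun k => c k * ex k t := by
  refine Summable.of_norm ?_
  simpa [norm_ex] using hc

lemma continuous_fseries {c : ℤ → ℂ} (hc : Summable fun k => ‖c k‖) :
    Continuous (fseries c) := by
  refine continuous_tsum (u := fun k => ‖c k‖) (fun k => by fun_prop) hc ?_
  intro k t; simp [norm_ex]

lemma fseries_periodic (c : ℤ → ℂ) (t : ℝ) : fseries c (t + 1) = fseries c t := by
  simp [fseries, ex_shift, ex_one]

lemma fseries_sub {c d : ℤ → ℂ} (hc : Summable fun k => ‖c k‖) (hd : Summable fun k => ‖d k‖)
    (t : ℝ) : fseries c t - fseries d t = fseries (fun k => c k - d k) t := by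
  simp only [fseries]
  rw [← (summable_fseries hc t).tsum_sub (summable_fseries hd t)]
  simp only [sub_mul]

lemma parseval_fseries {c : ℤ → ℂ} (hc : Summable fun k => ‖c k‖) :
    HasSum (fun k => ‖c k‖ ^ 2) (∫ t in (0:ℝ)..1, ‖fseries c t‖ ^ 2) := by
  have hlim : Filter.Tendsto (fun S : Finset ℤ => ∫ t in (0:ℝ)..1, ‖trig S id c t‖ ^ 2)
      Filter.atTop (nhds (∫ t in (0:ℝ)..1, ‖fseries c t‖ ^ 2)) := by
    refine intervalIntegral.tendsto_integral_filter_of_dominated_convergence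
      (fun _ => (∑' k, ‖c k‖) ^ 2) ?_ ?_ ?_ ?_
    · exact Filter.Eventually.of_forall fun S =>
        (by fun_prop : Continuous _).aestronglyMeasurable
    · refine Filter.Eventually.of_forall fun S => Filter.Eventually.of_forall fun t _ => ?_
      rw [Real.norm_of_nonneg (by positivity)]
      have : ‖trig S id c t‖ ≤ ∑' k, ‖c k‖ := by
        refine (norm_sum_le _ _).trans ?_
        simp only [norm_mul, norm_ex, mul_one]
        exact hc.sum_le_tsum S fun k _ => norm_nonneg _
      gcongr
    · exact intervalIntegrable_const
    · refine Filter.Eventually.of_forall fun t _ => ?_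
      exact ((summable_fseries hc t).hasSum.norm).pow 2
  simp only [parseval_trig _ id Function.injective_id.injOn] at hlim
  exact hlim

/-- A continuous function of period one whose Fourier coefficients are absolutely summable is
the sum of its Fourier series. -/
lemma eq_fseries (f : ℝ → ℂ) (hf : Continuous f) (hp : ∀ t, f (t + 1) = f t)
    (hs : Summable fun k => ‖fc f k‖) (t : ℝ) : f t = fseries (fc f) t := by
  have hper : Function.Periodic f (1 : ℝ) := hp
  let F : C(AddCircle (1:ℝ), ℂ) :=
    ⟨hper.lift, continuous_quot_lift _ hf⟩
  have hF : ∀ s : ℝ, F (s : AddCircle (1:ℝ)) = f s := fun s => hper.lift_coe s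
  have hcoef : ∀ k, fourierCoeff F k = fc f k := by
    intro k
    haveI : Fact ((0:ℝ) < 1) := ⟨one_pos⟩
    rw [fourierCoeff_eq_intervalIntegral _ _ 0]
    simp only [zero_add, div_one, one_smul, fc, hF]
    refine intervalIntegral.integral_congr fun s _ => ?_
    simp only [fourier_coe_apply, smul_eq_mul, ex, mul_comm (f s)]
    congr 2
    push_cast; ring
  haveI : Fact ((0:ℝ) < 1) := ⟨one_pos⟩
  have h := has_pointwise_sum_fourier_series_of_summable (T := 1) (f := F)
    (by rw [show fourierCoeff F = fc f from funext hcoef]; exact hs.of_norm) (t : AddCircle (1:ℝ))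
  rw [hF] at h
  rw [← h.tsum_eq]
  simp only [fseries]
  refine tsum_congr fun k => ?_
  rw [hcoef, fourier_coe_apply, smul_eq_mul, ex]
  congr 2
  push_cast; ring

lemma fc_fseries {c : ℤ → ℂ} (hc : Summable fun k => ‖c k‖) (k : ℤ) : fc (fseries c) k = c k := by
  have hlim : Filter.Tendsto (fun S : Finset ℤ => fc (trig S id c) k)
      Filter.atTop (nhds (fc (fseries c) k)) := by
    refine intervalIntegral.tendsto_integral_filter_of_dominated_convergence
      (fun _ => (∑' k, ‖c k‖)) ?_ ?_ ?_ ?_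
    · exact Filter.Eventually.of_forall fun S =>
        (by fun_prop : Continuous _).aestronglyMeasurable
    · refine Filter.Eventually.of_forall fun S => Filter.Eventually.of_forall fun t _ => ?_
      rw [norm_mul, norm_ex, mul_one]
      refine (norm_sum_le _ _).trans ?_
      simp only [norm_mul, norm_ex, mul_one]
      exact hc.sum_le_tsum S fun k _ => norm_nonneg _
    · exact intervalIntegrable_const
    · refine Filter.Eventually.of_forall fun t _ => ?_
      exact ((summable_fseries hc t).hasSum).mul_const _
  refine tendsto_nhds_unique hlim (tendsto_const_nhds.congr' ?_)
  filter_upwards [Filter.eventually_ge_atTop {k}] with S hS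
  exact (fc_trig S id Function.injective_id.injOn c (j := k) (hS (by simp))).symm

/-- Fourier coefficients of a primitive. -/
lemma fc_deriv (f f' : ℝ → ℂ) (hf : ∀ t, HasDerivAt f (f' t) t) (hc : Continuous f')
    (h1 : f 1 = f 0) (k : ℤ) : fc f' k = 2 * π * Complex.I * k * fc f k := by
  have hcf : Continuous f := continuous_iff_continuousAt.2 fun t => (hf t).continuousAt
  have h := intervalIntegral.integral_eq_sub_of_hasDerivAt
      (f := fun t => f t * ex (-k) t) (a := 0) (b := 1)
      (f' := fun t => f' t * ex (-k) t + f t * (2 * π * Complex.I * (-k : ℤ) * ex (-k) t))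
      (fun t _ => (hf t).mul (hasDerivAt_ex (-k) t))
      ((by fun_prop : Continuous _).intervalIntegrable _ _)
  rw [ex_one, ex_at_zero, h1, sub_self, intervalIntegral.integral_add] at h
  · have e : ∀ t, f t * (2 * π * Complex.I * (-k : ℤ) * ex (-k) t) =
        (-(2 * π * Complex.I * k)) * (f t * ex (-k) t) := by
      intro t; push_cast; ring
    simp only [e] at h
    rw [intervalIntegral.integral_const_mul] at h
    simp only [fc]
    linear_combination h
  all_goals exact (by fun_prop : Continuous _).intervalIntegrable _ _

/-- The quartic estimate `∫|v|⁴ ≤ (∑ k|v_k|²)²` for trigonometric polynomials with positive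
frequencies. It rests on `∑_{i+j=n} 1/(ij) ≤ 1`, which holds since `ij ≥ i+j-1`. -/
lemma quartic_trig (S : Finset ℤ) (hS : ∀ k ∈ S, 1 ≤ k) (c : ℤ → ℂ) :
    ∫ t in (0:ℝ)..1, ‖trig S id c t‖ ^ 4 ≤ (∑ k ∈ S, k * ‖c k‖ ^ 2) ^ 2 := by
  classical
  set P := S ×ˢ S with hP
  set T := P.image fun p => p.1 + p.2 with hT
  set d : ℤ → ℂ := fun n => ∑ p ∈ P with p.1 + p.2 = n, c p.1 * c p.2 with hd
  have hsq : ∀ t, trig S id c t ^ 2 = trig T id d t := by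
    intro t
    simp only [trig, id, sq, Finset.sum_mul_sum, hd]
    rw [← Finset.sum_product']
    rw [← Finset.sum_fiberwise_of_maps_to (s := P) (t := T) (g := fun p => p.1 + p.2)
      (fun p hp => Finset.mem_image_of_mem _ hp)]
    refine Finset.sum_congr rfl fun n _ => ?_
    rw [Finset.sum_mul]
    refine Finset.sum_congr rfl fun p hp => ?_
    rw [← (Finset.mem_filter.1 hp).2, ex_add]; ring
  have h4 : ∀ t, ‖trig S id c t‖ ^ 4 = ‖trig T id d t‖ ^ 2 := by
    intro t; rw [← hsq, norm_pow]; ring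
  simp only [h4]
  rw [parseval_trig T id Function.injective_id.injOn d]
  have hfib : ∀ n ∈ T, ‖d n‖ ^ 2 ≤
      ∑ p ∈ P with p.1 + p.2 = n, ((p.1 : ℝ) * ‖c p.1‖ ^ 2) * (p.2 * ‖c p.2‖ ^ 2) := by
    intro n hn
    set Q := P.filter fun p => p.1 + p.2 = n with hQ
    have hQmem : ∀ p ∈ Q, 1 ≤ p.1 ∧ 1 ≤ p.2 ∧ p.1 + p.2 = n := by
      intro p hp
      obtain ⟨h1, h2⟩ := Finset.mem_filter.1 hp
      obtain ⟨h3, h5⟩ := Finset.mem_product.1 h1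
      exact ⟨hS _ h3, hS _ h5, h2⟩
    have hn2 : 2 ≤ n := by
      obtain ⟨p, hp, rfl⟩ := Finset.mem_image.1 hn
      obtain ⟨h3, h5⟩ := Finset.mem_product.1 hp
      have := hS _ h3; have := hS _ h5; omega
    have hcard : (Q.card : ℝ) ≤ n - 1 := by
      have h1 : Q.card ≤ (Finset.Icc (1:ℤ) (n-1)).card := by
        refine Finset.card_le_card_of_injOn (fun p => p.1) ?_ ?_
        · intro p hp
          obtain ⟨h1, h2, h3⟩ := hQmem p hp
          simp only [Finset.coe_Icc, mem_Icc]
          omega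
        · intro p hp q hq hpq
          obtain ⟨_, _, h3⟩ := hQmem p hp
          obtain ⟨_, _, h5⟩ := hQmem q hq
          simp only at hpq
          exact Prod.ext hpq (by omega)
      rw [Int.card_Icc] at h1
      have h2 : (Q.card : ℤ) ≤ n - 1 := by omega
      exact_mod_cast h2
    have hd1 : ‖d n‖ ≤ ∑ p ∈ Q, ‖c p.1‖ * ‖c p.2‖ := by
      refine (norm_sum_le _ _).trans_eq ?_
      simp only [norm_mul, hQ]
    have hd2 : ‖d n‖ ^ 2 ≤ (Q.card : ℝ) * ∑ p ∈ Q, (‖c p.1‖ * ‖c p.2‖) ^ 2 :=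
      (pow_le_pow_left₀ (norm_nonneg _) hd1 2).trans sq_sum_le_card_mul_sum_sq
    refine hd2.trans ?_
    rw [Finset.mul_sum]
    refine Finset.sum_le_sum fun p hp => ?_
    obtain ⟨h1, h2, h3⟩ := hQmem p hp
    have hle : (Q.card : ℝ) ≤ (p.1 : ℝ) * p.2 := by
      refine hcard.trans ?_
      have h1' : (1:ℝ) ≤ p.1 := by exact_mod_cast h1
      have h2' : (1:ℝ) ≤ p.2 := by exact_mod_cast h2
      have h3' : (p.1:ℝ) + p.2 = n := by exact_mod_cast h3
      nlinarith
    calc (Q.card : ℝ) * (‖c p.1‖ * ‖c p.2‖) ^ 2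
        ≤ ((p.1 : ℝ) * p.2) * (‖c p.1‖ * ‖c p.2‖) ^ 2 := by gcongr
      _ = _ := by ring
  refine (Finset.sum_le_sum hfib).trans_eq ?_
  rw [Finset.sum_fiberwise_of_maps_to (s := P) (t := T) (g := fun p => p.1 + p.2)
      (fun p hp => Finset.mem_image_of_mem _ hp)
      (f := fun p => ((p.1 : ℝ) * ‖c p.1‖ ^ 2) * (p.2 * ‖c p.2‖ ^ 2))]
  rw [sq, Finset.sum_mul_sum, ← Finset.sum_product']

lemma integral_sq_le (f : ℝ → ℝ) (hf : Continuous f) :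
    (∫ t in (0:ℝ)..1, f t) ^ 2 ≤ ∫ t in (0:ℝ)..1, f t ^ 2 := by
  set m := ∫ t in (0:ℝ)..1, f t with hm
  have h : 0 ≤ ∫ t in (0:ℝ)..1, (f t ^ 2 - 2 * m * f t + m ^ 2) :=
    intervalIntegral.integral_nonneg zero_le_one fun t _ => by nlinarith [sq_nonneg (f t - m)]
  rw [intervalIntegral.integral_add, intervalIntegral.integral_sub,
    intervalIntegral.integral_const_mul, ← hm, intervalIntegral.integral_const] at h
  · simp at h; nlinarith
  all_goals exact (by fun_prop : Continuous _).intervalIntegrable _ _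

/-! ### Gradient descent and the finite-dimensional minimax principles -/

section Descent

variable {J : Type*} [Fintype J]

/-- The real inner product on `J → ℂ`. -/
def ip (g h : J → ℂ) : ℝ := ∑ j, ((starRingEnd ℂ) (g j) * h j).re

/-- The squared Euclidean norm on `J → ℂ`. -/
def nsq (g : J → ℂ) : ℝ := ∑ j, ‖g j‖ ^ 2

lemma nsq_nonneg (g : J → ℂ) : 0 ≤ nsq g := Finset.sum_nonneg fun j _ => by positivity

lemma ip_self (g : J → ℂ) : ip g g = nsq g := by
  simp only [ip, nsq]
  refine Finset.sum_congr rfl fun j _ => ?_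
  rw [mul_comm, ← ofReal_normSq', Complex.ofReal_re]

lemma ip_smul (g : J → ℂ) (r : ℝ) (h : J → ℂ) : ip g (fun j => (r : ℂ) * h j) = r * ip g h := by
  simp only [ip, Finset.mul_sum]
  refine Finset.sum_congr rfl fun j _ => ?_
  rw [show (starRingEnd ℂ) (g j) * ((r : ℂ) * h j) = (r : ℂ) * ((starRingEnd ℂ) (g j) * h j) by ring,
    Complex.re_ofReal_mul]

lemma nsq_smul (r : ℝ) (h : J → ℂ) : nsq (fun j => (r : ℂ) * h j) = r ^ 2 * nsq h := by
  simp only [nsq, Finset.mul_sum]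
  refine Finset.sum_congr rfl fun j _ => ?_
  rw [norm_mul, mul_pow, Complex.norm_real, Real.norm_eq_abs, sq_abs]

lemma norm_sq_le_nsq (h : J → ℂ) : ‖h‖ ^ 2 ≤ nsq h := by
  have h1 : ‖h‖ ≤ √(nsq h) := by
    refine (pi_norm_le_iff_of_nonneg (Real.sqrt_nonneg _)).2 fun j => ?_
    refine Real.le_sqrt_of_sq_le ?_
    exact Finset.single_le_sum (f := fun j => ‖h j‖ ^ 2) (fun j _ => by positivity)
      (Finset.mem_univ j)
  calc ‖h‖ ^ 2 ≤ √(nsq h) ^ 2 := by gcongr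
    _ = nsq h := Real.sq_sqrt (nsq_nonneg h)

/-- One gradient step of length `τ / L`. -/
def gstep (g : (J → ℂ) → J → ℂ) (L : ℝ) (τ : ℝ) (y : J → ℂ) : J → ℂ :=
  y + fun j => ((-(τ / L) : ℝ) : ℂ) * g y j

lemma gstep_zero (g : (J → ℂ) → J → ℂ) (L : ℝ) : gstep g L 0 = id := by
  funext y j; simp [gstep]

lemma gstep_descent {A : (J → ℂ) → ℝ} {g : (J → ℂ) → J → ℂ} {L : ℝ} (hL : 0 < L)
    (hd : ∀ y h, A (y + h) ≤ A y + ip (g y) h + L / 2 * nsq h) {τ : ℝ} (hτ : τ ∈ Icc (0:ℝ) 1)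
    (y : J → ℂ) : A (gstep g L τ y) ≤ A y - τ / (2 * L) * nsq (g y) := by
  have h := hd y (fun j => ((-(τ / L) : ℝ) : ℂ) * g y j)
  rw [ip_smul, nsq_smul, ip_self] at h
  refine h.trans ?_
  have h2 : L / 2 * ((-(τ / L)) ^ 2 * nsq (g y)) = τ * (τ / (2 * L)) * nsq (g y) := by
    field_simp
  have h3 : -(τ / L) * nsq (g y) = -2 * (τ / (2 * L)) * nsq (g y) := by field_simp
  rw [h2, h3]
  have h4 : 0 ≤ τ / (2 * L) * nsq (g y) := by
    have := nsq_nonneg (g y); have := hτ.1; positivity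
  nlinarith [mul_le_mul_of_nonneg_right hτ.2 h4]

lemma iterate_descent {A : (J → ℂ) → ℝ} {g : (J → ℂ) → J → ℂ} {L : ℝ} (hL : 0 < L)
    (hd : ∀ y h, A (y + h) ≤ A y + ip (g y) h + L / 2 * nsq h) {τ : ℝ} (hτ : τ ∈ Icc (0:ℝ) 1)
    (y : J → ℂ) : Antitone fun n => A ((gstep g L τ)^[n] y) := by
  refine antitone_nat_of_succ_le fun n => ?_
  rw [Function.iterate_succ_apply']
  refine (gstep_descent hL hd hτ _).trans ?_
  have : 0 ≤ τ / (2 * L) * nsq (g ((gstep g L τ)^[n] y)) := by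
    have := nsq_nonneg (g ((gstep g L τ)^[n] y)); have := hτ.1; positivity
  linarith

/-- If the action drops by less than `n ν / (2 L)` during `n` full gradient steps, one of the
points visited has squared gradient norm at most `ν`. -/
lemma exists_small_grad {A : (J → ℂ) → ℝ} {g : (J → ℂ) → J → ℂ} {L : ℝ} (hL : 0 < L)
    (hd : ∀ y h, A (y + h) ≤ A y + ip (g y) h + L / 2 * nsq h) (y : J → ℂ) (n : ℕ) (ν : ℝ)
    (hn : A y - A ((gstep g L 1)^[n] y) < n * (ν / (2 * L))) :
    ∃ m < n, nsq (g ((gstep g L 1)^[m] y)) ≤ ν := by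
  by_contra! hcon
  have key : ∀ k ≤ n, A ((gstep g L 1)^[k] y) ≤ A y - k * (ν / (2 * L)) := by
    intro k
    induction k with
    | zero => simp
    | succ k ih =>
      intro hk
      rw [Function.iterate_succ_apply']
      have h1 := gstep_descent hL hd (τ := 1) (by simp) ((gstep g L 1)^[k] y)
      have h2 := ih (by omega)
      have h3 : ν / (2 * L) ≤ 1 / (2 * L) * nsq (g ((gstep g L 1)^[k] y)) := by
        rw [div_eq_mul_inv, mul_comm, one_div]
        have := (hcon k (by omega)).le
        gcongr
      push_cast
      linarith
  have := key n le_rfl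
  linarith

lemma continuous_gstep {g : (J → ℂ) → J → ℂ} (hg : Continuous g) (L : ℝ) :
    Continuous fun q : ℝ × (J → ℂ) => gstep g L q.1 q.2 := by
  unfold gstep
  refine continuous_snd.add (continuous_pi fun j => ?_)
  have : Continuous fun q : ℝ × (J → ℂ) => g q.2 j :=
    (continuous_apply j).comp (hg.comp continuous_snd)
  fun_prop

lemma LLfst : LocallyLipschitz fun q : ℝ × (J → ℂ) => q.1 :=
  ContDiff.locallyLipschitz (𝕂 := ℝ) contDiff_fst

lemma LLsnd : LocallyLipschitz fun q : ℝ × (J → ℂ) => q.2 :=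
  ContDiff.locallyLipschitz (𝕂 := ℝ) contDiff_snd

lemma locallyLipschitz_gstep {g : (J → ℂ) → J → ℂ} (hg : LocallyLipschitz g) (L : ℝ) :
    LocallyLipschitz fun q : ℝ × (J → ℂ) => gstep g L q.1 q.2 := by
  have h1 : LocallyLipschitz fun q : ℝ × (J → ℂ) × (J → ℂ) =>
      (q.2.1 + fun j => ((-(q.1 / L) : ℝ) : ℂ) * q.2.2 j : J → ℂ) := by
    refine ContDiff.locallyLipschitz (𝕂 := ℝ) ?_
    refine ContDiff.add (by fun_prop) (contDiff_pi.2 fun j => ?_)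
    refine ContDiff.mul (Complex.ofRealCLM.contDiff.comp ?_) ?_
    · exact (contDiff_fst.div_const L).neg
    · fun_prop
  have h2 : LocallyLipschitz fun q : ℝ × (J → ℂ) => (q.1, q.2, g q.2) := by
    refine LocallyLipschitz.prodMk ?_ (LocallyLipschitz.prodMk ?_ (hg.comp ?_))
    · exact LLfst
    · exact LLsnd
    · exact LLsnd
  have h3 := LocallyLipschitz.comp h1 h2
  exact h3

lemma continuous_iter {g : (J → ℂ) → J → ℂ} (hg : Continuous g) (L : ℝ) (n : ℕ) :
    Continuous fun q : ℝ × (J → ℂ) => (gstep g L q.1)^[n] q.2 := by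
  induction n with
  | zero => simpa using continuous_snd
  | succ n ih =>
    simp only [Function.iterate_succ_apply']
    exact (continuous_gstep hg L).comp (continuous_fst.prodMk ih)

lemma locallyLipschitz_iter {g : (J → ℂ) → J → ℂ} (hg : LocallyLipschitz g) (L : ℝ) (n : ℕ) :
    LocallyLipschitz fun q : ℝ × (J → ℂ) => (gstep g L q.1)^[n] q.2 := by
  induction n with
  | zero => exact LLsnd
  | succ n ih =>
    simp only [Function.iterate_succ_apply']
    have h3 := LocallyLipschitz.comp (locallyLipschitz_gstep hg L) (LLfst.prodMk ih)
    exact h3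

variable [DecidableEq J]

/-- Linking produces almost critical points with action in `[α, M]`. -/
theorem minimaxA (wt : J → ℤ) (e : J) (he : 0 < wt e) (A : (J → ℂ) → ℝ)
    (g : (J → ℂ) → J → ℂ) (hg : Continuous g) (L : ℝ) (hL : 0 < L)
    (hd : ∀ y h, A (y + h) ≤ A y + ip (g y) h + L / 2 * nsq h)
    (p : J → ℂ) (r0 : ℝ) (hr0 : 0 < r0) (α : ℝ) (hα : 0 < α) (M R : ℝ)
    (hM : ∀ x : J → ℂ, (∀ j, 0 < wt j → j ≠ e → x j = 0) → A x ≤ M)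
    (hF : ∀ x : J → ℂ, (∀ j, 0 < wt j → j ≠ e → x j = 0) → (x e = 0 ∨ R ≤ ‖x‖) → A x ≤ 0)
    (hS : ∀ x : J → ℂ, (∀ j, wt j ≤ 0 → x j = p j) → posSq wt x = r0 ^ 2 → α ≤ A x)
    (ν : ℝ) (hν : 0 < ν) : ∃ y, nsq (g y) ≤ ν ∧ α ≤ A y ∧ A y ≤ M := by
  obtain ⟨n, hn⟩ := exists_nat_gt ((M - α) / (ν / (2 * L)))
  rw [div_lt_iff₀ (by positivity)] at hn
  obtain ⟨x, hx, hx1, hx2⟩ := linkingA wt e he (fun τ => (gstep g L τ)^[n])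
    (continuous_iter hg L n) (fun x => by simp [gstep_zero]) p r0 hr0 R (by
      intro τ hτ x hx hx1 h1 h2
      have := hS _ h1 h2
      have h3 := hF x hx hx1
      have h4 := iterate_descent hL hd hτ x (Nat.zero_le n)
      simp only [Function.iterate_zero, id] at h4
      linarith)
  have hend := hS _ hx1 hx2
  have hst := hM x hx
  obtain ⟨m, hm, hmν⟩ := exists_small_grad hL hd x n ν (by linarith)
  refine ⟨_, hmν, ?_, ?_⟩
  · exact hend.trans (iterate_descent hL hd (τ := 1) (by simp) x hm.le)
  · exact (iterate_descent hL hd (τ := 1) (by simp) x (Nat.zero_le m)).trans hst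

/-- The equivariant function that interpolates between the coordinate `x e2` at time `0` and
`ℓ` after `n` full gradient steps at time `1`. -/
def lfun (g : (J → ℂ) → J → ℂ) (L : ℝ) (ℓ : (J → ℂ) → ℂ) (e2 : J) (n : ℕ) (τ : ℝ)
    (x : J → ℂ) : ℂ :=
  (τ : ℂ) * ℓ ((gstep g L τ)^[n] x) + (1 - (τ : ℂ)) * x e2

lemma locallyLipschitz_lfun {g : (J → ℂ) → J → ℂ} (hg : LocallyLipschitz g) (L : ℝ)
    {ℓ : (J → ℂ) → ℂ} (hℓ : LocallyLipschitz ℓ) (e2 : J) (n : ℕ) :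
    LocallyLipschitz fun q : ℝ × (J → ℂ) => lfun g L ℓ e2 n q.1 q.2 := by
  have h1 : LocallyLipschitz fun q : ℝ × ℂ × (J → ℂ) =>
      ((q.1 : ℂ) * q.2.1 + (1 - (q.1 : ℂ)) * q.2.2 e2 : ℂ) := by
    refine ContDiff.locallyLipschitz (𝕂 := ℝ) ?_
    have : ContDiff ℝ 1 fun q : ℝ × ℂ × (J → ℂ) => (q.1 : ℂ) :=
      Complex.ofRealCLM.contDiff.comp contDiff_fst
    fun_prop
  have h4 := LocallyLipschitz.comp hℓ (locallyLipschitz_iter hg L n)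
  have h2 := LLfst.prodMk (h4.prodMk (LLsnd (J := J)))
  have h3 := LocallyLipschitz.comp h1 h2
  exact h3

/-- The Lusternik–Schnirelmann type principle: the almost critical points with action in
`[α, M]` cannot all have action near one value `a₀` and at the same time satisfy `ℓ ≠ 0` for
an equivariant function `ℓ`. -/
theorem minimaxB (wt : J → ℤ) (e1 e2 : J) (hne : e1 ≠ e2) (he1 : wt e1 = 1) (he2 : wt e2 = 1)
    (A : (J → ℂ) → ℝ)
    (g : (J → ℂ) → J → ℂ) (hg : LocallyLipschitz g) (L : ℝ) (hL : 0 < L)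
    (hd : ∀ y h, A (y + h) ≤ A y + ip (g y) h + L / 2 * nsq h)
    (geq : ∀ x (u : ℂ), ‖u‖ = 1 → g (fun j => u ^ wt j * x j) = fun j => u ^ wt j * g x j)
    (ℓ : (J → ℂ) → ℂ) (hℓ : LocallyLipschitz ℓ)
    (ℓeq : ∀ x (u : ℂ), ‖u‖ = 1 → ℓ (fun j => u ^ wt j * x j) = u * ℓ x)
    (p : J → ℂ) (hp : ∀ j, p j ≠ 0 → wt j = 0) (r0 : ℝ) (hr0 : 0 < r0)
    (α : ℝ) (hα : 0 < α) (M R : ℝ)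
    (hM : ∀ x : J → ℂ, (∀ j, 0 < wt j → j ≠ e1 → j ≠ e2 → x j = 0) → A x ≤ M)
    (hF : ∀ x : J → ℂ, (∀ j, 0 < wt j → j ≠ e1 → j ≠ e2 → x j = 0) →
      ((x e1 = 0 ∧ x e2 = 0) ∨ R ≤ ‖x‖) → A x ≤ 0)
    (hS : ∀ x : J → ℂ, (∀ j, wt j ≤ 0 → x j = p j) → posSq wt x = r0 ^ 2 → α ≤ A x)
    (a₀ ν₀ ν : ℝ) (hν₀ : 0 < ν₀) (hν : 0 < ν)
    (h1 : ∀ y, α ≤ A y → A y ≤ M → nsq (g y) ≤ ν₀ → ℓ y ≠ 0)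
    (h2 : ∀ y, α ≤ A y → A y ≤ M → nsq (g y) ≤ ν → |A y - a₀| ≤ ν₀ / (8 * L)) : False := by
  obtain ⟨n, hn⟩ := exists_nat_gt ((M - α) / (ν / (2 * L)))
  rw [div_lt_iff₀ (by positivity)] at hn
  have hiter_eq : ∀ m τ x (u : ℂ), ‖u‖ = 1 →
      (gstep g L τ)^[m] (fun j => u ^ wt j * x j) = fun j => u ^ wt j * (gstep g L τ)^[m] x j := by
    intro m τ x u hu
    induction m with
    | zero => simp
    | succ m ih =>
      rw [Function.iterate_succ_apply', ih, Function.iterate_succ_apply']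
      funext j
      simp only [gstep, Pi.add_apply, geq _ u hu]
      ring
  obtain ⟨N, hN⟩ : ∃ N, N = 2 * n + 1 := ⟨_, rfl⟩
  have q1 := locallyLipschitz_iter hg L N
  have q2 := locallyLipschitz_lfun hg L hℓ e2 n
  have q3 : ∀ τ ∈ Icc (0 : ℝ) 1, ∀ x : J → ℂ, (∀ j, 0 < wt j → j ≠ e1 → j ≠ e2 → x j = 0) →
      ((x e1 = 0 ∧ x e2 = 0) ∨ R ≤ ‖x‖) → (∀ j, wt j ≤ 0 → (gstep g L τ)^[N] x j = p j) →
      posSq wt ((gstep g L τ)^[N] x) = r0 ^ 2 → False := by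
    intro τ hτ x hx hx1 h1 h2
    have := hS _ h1 h2
    have h3 := hF x hx hx1
    have h4 := iterate_descent hL hd hτ x (Nat.zero_le N)
    simp only [Function.iterate_zero, id] at h4
    linarith
  have q4 : ∀ τ x (u : ℂ), ‖u‖ = 1 →
      lfun g L ℓ e2 n τ (fun j => u ^ wt j * x j) = u * lfun g L ℓ e2 n τ x := by
    intro τ x u hu
    simp only [lfun, hiter_eq n τ x u hu, ℓeq _ u hu, he2, zpow_one]; ring
  have q5 : ∀ x : J → ℂ, (gstep g L 0)^[N] x = x := fun x => by simp [gstep_zero]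
  have q6 : ∀ x : J → ℂ, lfun g L ℓ e2 n 0 x = x e2 := fun x => by simp [lfun]
  have q7 := hiter_eq N
  obtain ⟨x, hx, hx1, hx2, hx3⟩ := linkingB wt e1 e2 hne he1 he2
    (fun τ x => (gstep g L τ)^[N] x) q1 q5 (lfun g L ℓ e2 n) q2 q6 q7 q4 p hp r0 hr0 R q3
  subst hN
  have hend := hS _ hx1 hx2
  have hst := hM x hx
  have anti := iterate_descent hL hd (τ := 1) (by simp) x
  have hlow : ∀ m ≤ 2 * n + 1, α ≤ A ((gstep g L 1)^[m] x) := fun m hm => hend.trans (anti hm)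
  have hup : ∀ m, A ((gstep g L 1)^[m] x) ≤ M := fun m => (anti (Nat.zero_le m)).trans hst
  have hℓ0 : ℓ ((gstep g L 1)^[n] x) = 0 := by simpa [lfun] using hx3
  obtain ⟨m, hm, hmν⟩ := exists_small_grad hL hd x n ν (by
    have := hlow n (by omega); linarith)
  have b1 := h2 _ (hlow m (by omega)) (hup m) hmν
  obtain ⟨m', hm', hmν'⟩ := exists_small_grad hL hd ((gstep g L 1)^[n + 1] x) n ν (by
    rw [← Function.iterate_add_apply]
    have := hlow (n + (n + 1)) (by omega)
    have := hup (n + 1)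
    linarith)
  rw [← Function.iterate_add_apply] at hmν'
  have b2 := h2 _ (hlow (m' + (n + 1)) (by omega)) (hup _) hmν'
  have c1 : A ((gstep g L 1)^[n] x) ≤ A ((gstep g L 1)^[m] x) := anti hm.le
  have c2 : A ((gstep g L 1)^[m' + (n + 1)] x) ≤ A ((gstep g L 1)^[n + 1] x) := anti (by omega)
  have c3 := gstep_descent hL hd (τ := 1) (by simp) ((gstep g L 1)^[n] x)
  rw [← Function.iterate_succ_apply' (gstep g L 1)] at c3
  refine h1 _ (hlow n (by omega)) (hup n) ?_ hℓ0
  rw [abs_le] at b1 b2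
  have c4 : 1 / (2 * L) * nsq (g ((gstep g L 1)^[n] x)) ≤ 2 * (ν₀ / (8 * L)) := by
    have : n.succ = n + 1 := rfl
    rw [this] at c3
    linarith
  have c5 : 1 / (2 * L) * nsq (g ((gstep g L 1)^[n] x)) =
      nsq (g ((gstep g L 1)^[n] x)) / (2 * L) := by ring
  have c6 : 2 * (ν₀ / (8 * L)) = (ν₀ / 2) / (2 * L) := by field_simp; norm_num
  rw [c5, c6, div_le_div_iff_of_pos_right (by positivity)] at c4
  linarith

end Descent

/-! ### Galerkin approximations of the Hamiltonian action functional -/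

/-- The data of a Hamiltonian `H z = π ∑ σᵢ|zᵢ|² + c₀ + K z` on `ℂ²`, which is a compact
perturbation of a quadratic one: `B` is the gradient of `K`, and `L`, `C` are bounds. -/
structure HamData where
  /-- The frequencies of the quadratic part. -/
  σ : Fin 2 → ℝ
  /-- The perturbation. -/
  K : (Fin 2 → ℂ) → ℝ
  /-- The gradient of the perturbation. -/
  B : (Fin 2 → ℂ) → Fin 2 → ℂ
  /-- The additive constant. -/
  c₀ : ℝ
  /-- The Lipschitz constant of the gradient. -/
  L : ℝ
  /-- A bound of the gradient. -/
  C : ℝ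
  hL : 0 < L
  hC : 0 < C
  Kcont : Continuous K
  Blip : ∀ z w, ‖B z - B w‖ ≤ L * ‖z - w‖
  Bbd : ∀ z i, ‖B z i‖ ≤ C
  descent : ∀ z h, K z + ∑ i, ((starRingEnd ℂ) (B z i) * h i).re - L / 2 * ∑ i, ‖h i‖ ^ 2
    ≤ K (z + h)

/-- The Hamiltonian of the given data. -/
def HamData.H (D : HamData) (z : Fin 2 → ℂ) : ℝ := π * ∑ i, D.σ i * ‖z i‖ ^ 2 + D.c₀ + D.K z

/-- The frequencies of absolute value at most `N`. -/
abbrev IdxZ (N : ℕ) := ↥(Finset.Icc (-(N : ℤ)) N)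

/-- The index set of the `N`-th Galerkin space: a component and a frequency. -/
abbrev Idx (N : ℕ) := Fin 2 × IdxZ N

/-- The frequency of an index. -/
def wtN (N : ℕ) (j : Idx N) : ℤ := j.2

/-- The scaling factor of `H^{1/2}`-normalized coordinates. -/
def sc (k : ℤ) : ℝ := (√(1 + |(k : ℝ)|))⁻¹

lemma sc_pos (k : ℤ) : 0 < sc k := by unfold sc; positivity

lemma sc_sq (k : ℤ) : sc k ^ 2 = (1 + |(k : ℝ)|)⁻¹ := by
  unfold sc; rw [inv_pow, Real.sq_sqrt (by positivity)]

lemma sc_sq_mul (k : ℤ) : sc k ^ 2 * (1 + |(k : ℝ)|) = 1 := by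
  rw [sc_sq, inv_mul_cancel₀ (by positivity)]

lemma sc_sq_le (k : ℤ) : sc k ^ 2 ≤ 1 := by
  rw [sc_sq]; exact inv_le_one_of_one_le₀ (by linarith [abs_nonneg (k : ℝ)])

lemma sc_le (k : ℤ) : sc k ≤ 1 := by
  have := sc_sq_le k; have := sc_pos k; nlinarith

/-- The loop with normalized Fourier coordinates `y`. -/
def loopN (N : ℕ) (y : Idx N → ℂ) (t : ℝ) (i : Fin 2) : ℂ :=
  trig Finset.univ (fun k : IdxZ N => (k : ℤ)) (fun k => (sc k : ℂ) * y (i, k)) t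

@[fun_prop]
lemma continuous_loopN (N : ℕ) (y : Idx N → ℂ) : Continuous (loopN N y) := by
  unfold loopN; fun_prop

lemma injOn_val (N : ℕ) (S : Set (IdxZ N)) : InjOn (fun k : IdxZ N => (k : ℤ)) S :=
  Subtype.val_injective.injOn

lemma loopN_add (N : ℕ) (y h : Idx N → ℂ) (t : ℝ) : loopN N (y + h) t = loopN N y t + loopN N h t := by
  funext i
  simp only [loopN, trig, Pi.add_apply, mul_add, add_mul, Finset.sum_add_distrib]

lemma integral_loopN (N : ℕ) (y : Idx N → ℂ) (i : Fin 2) :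
    ∫ t in (0:ℝ)..1, ‖loopN N y t i‖ ^ 2 = ∑ k : IdxZ N, sc k ^ 2 * ‖y (i, k)‖ ^ 2 := by
  simp only [loopN]
  rw [parseval_trig _ _ (injOn_val N _)]
  refine Finset.sum_congr rfl fun k _ => ?_
  rw [norm_mul, mul_pow, Complex.norm_real, Real.norm_eq_abs, sq_abs]

namespace HamData

variable (D : HamData)

lemma Bcont : Continuous D.B := by
  have : LipschitzWith (Real.toNNReal D.L) D.B := by
    refine LipschitzWith.of_dist_le' fun z w => ?_
    rw [dist_eq_norm, dist_eq_norm]; exact D.Blip z w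
  exact this.continuous

@[fun_prop]
lemma Bcont' (i : Fin 2) : Continuous fun z => D.B z i := (continuous_apply i).comp D.Bcont

/-- The action functional on the `N`-th Galerkin space. -/
def A (N : ℕ) (y : Idx N → ℂ) : ℝ :=
  π * ∑ j : Idx N, (((j.2 : ℤ) : ℝ) - D.σ j.1) * sc j.2 ^ 2 * ‖y j‖ ^ 2 - D.c₀ -
    ∫ t in (0:ℝ)..1, D.K (loopN N y t)

/-- The gradient of the action functional in the normalized coordinates. -/
def gr (N : ℕ) (y : Idx N → ℂ) (j : Idx N) : ℂ :=
  ((2 * π * ((((j.2 : ℤ) : ℝ) - D.σ j.1) * sc j.2 ^ 2) : ℝ) : ℂ) * y j -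
    (sc j.2 : ℂ) * fc (fun t => D.B (loopN N y t) j.1) j.2

/-- The descent constant of the action functional, independent of `N`. -/
def L' : ℝ := 2 * π * (1 + |D.σ 0| + |D.σ 1|) + D.L

lemma L'_pos : 0 < D.L' := by
  have := D.hL; unfold L'; positivity

lemma abs_coef_le (N : ℕ) (j : Idx N) :
    |(((j.2 : ℤ) : ℝ) - D.σ j.1) * sc j.2 ^ 2| ≤ 1 + |D.σ 0| + |D.σ 1| := by
  rw [abs_mul, abs_of_pos (pow_pos (sc_pos _) 2), sc_sq, ← div_eq_mul_inv,
    div_le_iff₀ (by positivity)]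
  have h1 : |D.σ j.1| ≤ |D.σ 0| + |D.σ 1| := by
    rcases j with ⟨i, k⟩
    fin_cases i
    · simp
    · simp
  have h2 := abs_sub (((j.2 : ℤ) : ℝ)) (D.σ j.1)
  have := abs_nonneg (((j.2 : ℤ) : ℝ)); have := abs_nonneg (D.σ 0); have := abs_nonneg (D.σ 1)
  nlinarith [mul_nonneg (abs_nonneg (((j.2 : ℤ) : ℝ))) (add_nonneg (abs_nonneg (D.σ 0)) (abs_nonneg (D.σ 1)))]

lemma A_descent (N : ℕ) (y h : Idx N → ℂ) :
    D.A N (y + h) ≤ D.A N y + ip (D.gr N y) h + D.L' / 2 * nsq h := by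
  have hInt : ∫ t in (0:ℝ)..1, (D.K (loopN N y t) +
        ∑ i, ((starRingEnd ℂ) (D.B (loopN N y t) i) * loopN N h t i).re -
        D.L / 2 * ∑ i, ‖loopN N h t i‖ ^ 2) ≤ ∫ t in (0:ℝ)..1, D.K (loopN N (y + h) t) := by
    have hK := D.Kcont
    refine intervalIntegral.integral_mono_on zero_le_one ?_ ?_ ?_
    · refine (by fun_prop : Continuous _).intervalIntegrable _ _
    · refine (by fun_prop : Continuous _).intervalIntegrable _ _
    · intro t _
      rw [loopN_add]; exact D.descent _ _
  have hB : ∀ i, ∫ t in (0:ℝ)..1, ((starRingEnd ℂ) (D.B (loopN N y t) i) * loopN N h t i).re =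
      ∑ k : IdxZ N, ((starRingEnd ℂ) ((sc k : ℂ) * fc (fun t => D.B (loopN N y t) i) k) *
        h (i, k)).re := by
    intro i
    have h1 := integral_mul_conj_trig Finset.univ (fun k : IdxZ N => (k : ℤ))
      (fun k => (sc k : ℂ) * h (i, k)) (fun t => D.B (loopN N y t) i) (by fun_prop)
    have h2 := intervalIntegral.intervalIntegral_re (𝕜 := ℂ) (μ := volume) (a := 0) (b := 1)
        (f := fun t => D.B (loopN N y t) i * (starRingEnd ℂ) (loopN N h t i))
        ((by fun_prop : Continuous _).intervalIntegrable _ _)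
    simp only [RCLike.re_to_complex] at h2
    have h3 : ∀ t, ((starRingEnd ℂ) (D.B (loopN N y t) i) * loopN N h t i).re =
        (D.B (loopN N y t) i * (starRingEnd ℂ) (loopN N h t i)).re := by
      intro t; simp [Complex.mul_re]
    simp only [h3]
    rw [h2]
    simp only [loopN] at h1 ⊢
    rw [h1, Complex.re_sum]
    refine Finset.sum_congr rfl fun k _ => ?_
    rw [← Complex.conj_re]
    simp only [map_mul, Complex.conj_conj, Complex.conj_ofReal]
    congr 1; ring
  have hsplit : ∫ t in (0:ℝ)..1, (D.K (loopN N y t) +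
        ∑ i, ((starRingEnd ℂ) (D.B (loopN N y t) i) * loopN N h t i).re -
        D.L / 2 * ∑ i, ‖loopN N h t i‖ ^ 2) =
      (∫ t in (0:ℝ)..1, D.K (loopN N y t)) +
        ∑ j : Idx N, ((starRingEnd ℂ) ((sc j.2 : ℂ) * fc (fun t => D.B (loopN N y t) j.1) j.2) *
        h j).re - D.L / 2 * ∑ j : Idx N, sc j.2 ^ 2 * ‖h j‖ ^ 2 := by
    have hK := D.Kcont
    rw [intervalIntegral.integral_sub, intervalIntegral.integral_add,
      intervalIntegral.integral_const_mul, intervalIntegral.integral_finsetSum,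
      intervalIntegral.integral_finsetSum, Fintype.sum_prod_type, Fintype.sum_prod_type]
    · simp only [hB, integral_loopN]
    · intro i _; exact (by fun_prop : Continuous _).intervalIntegrable _ _
    · intro i _; exact (by fun_prop : Continuous _).intervalIntegrable _ _
    all_goals exact (by fun_prop : Continuous _).intervalIntegrable _ _
  rw [hsplit] at hInt
  have hq : ∀ j : Idx N, (((j.2 : ℤ) : ℝ) - D.σ j.1) * sc j.2 ^ 2 * ‖(y + h) j‖ ^ 2 =
      (((j.2 : ℤ) : ℝ) - D.σ j.1) * sc j.2 ^ 2 * ‖y j‖ ^ 2 +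
      2 * ((((j.2 : ℤ) : ℝ) - D.σ j.1) * sc j.2 ^ 2) * ((starRingEnd ℂ) (y j) * h j).re +
      (((j.2 : ℤ) : ℝ) - D.σ j.1) * sc j.2 ^ 2 * ‖h j‖ ^ 2 := by
    intro j
    rw [Pi.add_apply, ← Complex.normSq_eq_norm_sq, ← Complex.normSq_eq_norm_sq,
      ← Complex.normSq_eq_norm_sq, Complex.normSq_add]
    have : (y j * (starRingEnd ℂ) (h j)).re = ((starRingEnd ℂ) (y j) * h j).re := by
      simp [Complex.mul_re]
    rw [this]; ring
  have hip : ip (D.gr N y) h = π * ∑ j : Idx N, 2 * ((((j.2 : ℤ) : ℝ) - D.σ j.1) * sc j.2 ^ 2) *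
        ((starRingEnd ℂ) (y j) * h j).re -
      ∑ j : Idx N, ((starRingEnd ℂ) ((sc j.2 : ℂ) * fc (fun t => D.B (loopN N y t) j.1) j.2) *
        h j).re := by
    rw [ip, Finset.mul_sum, ← Finset.sum_sub_distrib]
    refine Finset.sum_congr rfl fun j _ => ?_
    rw [gr, map_sub, sub_mul, Complex.sub_re]
    congr 1
    rw [map_mul, Complex.conj_ofReal, mul_assoc, Complex.re_ofReal_mul]
    ring
  have hle1 : ∑ j : Idx N, (((j.2 : ℤ) : ℝ) - D.σ j.1) * sc j.2 ^ 2 * ‖h j‖ ^ 2 ≤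
      (1 + |D.σ 0| + |D.σ 1|) * nsq h := by
    rw [nsq, Finset.mul_sum]
    refine Finset.sum_le_sum fun j _ => ?_
    exact mul_le_mul_of_nonneg_right ((le_abs_self _).trans (D.abs_coef_le N j)) (by positivity)
  have hle2 : ∑ j : Idx N, sc j.2 ^ 2 * ‖h j‖ ^ 2 ≤ nsq h := by
    rw [nsq]
    refine Finset.sum_le_sum fun j _ => ?_
    exact mul_le_of_le_one_left (by positivity) (sc_sq_le _)
  unfold A
  simp only [hq, Finset.sum_add_distrib, mul_add]
  rw [hip]
  have e1 : D.L' / 2 * nsq h = π * ((1 + |D.σ 0| + |D.σ 1|) * nsq h) + D.L / 2 * nsq h := by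
    unfold L'; ring
  rw [e1]
  have := mul_le_mul_of_nonneg_left hle1 Real.pi_pos.le
  have := mul_le_mul_of_nonneg_left hle2 (half_pos D.hL).le
  linarith

end HamData

lemma norm_loopN_le (N : ℕ) (y : Idx N → ℂ) (t : ℝ) :
    ‖loopN N y t‖ ≤ Fintype.card (IdxZ N) * ‖y‖ := by
  refine (pi_norm_le_iff_of_nonneg (by positivity)).2 fun i => ?_
  simp only [loopN, trig]
  refine (norm_sum_le _ _).trans ?_
  rw [← nsmul_eq_mul, ← Finset.card_univ]
  refine Finset.sum_le_card_nsmul _ _ _ fun k _ => ?_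
  rw [norm_mul, norm_ex, mul_one, norm_mul, Complex.norm_real, Real.norm_of_nonneg (sc_pos _).le]
  calc sc k * ‖y (i, k)‖ ≤ 1 * ‖y‖ :=
        mul_le_mul (sc_le _) (norm_le_pi_norm y _) (norm_nonneg _) zero_le_one
    _ = ‖y‖ := one_mul _

lemma loopN_sub (N : ℕ) (y h : Idx N → ℂ) (t : ℝ) : loopN N (y - h) t = loopN N y t - loopN N h t := by
  rw [eq_sub_iff_add_eq, ← loopN_add, sub_add_cancel]

lemma norm_fc_sub_le (f g : ℝ → ℂ) (hf : Continuous f) (hg : Continuous g) (k : ℤ) (M : ℝ)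
    (h : ∀ t, ‖f t - g t‖ ≤ M) : ‖fc f k - fc g k‖ ≤ M := by
  unfold fc
  rw [← intervalIntegral.integral_sub ((by fun_prop : Continuous _).intervalIntegrable _ _)
    ((by fun_prop : Continuous _).intervalIntegrable _ _)]
  refine (intervalIntegral.norm_integral_le_of_norm_le_const (C := M) fun t _ => ?_).trans
    (by simp)
  rw [← sub_mul, norm_mul, norm_ex, mul_one]; exact h t

/-- Fourier coefficients of a translated periodic function. -/
lemma fc_shift (f : ℝ → ℂ) (hp : ∀ t, f (t + 1) = f t) (k : ℤ) (s : ℝ) :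
    fc (fun t => f (t + s)) k = ex k s * fc f k := by
  have e : ∀ t, f (t + s) * ex (-k) t = ex k s * (f (t + s) * ex (-k) (t + s)) := by
    intro t
    rw [ex_shift]
    have : ex k s * ex (-k) s = 1 := by rw [← ex_add, add_neg_cancel, ex_zero]
    linear_combination (-(f (t + s) * ex (-k) t)) * this
  simp only [fc, e]
  rw [intervalIntegral.integral_const_mul,
    intervalIntegral.integral_comp_add_right (fun t => f t * ex (-k) t)]
  congr 1
  have hper : Function.Periodic (fun t => f t * ex (-k) t) 1 := by
    intro t; simp only [hp, ex_shift, ex_one, mul_one]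
  have := hper.intervalIntegral_add_eq s 0
  rw [zero_add] at this ⊢
  rw [add_comm 1 s]; exact this

lemma exists_ex_eq (u : ℂ) (hu : ‖u‖ = 1) : ∃ s : ℝ, u = ex 1 s := by
  refine ⟨Complex.arg u / (2 * π), ?_⟩
  have h := Complex.norm_mul_exp_arg_mul_I u
  rw [hu, Complex.ofReal_one, one_mul] at h
  rw [ex, ← h]
  congr 1
  have : (π : ℂ) ≠ 0 := by exact_mod_cast Real.pi_ne_zero
  rw [h]
  push_cast
  field_simp

lemma loopN_equiv (N : ℕ) (y : Idx N → ℂ) (s t : ℝ) :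
    loopN N (fun j => ex 1 s ^ wtN N j * y j) t = loopN N y (t + s) := by
  funext i
  simp only [loopN, trig, wtN, ex_shift, ← ex_zpow]
  exact Finset.sum_congr rfl fun k _ => by ring

lemma loopN_periodic (N : ℕ) (y : Idx N → ℂ) (t : ℝ) : loopN N y (t + 1) = loopN N y t := by
  funext i
  simp [loopN, trig, ex_shift, ex_one]

namespace HamData

variable (D : HamData)

lemma gr_equiv (N : ℕ) (y : Idx N → ℂ) (u : ℂ) (hu : ‖u‖ = 1) :
    D.gr N (fun j => u ^ wtN N j * y j) = fun j => u ^ wtN N j * D.gr N y j := by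
  obtain ⟨s, rfl⟩ := exists_ex_eq u hu
  funext j
  simp only [gr, loopN_equiv]
  rw [fc_shift (fun t => D.B (loopN N y t) j.1) (fun t => by rw [loopN_periodic]), ex_zpow (j.2 : ℤ), wtN]
  ring

lemma gr_lip (N : ℕ) : LocallyLipschitz (D.gr N) := by
  have h1 : LocallyLipschitz fun q : (Idx N → ℂ) × (Idx N → ℂ) => fun j : Idx N =>
      ((2 * π * ((((j.2 : ℤ) : ℝ) - D.σ j.1) * sc j.2 ^ 2) : ℝ) : ℂ) * q.1 j -
        (sc j.2 : ℂ) * q.2 j := by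
    refine ContDiff.locallyLipschitz (𝕂 := ℝ) (contDiff_pi.2 fun j => ?_)
    fun_prop
  have h2 : LipschitzWith (Real.toNNReal (D.L * Fintype.card (IdxZ N)))
      fun (y : Idx N → ℂ) (j : Idx N) => fc (fun t => D.B (loopN N y t) j.1) j.2 := by
    have hL := D.hL
    refine LipschitzWith.of_dist_le' fun y z => ?_
    refine (dist_pi_le_iff (by positivity)).2 fun j => ?_
    rw [dist_eq_norm, dist_eq_norm]
    refine norm_fc_sub_le _ _ (by fun_prop) (by fun_prop) _ _ fun t => ?_
    have h3 := (norm_le_pi_norm (D.B (loopN N y t) - D.B (loopN N z t)) j.1).trans (D.Blip _ _)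
    rw [← loopN_sub] at h3
    rw [mul_assoc]
    exact h3.trans (mul_le_mul_of_nonneg_left (norm_loopN_le _ _ _) hL.le)
  have h3 : LocallyLipschitz fun y : Idx N → ℂ => y :=
    ContDiff.locallyLipschitz (𝕂 := ℝ) contDiff_id
  have h4 := LocallyLipschitz.comp h1 (h3.prodMk h2.locallyLipschitz)
  exact h4

end HamData

/-- The equivariant functional `∫ ψ(x(t)) e^{-2πit} dt` on loops. -/
def ell (ψ : (Fin 2 → ℂ) → ℂ) (N : ℕ) (y : Idx N → ℂ) : ℂ := fc (fun t => ψ (loopN N y t)) 1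

lemma ell_lip (ψ : (Fin 2 → ℂ) → ℂ) (M : ℝ) (hM : 0 ≤ M) (hψ : ∀ z w, ‖ψ z - ψ w‖ ≤ M * ‖z - w‖)
    (N : ℕ) : LocallyLipschitz (ell ψ N) := by
  have hc : Continuous ψ := (LipschitzWith.of_dist_le' (K := M) fun z w => by
    rw [dist_eq_norm, dist_eq_norm]; exact hψ z w).continuous
  have h2 : LipschitzWith (Real.toNNReal (M * Fintype.card (IdxZ N))) (ell ψ N) := by
    refine LipschitzWith.of_dist_le' fun y z => ?_
    rw [dist_eq_norm, dist_eq_norm]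
    refine norm_fc_sub_le _ _ (by fun_prop) (by fun_prop) _ _ fun t => ?_
    have h3 := hψ (loopN N y t) (loopN N z t)
    rw [← loopN_sub] at h3
    rw [mul_assoc]
    exact h3.trans (mul_le_mul_of_nonneg_left (norm_loopN_le _ _ _) hM)
  exact h2.locallyLipschitz

lemma ell_equiv (ψ : (Fin 2 → ℂ) → ℂ) (N : ℕ) (y : Idx N → ℂ) (u : ℂ) (hu : ‖u‖ = 1) :
    ell ψ N (fun j => u ^ wtN N j * y j) = u * ell ψ N y := by
  obtain ⟨s, rfl⟩ := exists_ex_eq u hu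
  simp only [ell, loopN_equiv]
  rw [fc_shift (fun t => ψ (loopN N y t)) (fun t => by rw [loopN_periodic])]

/-! ### Linking estimates for the action functional -/

/-- The Fourier coefficients of the loop with coordinates `y`, extended by zero. -/
def coef (N : ℕ) (y : Idx N → ℂ) (i : Fin 2) (k : ℤ) : ℂ :=
  if h : k ∈ Finset.Icc (-(N : ℤ)) N then (sc k : ℂ) * y (i, ⟨k, h⟩) else 0

lemma coef_val (N : ℕ) (y : Idx N → ℂ) (i : Fin 2) (k : IdxZ N) :
    coef N y i k = (sc k : ℂ) * y (i, k) := by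
  simp [coef, k.2]

lemma coef_norm_sq (N : ℕ) (y : Idx N → ℂ) (i : Fin 2) (k : IdxZ N) :
    ‖coef N y i k‖ ^ 2 = sc k ^ 2 * ‖y (i, k)‖ ^ 2 := by
  rw [coef_val, norm_mul, mul_pow, Complex.norm_real, Real.norm_eq_abs, sq_abs]

lemma loopN_eq_trig (N : ℕ) (y : Idx N → ℂ) (t : ℝ) (i : Fin 2) :
    loopN N y t i = trig (Finset.Icc (-(N : ℤ)) N) id (coef N y i) t := by
  simp only [loopN, trig, id]
  rw [← Finset.sum_coe_sort (Finset.Icc (-(N : ℤ)) N)]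
  exact Finset.sum_congr rfl fun k _ => by rw [coef_val]

namespace HamData

variable (D : HamData)

@[fun_prop]
lemma Hcont : Continuous D.H := by
  have := D.Kcont
  unfold H; fun_prop

lemma A_eq (N : ℕ) (y : Idx N → ℂ) :
    D.A N y = π * ∑ j : Idx N, ((j.2 : ℤ) : ℝ) * (sc j.2 ^ 2 * ‖y j‖ ^ 2) -
      ∫ t in (0:ℝ)..1, D.H (loopN N y t) := by
  have hK := D.Kcont
  have h1 : ∫ t in (0:ℝ)..1, D.H (loopN N y t) =
      π * (∑ j : Idx N, D.σ j.1 * (sc j.2 ^ 2 * ‖y j‖ ^ 2)) + D.c₀ +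
        ∫ t in (0:ℝ)..1, D.K (loopN N y t) := by
    unfold H
    rw [intervalIntegral.integral_add, intervalIntegral.integral_add,
      intervalIntegral.integral_const_mul, intervalIntegral.integral_finsetSum]
    · simp only [intervalIntegral.integral_const_mul, integral_loopN]
      rw [Fintype.sum_prod_type]
      simp [Finset.mul_sum]
    · intro i _; exact (by fun_prop : Continuous _).intervalIntegrable _ _
    all_goals exact (by fun_prop : Continuous _).intervalIntegrable _ _
  rw [h1, A]
  have h2 : ∑ j : Idx N, (((j.2 : ℤ) : ℝ) - D.σ j.1) * sc j.2 ^ 2 * ‖y j‖ ^ 2 =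
      ∑ j : Idx N, ((j.2 : ℤ) : ℝ) * (sc j.2 ^ 2 * ‖y j‖ ^ 2) -
      ∑ j : Idx N, D.σ j.1 * (sc j.2 ^ 2 * ‖y j‖ ^ 2) := by
    rw [← Finset.sum_sub_distrib]
    exact Finset.sum_congr rfl fun j _ => by ring
  rw [h2]; ring

lemma A_le_zero (h0 : ∀ z, 0 ≤ D.H z) (N : ℕ) (y : Idx N → ℂ)
    (hy : ∀ j, 0 < wtN N j → y j = 0) : D.A N y ≤ 0 := by
  rw [A_eq]
  have h1 : 0 ≤ ∫ t in (0:ℝ)..1, D.H (loopN N y t) :=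
    intervalIntegral.integral_nonneg zero_le_one fun t _ => h0 _
  have h2 : ∑ j : Idx N, ((j.2 : ℤ) : ℝ) * (sc j.2 ^ 2 * ‖y j‖ ^ 2) ≤ 0 := by
    refine Finset.sum_nonpos fun j _ => ?_
    by_cases hj : 0 < wtN N j
    · simp [hy j hj]
    · have : ((j.2 : ℤ) : ℝ) ≤ 0 := by exact_mod_cast not_lt.1 hj
      exact mul_nonpos_of_nonpos_of_nonneg this (by positivity)
  nlinarith [Real.pi_pos]

lemma A_le_sub (M : ℝ) (h0 : ∀ z, π * ∑ i, D.σ i * ‖z i‖ ^ 2 - M ≤ D.H z) (ε : ℝ)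
    (N : ℕ) (y : Idx N → ℂ)
    (hy : ∀ j, y j ≠ 0 → ((j.2 : ℤ) : ℝ) - D.σ j.1 ≤ -ε * (1 + |((j.2 : ℤ) : ℝ)|)) :
    D.A N y ≤ M - π * ε * nsq y := by
  have h1 : -D.c₀ - ∫ t in (0:ℝ)..1, D.K (loopN N y t) ≤ M := by
    have hK := D.Kcont
    have : ∫ t in (0:ℝ)..1, (-M - D.c₀) ≤ ∫ t in (0:ℝ)..1, D.K (loopN N y t) := by
      refine intervalIntegral.integral_mono_on zero_le_one (by simp) ?_ ?_
      · exact (by fun_prop : Continuous _).intervalIntegrable _ _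
      · intro t _
        have := h0 (loopN N y t)
        unfold H at this; linarith
    simp at this; linarith
  have h2 : ∑ j : Idx N, (((j.2 : ℤ) : ℝ) - D.σ j.1) * sc j.2 ^ 2 * ‖y j‖ ^ 2 ≤ -ε * nsq y := by
    rw [nsq, Finset.mul_sum]
    refine Finset.sum_le_sum fun j _ => ?_
    by_cases hj : y j = 0
    · simp [hj]
    · refine mul_le_mul_of_nonneg_right ?_ (by positivity)
      calc _ ≤ (-ε * (1 + |((j.2 : ℤ) : ℝ)|)) * sc j.2 ^ 2 :=
            mul_le_mul_of_nonneg_right (hy j hj) (by positivity)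
        _ = -ε * (sc j.2 ^ 2 * (1 + |((j.2 : ℤ) : ℝ)|)) := by ring
        _ = -ε := by rw [sc_sq_mul, mul_one]
  unfold A
  nlinarith [Real.pi_pos, mul_le_mul_of_nonneg_left h2 Real.pi_pos.le]

/-- The coordinates of the constant loop at `p`. -/
def pv (N : ℕ) (p : Fin 2 → ℂ) (j : Idx N) : ℂ := if wtN N j = 0 then p j.1 else 0

/-- On a small sphere in the positive-frequency space centred at a constant loop at which the
Hamiltonian vanishes to fourth order, the action is bounded below, uniformly in `N`. -/
lemma A_ge (Cq : ℝ) (hCq : 0 ≤ Cq) (p : Fin 2 → ℂ)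
    (h2 : ∀ z, D.H z ≤ Cq * (∑ i, ‖z i - p i‖ ^ 2) ^ 2) (N : ℕ) (x : Idx N → ℂ) (r0 : ℝ)
    (hx : ∀ j, wtN N j ≤ 0 → x j = pv N p j) (hr : posSq (wtN N) x = r0 ^ 2) :
    π / 2 * r0 ^ 2 - 2 * Cq * r0 ^ 4 ≤ D.A N x := by
  classical
  set S : Finset ℤ := Finset.Icc 1 N with hS
  have hSs : S ⊆ Finset.Icc (-(N : ℤ)) N := Finset.Icc_subset_Icc (by omega) le_rfl
  have hcoef : ∀ i, ∀ k ≤ 0, coef N x i k = if k = 0 then p i else 0 := by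
    intro i k hk
    by_cases h : k ∈ Finset.Icc (-(N : ℤ)) N
    · have h1 := coef_val N x i ⟨k, h⟩
      simp only at h1
      rw [h1, hx _ (by exact hk), pv, wtN]
      simp only
      split_ifs with h0
      · simp [h0, sc]
      · simp
    · have : k ≠ 0 := by
        rintro rfl
        exact h (by simp)
      simp [coef, h, this]
  have hloop : ∀ t i, loopN N x t i - p i = trig S id (coef N x i) t := by
    intro t i
    rw [loopN_eq_trig, sub_eq_iff_eq_add, trig, trig, ← Finset.sum_sdiff hSs, add_comm]
    congr 1
    rw [Finset.sum_eq_single (0 : ℤ)]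
    · simp [hcoef, ex_zero]
    · intro k hk hk0
      have : k ≤ 0 := by
        simp only [hS, Finset.mem_sdiff, Finset.mem_Icc] at hk
        omega
      rw [hcoef i k this, if_neg hk0, zero_mul]
    · intro h; exact absurd (by simp [hS]) h
  set Q : Fin 2 → ℝ := fun i => ∑ k ∈ S, (k : ℝ) * ‖coef N x i k‖ ^ 2 with hQ
  have hQ0 : ∀ i, 0 ≤ Q i := fun i => Finset.sum_nonneg fun k hk => by
    have : (1 : ℝ) ≤ k := by exact_mod_cast (Finset.mem_Icc.1 hk).1
    positivity
  have hquart : ∀ i, ∫ t in (0:ℝ)..1, ‖loopN N x t i - p i‖ ^ 4 ≤ Q i ^ 2 := by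
    intro i
    simp only [hloop]
    exact quartic_trig S (fun k hk => (Finset.mem_Icc.1 hk).1) _
  -- the quadratic part
  have hsum : ∀ i, ∑ k : IdxZ N, (((k : ℤ) : ℝ)) * (sc k ^ 2 * ‖x (i, k)‖ ^ 2) = Q i := by
    intro i
    simp only [← coef_norm_sq]
    rw [Finset.sum_coe_sort (Finset.Icc (-(N : ℤ)) N)
      (fun k => (k : ℝ) * ‖coef N x i k‖ ^ 2)]
    symm
    refine Finset.sum_subset hSs fun k hk hkS => ?_
    have : k ≤ 0 := by
      simp only [hS, Finset.mem_Icc] at hk hkS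
      omega
    rw [hcoef i k this]
    split_ifs with h0
    · simp [h0]
    · simp
  have hsum2 : ∑ j : Idx N, ((j.2 : ℤ) : ℝ) * (sc j.2 ^ 2 * ‖x j‖ ^ 2) = Q 0 + Q 1 := by
    rw [Fintype.sum_prod_type]
    simp only [hsum, Fin.sum_univ_two]
  have hterm : ∀ j : Idx N, (if 0 < wtN N j then ‖x j‖ ^ 2 else 0) / 2 ≤
      ((j.2 : ℤ) : ℝ) * (sc j.2 ^ 2 * ‖x j‖ ^ 2) ∧
      ((j.2 : ℤ) : ℝ) * (sc j.2 ^ 2 * ‖x j‖ ^ 2) ≤ if 0 < wtN N j then ‖x j‖ ^ 2 else 0 := by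
    intro j
    split_ifs with hj
    · have h1 : (1:ℝ) ≤ ((j.2 : ℤ) : ℝ) := by exact_mod_cast hj
      have h3 := sc_sq_mul j.2
      rw [abs_of_pos (by linarith)] at h3
      have h4 : (1:ℝ) / 2 ≤ ((j.2 : ℤ) : ℝ) * sc j.2 ^ 2 := by nlinarith [sc_pos (j.2 : ℤ)]
      have h5 : ((j.2 : ℤ) : ℝ) * sc j.2 ^ 2 ≤ 1 := by nlinarith [sc_pos (j.2 : ℤ)]
      have h6 : 0 ≤ ‖x j‖ ^ 2 := by positivity
      rw [← mul_assoc]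
      constructor
      · nlinarith [mul_le_mul_of_nonneg_right h4 h6]
      · nlinarith [mul_le_mul_of_nonneg_right h5 h6]
    · have hz : ((j.2 : ℤ) : ℝ) * (sc j.2 ^ 2 * ‖x j‖ ^ 2) = 0 := by
        rw [hx j (not_lt.1 hj), pv]
        split_ifs with h0
        · have : ((j.2 : ℤ) : ℝ) = 0 := by exact_mod_cast h0
          rw [this, zero_mul]
        · simp
      rw [hz]; simp
  have hlow : r0 ^ 2 / 2 ≤ Q 0 + Q 1 := by
    rw [← hr, ← hsum2, posSq, Finset.sum_div]
    exact Finset.sum_le_sum fun j _ => (hterm j).1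
  have hup : Q 0 + Q 1 ≤ r0 ^ 2 := by
    rw [← hr, ← hsum2, posSq]
    exact Finset.sum_le_sum fun j _ => (hterm j).2
  have hH : ∫ t in (0:ℝ)..1, D.H (loopN N x t) ≤ 2 * Cq * r0 ^ 4 := by
    have h3 : ∫ t in (0:ℝ)..1, D.H (loopN N x t) ≤
        ∫ t in (0:ℝ)..1, 2 * Cq * (‖loopN N x t 0 - p 0‖ ^ 4 + ‖loopN N x t 1 - p 1‖ ^ 4) := by
      refine intervalIntegral.integral_mono_on zero_le_one ?_ ?_ ?_
      · exact (by fun_prop : Continuous _).intervalIntegrable _ _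
      · exact (by fun_prop : Continuous _).intervalIntegrable _ _
      · intro t _
        refine (h2 _).trans ?_
        rw [Fin.sum_univ_two]
        have : (‖loopN N x t 0 - p 0‖ ^ 2 + ‖loopN N x t 1 - p 1‖ ^ 2) ^ 2 ≤
            2 * (‖loopN N x t 0 - p 0‖ ^ 4 + ‖loopN N x t 1 - p 1‖ ^ 4) := by
          nlinarith [sq_nonneg (‖loopN N x t 0 - p 0‖ ^ 2 - ‖loopN N x t 1 - p 1‖ ^ 2)]
        nlinarith [mul_le_mul_of_nonneg_left this hCq]
    refine h3.trans ?_
    rw [intervalIntegral.integral_const_mul, intervalIntegral.integral_add]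
    · have : (Q 0) ^ 2 + (Q 1) ^ 2 ≤ r0 ^ 4 := by
        nlinarith [hQ0 0, hQ0 1, mul_nonneg (hQ0 0) (hQ0 1), sq_nonneg r0]
      have h4 := hquart 0
      have h5 := hquart 1
      refine mul_le_mul_of_nonneg_left ?_ (by positivity)
      linarith
    all_goals exact (by fun_prop : Continuous _).intervalIntegrable _ _
  rw [A_eq, hsum2]
  nlinarith [Real.pi_pos, mul_le_mul_of_nonneg_left hlow Real.pi_pos.le]

lemma exists_radius (Cq : ℝ) (hCq : 0 ≤ Cq) :
    ∃ r0 : ℝ, 0 < r0 ∧ 0 < π / 2 * r0 ^ 2 - 2 * Cq * r0 ^ 4 := by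
  refine ⟨(√(2 * Cq + 1))⁻¹, by positivity, ?_⟩
  set s := (√(2 * Cq + 1))⁻¹ with hs
  have hs2 : s ^ 2 * (2 * Cq + 1) = 1 := by
    rw [hs, inv_pow, Real.sq_sqrt (by positivity), inv_mul_cancel₀ (by positivity)]
  have h0 : 0 < s := by rw [hs]; positivity
  have h1 : 0 < s ^ 2 := by positivity
  have h3 : 2 * Cq * s ^ 4 = s ^ 2 * (1 - s ^ 2) := by
    have : s ^ 4 = s ^ 2 * s ^ 2 := by ring
    rw [this]
    have : 2 * Cq * s ^ 2 = 1 - s ^ 2 := by linarith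
    linear_combination s ^ 2 * this
  rw [h3]
  nlinarith [Real.pi_gt_three, mul_pos h1 h1]

variable {D}

lemma support_bound {ε : ℝ} (hε1 : ε ≤ 1) (hεσ : ∀ i, ε ≤ D.σ i) {N : ℕ} (j : Idx N)
    (hj : wtN N j ≤ 0) :
    ((j.2 : ℤ) : ℝ) - D.σ j.1 ≤ -ε * (1 + |((j.2 : ℤ) : ℝ)|) := by
  have h1 : ((j.2 : ℤ) : ℝ) ≤ 0 := by exact_mod_cast hj
  rw [abs_of_nonpos h1]
  nlinarith [hεσ j.1]

lemma norm_large {M ε : ℝ} (hM : 0 ≤ M) (hε : 0 < ε) {N : ℕ} (x : Idx N → ℂ)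
    (hx : √(M / (π * ε)) ≤ ‖x‖) : M - π * ε * nsq x ≤ 0 := by
  have h1 := norm_sq_le_nsq x
  have h2 : M / (π * ε) ≤ ‖x‖ ^ 2 := by
    rw [← Real.sq_sqrt (show 0 ≤ M / (π * ε) by positivity)]
    gcongr
  have h3 : M ≤ ‖x‖ ^ 2 * (π * ε) := by rwa [div_le_iff₀ (by positivity)] at h2
  have : 0 < π * ε := by positivity
  nlinarith

/-- The frequency-one index of component `i`. -/
def idx1 (N : ℕ) (hN : 1 ≤ N) (i : Fin 2) : Idx N :=
  (i, ⟨1, Finset.mem_Icc.2 ⟨by omega, by exact_mod_cast hN⟩⟩)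

theorem almostA (M : ℝ) (hM : 0 ≤ M) (Cq : ℝ) (hCq : 0 ≤ Cq) (p : Fin 2 → ℂ)
    (h0 : ∀ z, 0 ≤ D.H z) (h1 : ∀ z, π * ∑ i, D.σ i * ‖z i‖ ^ 2 - M ≤ D.H z)
    (h2 : ∀ z, D.H z ≤ Cq * (∑ i, ‖z i - p i‖ ^ 2) ^ 2) (hσ0 : 1 < D.σ 0) (hσ1 : 0 < D.σ 1) :
    ∃ α > 0, ∀ N ≥ 1, ∀ ν > 0, ∃ y : Idx N → ℂ,
      nsq (D.gr N y) ≤ ν ∧ α ≤ D.A N y ∧ D.A N y ≤ M := by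
  obtain ⟨r0, hr0, hα⟩ := exists_radius Cq hCq
  refine ⟨_, hα, fun N hN ν hν => ?_⟩
  set ε : ℝ := min 1 (min (D.σ 1) ((D.σ 0 - 1) / 2)) with hεd
  have hε : 0 < ε := by
    refine lt_min one_pos (lt_min hσ1 (by linarith))
  have e1 : ε ≤ 1 := min_le_left _ _
  have e2 : ε ≤ D.σ 1 := (min_le_right _ _).trans (min_le_left _ _)
  have e3 : ε ≤ (D.σ 0 - 1) / 2 := (min_le_right _ _).trans (min_le_right _ _)
  have e4 : ∀ i, ε ≤ D.σ i := by
    intro i; fin_cases i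
    · change ε ≤ D.σ 0; linarith
    · exact e2
  have hb : ∀ x : Idx N → ℂ, (∀ j, 0 < wtN N j → j ≠ idx1 N hN 0 → x j = 0) →
      D.A N x ≤ M - π * ε * nsq x := by
    intro x hx
    refine D.A_le_sub M h1 ε N x fun j hj => ?_
    by_cases hj0 : wtN N j ≤ 0
    · exact support_bound e1 e4 j hj0
    · have : j = idx1 N hN 0 := by
        by_contra h; exact hj (hx j (not_le.1 hj0) h)
      subst this
      simp only [idx1, Int.cast_one, abs_one]
      linarith
  refine minimaxA (wtN N) (idx1 N hN 0) (by simp [wtN, idx1]) (D.A N) (D.gr N)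
    (D.gr_lip N).continuous D.L' D.L'_pos (D.A_descent N) (pv N p) r0 hr0 _ hα M
    (√(M / (π * ε))) ?_ ?_ ?_ ν hν
  · intro x hx
    have := hb x hx
    have := mul_nonneg (mul_pos Real.pi_pos hε).le (nsq_nonneg x)
    linarith
  · rintro x hx (h | h)
    · refine D.A_le_zero h0 N x fun j hj => ?_
      by_cases hje : j = idx1 N hN 0
      · rw [hje, h]
      · exact hx j hj hje
    · exact (hb x hx).trans (norm_large hM hε x h)
  · intro x hx hr
    exact D.A_ge Cq hCq p h2 N x r0 hx hr

theorem almostB (M : ℝ) (hM : 0 ≤ M) (Cq : ℝ) (hCq : 0 ≤ Cq) (p : Fin 2 → ℂ)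
    (h0 : ∀ z, 0 ≤ D.H z) (h1 : ∀ z, π * ∑ i, D.σ i * ‖z i‖ ^ 2 - M ≤ D.H z)
    (h2 : ∀ z, D.H z ≤ Cq * (∑ i, ‖z i - p i‖ ^ 2) ^ 2) (hσ : ∀ i, 1 < D.σ i)
    (ψ : (Fin 2 → ℂ) → ℂ) (Mψ : ℝ) (hMψ : 0 ≤ Mψ) (hψ : ∀ z w, ‖ψ z - ψ w‖ ≤ Mψ * ‖z - w‖) :
    ∃ α > 0, ∀ N ≥ 1, ∀ (a₀ ν₀ ν : ℝ), 0 < ν₀ → 0 < ν →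
      (∀ y, α ≤ D.A N y → D.A N y ≤ M → nsq (D.gr N y) ≤ ν₀ → ell ψ N y ≠ 0) →
      (∀ y, α ≤ D.A N y → D.A N y ≤ M → nsq (D.gr N y) ≤ ν →
        |D.A N y - a₀| ≤ ν₀ / (8 * D.L')) → False := by
  obtain ⟨r0, hr0, hα⟩ := exists_radius Cq hCq
  refine ⟨_, hα, fun N hN a₀ ν₀ ν hν₀ hν k1 k2 => ?_⟩
  set ε : ℝ := min 1 (min ((D.σ 1 - 1) / 2) ((D.σ 0 - 1) / 2)) with hεd
  have hs0 := hσ 0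
  have hs1 := hσ 1
  have hε : 0 < ε := by
    refine lt_min one_pos (lt_min (by linarith) (by linarith))
  have e1 : ε ≤ 1 := min_le_left _ _
  have e2 : ε ≤ (D.σ 1 - 1) / 2 := (min_le_right _ _).trans (min_le_left _ _)
  have e3 : ε ≤ (D.σ 0 - 1) / 2 := (min_le_right _ _).trans (min_le_right _ _)
  have e4 : ∀ i, ε ≤ D.σ i := by
    intro i; fin_cases i
    · change ε ≤ D.σ 0; linarith
    · change ε ≤ D.σ 1; linarith
  have hb : ∀ x : Idx N → ℂ,
      (∀ j, 0 < wtN N j → j ≠ idx1 N hN 0 → j ≠ idx1 N hN 1 → x j = 0) →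
      D.A N x ≤ M - π * ε * nsq x := by
    intro x hx
    refine D.A_le_sub M h1 ε N x fun j hj => ?_
    by_cases hj0 : wtN N j ≤ 0
    · exact support_bound e1 e4 j hj0
    · have : j = idx1 N hN 0 ∨ j = idx1 N hN 1 := by
        by_contra! h; exact hj (hx j (not_le.1 hj0) h.1 h.2)
      rcases this with rfl | rfl
      · simp only [idx1, Int.cast_one, abs_one]
        linarith
      · simp only [idx1, Int.cast_one, abs_one]
        linarith
  refine minimaxB (wtN N) (idx1 N hN 0) (idx1 N hN 1) (by simp [idx1]) rfl rfl
    (D.A N) (D.gr N) (D.gr_lip N) D.L' D.L'_pos (D.A_descent N) (D.gr_equiv N)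
    (ell ψ N) (ell_lip ψ Mψ hMψ hψ N) (ell_equiv ψ N) (pv N p) ?_ r0 hr0 _ hα M
    (√(M / (π * ε))) ?_ ?_ ?_ a₀ ν₀ ν hν₀ hν k1 k2
  · intro j hj
    by_contra h
    exact hj (by simp [pv, h])
  · intro x hx
    have := hb x hx
    have := mul_nonneg (mul_pos Real.pi_pos hε).le (nsq_nonneg x)
    linarith
  · rintro x hx (h | h)
    · refine D.A_le_zero h0 N x fun j hj => ?_
      by_cases hj1 : j = idx1 N hN 0
      · rw [hj1, h.1]
      · by_cases hj2 : j = idx1 N hN 1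
        · rw [hj2, h.2]
        · exact hx j hj hj1 hj2
    · exact (hb x hx).trans (norm_large hM hε x h)
  · intro x hx hr
    exact D.A_ge Cq hCq p h2 N x r0 hx hr

end HamData

/-! ### Compactness of almost critical points -/

lemma nonres (σ : ℝ) (h : ∀ k : ℤ, (k : ℝ) ≠ σ) :
    ∃ c > 0, ∀ k : ℤ, c * (1 + |(k : ℝ)|) ≤ |(k : ℝ) - σ| := by
  set d := |σ - round σ| with hd
  have hd0 : 0 < d := by
    rw [hd, abs_pos, sub_ne_zero]; exact fun e => h _ e.symm
  refine ⟨(1 + (1 + |σ|) / d)⁻¹, by positivity, fun k => ?_⟩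
  have h1 : d ≤ |(k : ℝ) - σ| := by
    rw [abs_sub_comm]; exact round_le σ k
  have h2 : |(k : ℝ)| ≤ |(k : ℝ) - σ| + |σ| := by
    have := abs_add_le ((k : ℝ) - σ) σ; simpa using this
  rw [inv_mul_le_iff₀ (by positivity), add_mul, one_mul]
  have h3 : 1 + |σ| ≤ (1 + |σ|) / d * |(k : ℝ) - σ| := by
    rw [div_mul_eq_mul_div, le_div_iff₀ hd0]
    gcongr
  linarith

/-- Convergence in `L²` implies convergence of all Fourier coefficients of Lipschitz images. -/
lemma fc_tendsto (u : ℕ → ℝ → Fin 2 → ℂ) (x : ℝ → Fin 2 → ℂ) (hu : ∀ n, Continuous (u n))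
    (hx : Continuous x)
    (hlim : ∀ i, Filter.Tendsto (fun n => ∫ t in (0:ℝ)..1, ‖u n t i - x t i‖ ^ 2)
      Filter.atTop (nhds 0))
    (F : (Fin 2 → ℂ) → ℂ) (M : ℝ) (hM : 0 ≤ M) (hF : ∀ z w, ‖F z - F w‖ ≤ M * ‖z - w‖) (k : ℤ) :
    Filter.Tendsto (fun n => fc (fun t => F (u n t)) k) Filter.atTop
      (nhds (fc (fun t => F (x t)) k)) := by
  have hFc : Continuous F := by
    have : LipschitzWith (Real.toNNReal M) F := by
      refine LipschitzWith.of_dist_le' fun z w => ?_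
      rw [dist_eq_norm, dist_eq_norm]; exact hF z w
    exact this.continuous
  have hb : ∀ n, ‖fc (fun t => F (u n t)) k - fc (fun t => F (x t)) k‖ ≤
      M * ∑ i, √(∫ t in (0:ℝ)..1, ‖u n t i - x t i‖ ^ 2) := by
    intro n
    have hun := hu n
    unfold fc
    rw [← intervalIntegral.integral_sub ((by fun_prop : Continuous _).intervalIntegrable _ _)
      ((by fun_prop : Continuous _).intervalIntegrable _ _)]
    have h1 : ‖∫ t in (0:ℝ)..1, (F (u n t) * ex (-k) t - F (x t) * ex (-k) t)‖ ≤
        ∫ t in (0:ℝ)..1, M * ∑ i, ‖u n t i - x t i‖ := by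
      refine intervalIntegral.norm_integral_le_of_norm_le zero_le_one ?_
        ((by fun_prop : Continuous _).intervalIntegrable _ _)
      refine Filter.Eventually.of_forall fun t _ => ?_
      rw [← sub_mul, norm_mul, norm_ex, mul_one]
      refine (hF _ _).trans (mul_le_mul_of_nonneg_left ?_ hM)
      refine (pi_norm_le_iff_of_nonneg (by positivity)).2 fun i => ?_
      exact Finset.single_le_sum (f := fun i => ‖u n t i - x t i‖) (fun i _ => norm_nonneg _)
        (Finset.mem_univ i)
    refine h1.trans ?_
    rw [intervalIntegral.integral_const_mul, intervalIntegral.integral_finsetSum]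
    · refine mul_le_mul_of_nonneg_left (Finset.sum_le_sum fun i _ => ?_) hM
      refine Real.le_sqrt_of_sq_le ?_
      exact integral_sq_le _ (by fun_prop)
    · intro i _; exact (by fun_prop : Continuous _).intervalIntegrable _ _
  rw [tendsto_iff_norm_sub_tendsto_zero]
  refine squeeze_zero (fun n => norm_nonneg _) hb ?_
  have h2 : Filter.Tendsto (fun n => M * ∑ i, √(∫ t in (0:ℝ)..1, ‖u n t i - x t i‖ ^ 2))
      Filter.atTop (nhds (M * ∑ i : Fin 2, √0)) := by
    refine Filter.Tendsto.const_mul _ (tendsto_finsetSum _ fun i _ => ?_)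
    exact (Real.continuous_sqrt.tendsto _).comp (hlim i)
  simpa using h2

lemma summable_inv_sq : Summable fun k : ℤ => (1 / (1 + |(k : ℝ)|)) ^ 2 := by
  have h := (Real.summable_one_div_int_pow (p := 2)).2 (by norm_num)
  refine Summable.of_norm_bounded_eventually (g := fun k : ℤ => 1 / (k : ℝ) ^ 2) h ?_
  have : ({0}ᶜ : Set ℤ) ∈ Filter.cofinite :=
    (Set.finite_singleton 0).compl_mem_cofinite
  filter_upwards [this] with k hk
  have hk' : (k : ℝ) ≠ 0 := by simpa using hk
  rw [Real.norm_of_nonneg (by positivity), div_pow, one_pow, ← sq_abs (k : ℝ)]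
  have := abs_pos.2 hk'
  gcongr
  linarith

lemma coef_eq_zero {N : ℕ} (y : Idx N → ℂ) (i : Fin 2) {k : ℤ}
    (hk : k ∉ Finset.Icc (-(N : ℤ)) N) : coef N y i k = 0 := by simp [coef, hk]

lemma summable_coef (N : ℕ) (y : Idx N → ℂ) (i : Fin 2) : Summable fun k => ‖coef N y i k‖ :=
  summable_of_ne_finset_zero (s := Finset.Icc (-(N : ℤ)) N) fun k hk => by
    rw [coef_eq_zero y i hk, norm_zero]

lemma loopN_eq_fseries (N : ℕ) (y : Idx N → ℂ) (t : ℝ) (i : Fin 2) :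
    loopN N y t i = fseries (coef N y i) t := by
  rw [loopN_eq_trig, fseries, trig]
  rw [tsum_eq_sum (s := Finset.Icc (-(N : ℤ)) N)]
  · rfl
  · intro k hk; rw [coef_eq_zero y i hk, zero_mul]

namespace HamData

variable (D : HamData)

/-- The Fourier coefficients of the gradient along a Galerkin loop. -/
def beta (N : ℕ) (y : Idx N → ℂ) (i : Fin 2) (k : ℤ) : ℂ := fc (fun t => D.B (loopN N y t) i) k

lemma norm_fc_le (f : ℝ → ℂ) (hf : Continuous f) (k : ℤ) (M : ℝ) (h : ∀ t, ‖f t‖ ≤ M) :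
    ‖fc f k‖ ≤ M := by
  have := norm_fc_sub_le f (fun _ => 0) hf continuous_const k M (by simpa using h)
  simpa [fc] using this

lemma norm_beta_le (N : ℕ) (y : Idx N → ℂ) (i : Fin 2) (k : ℤ) : ‖D.beta N y i k‖ ≤ D.C :=
  norm_fc_le _ (by fun_prop) k _ fun t => D.Bbd _ i

lemma beta_bessel (N : ℕ) (y : Idx N → ℂ) (i : Fin 2) (S : Finset ℤ) :
    ∑ k ∈ S, ‖D.beta N y i k‖ ^ 2 ≤ D.C ^ 2 := by
  have h := bessel S id (injOn_id _) (fun t => D.B (loopN N y t) i) (by fun_prop)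
  refine h.trans ?_
  have : ∫ t in (0:ℝ)..1, ‖D.B (loopN N y t) i‖ ^ 2 ≤ ∫ t in (0:ℝ)..1, D.C ^ 2 := by
    refine intervalIntegral.integral_mono_on zero_le_one
      ((by fun_prop : Continuous _).intervalIntegrable _ _)
      ((by fun_prop : Continuous _).intervalIntegrable _ _) fun t _ => ?_
    have := D.Bbd (loopN N y t) i
    gcongr
  simpa using this

/-- The gradient equation for a Fourier coefficient. -/
lemma coef_eq {N : ℕ} (y : Idx N → ℂ) (j : Idx N) (hj : (((j.2 : ℤ) : ℝ)) ≠ D.σ j.1) :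
    coef N y j.1 j.2 = D.beta N y j.1 j.2 / ((2 * π * (((j.2 : ℤ) : ℝ) - D.σ j.1) : ℝ) : ℂ) +
      D.gr N y j / ((sc j.2 * (2 * π * (((j.2 : ℤ) : ℝ) - D.σ j.1)) : ℝ) : ℂ) := by
  have h1 : ((2 * π * (((j.2 : ℤ) : ℝ) - D.σ j.1) : ℝ) : ℂ) ≠ 0 := by
    rw [Complex.ofReal_ne_zero]
    exact mul_ne_zero (by positivity) (sub_ne_zero.2 hj)
  have h2 : (sc j.2 : ℂ) ≠ 0 := by
    rw [Complex.ofReal_ne_zero]; exact (sc_pos _).ne'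
  have h3 := coef_val N y j.1 j.2
  rw [Prod.mk.eta] at h3
  rw [h3, beta, gr, Complex.ofReal_mul (sc j.2), div_add_div _ _ h1 (mul_ne_zero h2 h1),
    eq_div_iff (mul_ne_zero h1 (mul_ne_zero h2 h1))]
  push_cast
  ring

lemma half_norm_sq (u v : ℂ) : ‖u + v‖ ^ 2 ≤ 2 * ‖u‖ ^ 2 + 2 * ‖v‖ ^ 2 := by
  have := norm_add_le u v
  nlinarith [norm_nonneg (u + v), sq_nonneg (‖u‖ - ‖v‖), norm_nonneg u, norm_nonneg v]

/-- The action of a loop, in the form it takes on critical points. -/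
def act (x : ℝ → Fin 2 → ℂ) : ℝ :=
  (∫ t in (0:ℝ)..1, (1 / 2 * ∑ i, ((starRingEnd ℂ) (D.B (x t) i) * x t i).re - D.K (x t))) - D.c₀

/-- The action in terms of the gradient. -/
lemma A_eq_act (N : ℕ) (y : Idx N → ℂ) :
    D.A N y = 1 / 2 * ip (D.gr N y) y + D.act (loopN N y) := by
  have hB : ∀ i, ∫ t in (0:ℝ)..1, ((starRingEnd ℂ) (D.B (loopN N y t) i) * loopN N y t i).re =
      ∑ k : IdxZ N, ((starRingEnd ℂ) ((sc k : ℂ) * fc (fun t => D.B (loopN N y t) i) k) *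
        y (i, k)).re := by
    intro i
    have h1 := integral_mul_conj_trig Finset.univ (fun k : IdxZ N => (k : ℤ))
      (fun k => (sc k : ℂ) * y (i, k)) (fun t => D.B (loopN N y t) i) (by fun_prop)
    have h2 := intervalIntegral.intervalIntegral_re (𝕜 := ℂ) (μ := volume) (a := 0) (b := 1)
        (f := fun t => D.B (loopN N y t) i * (starRingEnd ℂ) (loopN N y t i))
        ((by fun_prop : Continuous _).intervalIntegrable _ _)
    simp only [RCLike.re_to_complex] at h2
    have h3 : ∀ t, ((starRingEnd ℂ) (D.B (loopN N y t) i) * loopN N y t i).re =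
        (D.B (loopN N y t) i * (starRingEnd ℂ) (loopN N y t i)).re := by
      intro t; simp [Complex.mul_re]
    simp only [h3]
    rw [h2]
    have h4 : ∀ t, (starRingEnd ℂ) (loopN N y t i) = (starRingEnd ℂ)
      (trig Finset.univ (fun k : IdxZ N => (k : ℤ)) (fun k => (sc k : ℂ) * y (i, k)) t) :=
      fun t => rfl
    simp only [h4]
    rw [h1, Complex.re_sum]
    refine Finset.sum_congr rfl fun k _ => ?_
    rw [← Complex.conj_re]
    simp only [map_mul, Complex.conj_conj, Complex.conj_ofReal]
    congr 1; ring
  have hip : ip (D.gr N y) y = 2 * π * ∑ j : Idx N, (((j.2 : ℤ) : ℝ) - D.σ j.1) * sc j.2 ^ 2 *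
        ‖y j‖ ^ 2 -
      ∑ j : Idx N, ((starRingEnd ℂ) ((sc j.2 : ℂ) * fc (fun t => D.B (loopN N y t) j.1) j.2) *
        y j).re := by
    rw [ip, Finset.mul_sum, ← Finset.sum_sub_distrib]
    refine Finset.sum_congr rfl fun j _ => ?_
    rw [gr, map_sub, sub_mul, Complex.sub_re]
    congr 1
    rw [map_mul, Complex.conj_ofReal, mul_assoc, Complex.re_ofReal_mul]
    rw [mul_comm ((starRingEnd ℂ) (y j)), ← ofReal_normSq', Complex.ofReal_re]
    ring
  have hK := D.Kcont
  have hInt : ∫ t in (0:ℝ)..1, (1 / 2 * ∑ i, ((starRingEnd ℂ) (D.B (loopN N y t) i) *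
      loopN N y t i).re - D.K (loopN N y t)) =
      1 / 2 * ∑ j : Idx N, ((starRingEnd ℂ) ((sc j.2 : ℂ) *
        fc (fun t => D.B (loopN N y t) j.1) j.2) * y j).re -
      ∫ t in (0:ℝ)..1, D.K (loopN N y t) := by
    rw [intervalIntegral.integral_sub, intervalIntegral.integral_const_mul,
      intervalIntegral.integral_finsetSum, Fintype.sum_prod_type]
    · simp only [hB]
    · intro i _; exact (by fun_prop : Continuous _).intervalIntegrable _ _
    all_goals exact (by fun_prop : Continuous _).intervalIntegrable _ _
  rw [act, hInt, hip, A]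
  ring

lemma ip_sq_le {N : ℕ} (g y : Idx N → ℂ) : |ip g y| ≤ √(nsq g) * √(nsq y) := by
  have h1 : |ip g y| ≤ ∑ j, ‖g j‖ * ‖y j‖ := by
    refine (Finset.abs_sum_le_sum_abs _ _).trans (Finset.sum_le_sum fun j _ => ?_)
    refine (Complex.abs_re_le_norm _).trans ?_
    rw [norm_mul, RCLike.norm_conj]
  refine h1.trans ?_
  exact Real.sum_mul_le_sqrt_mul_sqrt _ _ _

end HamData

/-! ### Convergence of almost critical points to periodic solutions -/

namespace HamData

variable (D : HamData)

lemma nonres_unif (hns : ∀ i (k : ℤ), (k : ℝ) ≠ D.σ i) :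
    ∃ c > 0, ∀ i (k : ℤ), c * (1 + |(k : ℝ)|) ≤ 2 * π * |(k : ℝ) - D.σ i| := by
  obtain ⟨c0, h0, h0'⟩ := nonres (D.σ 0) (hns 0)
  obtain ⟨c1, h1, h1'⟩ := nonres (D.σ 1) (hns 1)
  refine ⟨min c0 c1, lt_min h0 h1, fun i k => ?_⟩
  have hpi : 1 ≤ 2 * π := by linarith [Real.pi_gt_three]
  have hk : 0 < 1 + |(k : ℝ)| := by positivity
  have key : min c0 c1 * (1 + |(k : ℝ)|) ≤ |(k : ℝ) - D.σ i| := by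
    fin_cases i
    · exact (mul_le_mul_of_nonneg_right (min_le_left _ _) hk.le).trans (h0' k)
    · exact (mul_le_mul_of_nonneg_right (min_le_right _ _) hk.le).trans (h1' k)
  nlinarith [abs_nonneg ((k : ℝ) - D.σ i)]

/-- Almost critical points are bounded, uniformly in `N`. -/
lemma nsq_bdd (hns : ∀ i (k : ℤ), (k : ℝ) ≠ D.σ i) :
    ∃ R ≥ 0, ∀ N (y : Idx N → ℂ), nsq y ≤ R * (1 + nsq (D.gr N y)) := by
  obtain ⟨c, hc, hck⟩ := D.nonres_unif hns
  refine ⟨2 / c ^ 2 * (2 * D.C ^ 2 + 1), by positivity, fun N y => ?_⟩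
  have h1 : ∀ j : Idx N, ‖y j‖ ^ 2 ≤
      2 / c ^ 2 * (‖D.beta N y j.1 j.2‖ ^ 2 + ‖D.gr N y j‖ ^ 2) := by
    intro j
    have e : ((2 * π * ((((j.2 : ℤ) : ℝ) - D.σ j.1) * sc j.2 ^ 2) : ℝ) : ℂ) * y j =
        (sc j.2 : ℂ) * D.beta N y j.1 j.2 + D.gr N y j := by
      rw [gr, beta]; ring
    have hl : c * ‖y j‖ ≤ ‖((2 * π * ((((j.2 : ℤ) : ℝ) - D.σ j.1) * sc j.2 ^ 2) : ℝ) : ℂ) * y j‖ := by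
      rw [norm_mul, Complex.norm_real, Real.norm_eq_abs]
      refine mul_le_mul_of_nonneg_right ?_ (norm_nonneg _)
      rw [← mul_assoc, abs_mul, abs_mul, abs_of_pos (show 0 < 2 * π by positivity),
        abs_of_pos (pow_pos (sc_pos _) 2)]
      have := hck j.1 j.2
      have h3 := mul_le_mul_of_nonneg_right this (sq_nonneg (sc j.2))
      rw [mul_assoc, mul_comm (1 + _), sc_sq_mul, mul_one] at h3
      exact h3
    have hq : ‖(sc j.2 : ℂ) * D.beta N y j.1 j.2‖ ^ 2 ≤ ‖D.beta N y j.1 j.2‖ ^ 2 := by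
      rw [norm_mul, mul_pow, Complex.norm_real, Real.norm_eq_abs, sq_abs]
      exact mul_le_of_le_one_left (by positivity) (sc_sq_le _)
    have hs := half_norm_sq ((sc j.2 : ℂ) * D.beta N y j.1 j.2) (D.gr N y j)
    rw [← e] at hs
    have h4 : (c * ‖y j‖) ^ 2 ≤ 2 * ‖D.beta N y j.1 j.2‖ ^ 2 + 2 * ‖D.gr N y j‖ ^ 2 := by
      refine le_trans (by gcongr) (hs.trans ?_)
      linarith
    rw [div_mul_eq_mul_div, le_div_iff₀ (by positivity)]
    nlinarith
  have h2 : ∑ j : Idx N, ‖D.beta N y j.1 j.2‖ ^ 2 ≤ 2 * D.C ^ 2 := by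
    rw [Fintype.sum_prod_type]
    have : ∀ i : Fin 2, ∑ k : IdxZ N, ‖D.beta N y i k‖ ^ 2 ≤ D.C ^ 2 := by
      intro i
      have := D.beta_bessel N y i (Finset.Icc (-(N : ℤ)) N)
      rwa [← Finset.sum_coe_sort] at this
    have h0 := this 0; have h1 := this 1
    rw [Fin.sum_univ_two]
    dsimp only
    linarith
  have h3 : nsq y ≤ 2 / c ^ 2 * (∑ j : Idx N, ‖D.beta N y j.1 j.2‖ ^ 2 + nsq (D.gr N y)) := by
    rw [nsq, nsq, ← Finset.sum_add_distrib, Finset.mul_sum]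
    exact Finset.sum_le_sum fun j _ => h1 j
  refine h3.trans ?_
  rw [mul_assoc]
  refine mul_le_mul_of_nonneg_left ?_ (by positivity)
  have := nsq_nonneg (D.gr N y)
  nlinarith [sq_nonneg D.C]

/-- Periodic continuous functions with the Fourier coefficients of a solution are solutions. -/
lemma ode_of_fc (x r : ℝ → ℂ) (hx : Continuous x) (hr : Continuous r)
    (hxp : ∀ t, x (t + 1) = x t) (hrp : ∀ t, r (t + 1) = r t)
    (h : ∀ k, fc r k = 2 * π * Complex.I * k * fc x k) (t : ℝ) : HasDerivAt x (r t) t := by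
  set f : ℝ → ℂ := fun t => ∫ s in (0:ℝ)..t, r s with hf
  have hfd : ∀ t, HasDerivAt f (r t) t := fun t =>
    intervalIntegral.integral_hasDerivAt_right (hr.intervalIntegrable _ _)
      (hr.stronglyMeasurableAtFilter _ _) hr.continuousAt
  have hfc : Continuous f := continuous_iff_continuousAt.2 fun t => (hfd t).continuousAt
  have h0 : ∫ s in (0:ℝ)..1, r s = 0 := by
    have := h 0
    simpa [fc, ex_zero] using this
  have hfp : ∀ t, f (t + 1) = f t := by
    intro t
    have h1 : ∫ s in t..(t + 1), r s = ∫ s in (0:ℝ)..(0 + 1), r s :=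
      Function.Periodic.intervalIntegral_add_eq (f := r) (T := 1) hrp t 0
    rw [zero_add, h0] at h1
    have h2 := intervalIntegral.integral_add_adjacent_intervals (a := 0) (b := t) (c := t + 1)
      (hr.intervalIntegrable (μ := volume) _ _) (hr.intervalIntegrable _ _)
    rw [h1, add_zero] at h2
    exact h2.symm
  have hfk : ∀ k, k ≠ 0 → fc f k = fc x k := by
    intro k hk
    have h1 := fc_deriv f r hfd hr (by simpa using hfp 0) k
    rw [h k] at h1
    have h2 : (2 * π * Complex.I * k : ℂ) ≠ 0 := by simp [Real.pi_ne_zero, hk]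
    exact (mul_left_cancel₀ h2 h1).symm
  set u : ℝ → ℂ := fun t => x t - f t with hu
  have huk : ∀ k, k ≠ 0 → fc u k = 0 := by
    intro k hk
    have : fc u k = fc x k - fc f k := by
      simp only [fc, hu, sub_mul]
      exact intervalIntegral.integral_sub ((by fun_prop : Continuous _).intervalIntegrable _ _)
        ((by fun_prop : Continuous _).intervalIntegrable _ _)
    rw [this, hfk k hk, sub_self]
  have hus : ∀ t, u t = fc u 0 := by
    intro t
    rw [eq_fseries u (by fun_prop) (fun t => by simp only [hu, hxp, hfp])
      (summable_of_ne_finset_zero (s := {0}) fun k hk => by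
        rw [huk k (by simpa using hk), norm_zero]) t, fseries, tsum_eq_single 0]
    · rw [ex_zero, mul_one]
    · intro k hk; rw [huk k hk, zero_mul]
  have hxe : x = fun t => f t + fc u 0 := by
    funext t
    have := hus t
    simp only [hu] at this ⊢
    rw [← this]; ring
  rw [hxe]
  exact (hfd t).add_const _

/-- Almost critical points of the Galerkin functionals have a subsequence converging in `L²` to a
periodic solution. -/
theorem compactPS (hns : ∀ i (k : ℤ), (k : ℝ) ≠ D.σ i) (N : ℕ → ℕ)
    (hN : Filter.Tendsto N Filter.atTop Filter.atTop) (y : ∀ n, Idx (N n) → ℂ)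
    (hg : Filter.Tendsto (fun n => nsq (D.gr (N n) (y n))) Filter.atTop (nhds 0)) :
    ∃ φ : ℕ → ℕ, StrictMono φ ∧ ∃ x : ℝ → Fin 2 → ℂ, Continuous x ∧ (∀ t, x (t + 1) = x t) ∧
      (∀ t i, HasDerivAt (fun t => x t i)
        (2 * π * Complex.I * D.σ i * x t i + Complex.I * D.B (x t) i) t) ∧
      ∀ i, Filter.Tendsto (fun n => ∫ t in (0:ℝ)..1,
        ‖loopN (N (φ n)) (y (φ n)) t i - x t i‖ ^ 2) Filter.atTop (nhds 0) := by
  obtain ⟨c, hc, hck⟩ := D.nonres_unif hns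
  have hcomp : IsCompact (Set.univ.pi fun _ : Fin 2 × ℤ => Metric.closedBall (0 : ℂ) D.C) :=
    isCompact_univ_pi fun _ => isCompact_closedBall _ _
  obtain ⟨β, -, φ, hφ, hβ⟩ := hcomp.tendsto_subseq
    (x := fun n (q : Fin 2 × ℤ) => D.beta (N n) (y n) q.1 q.2) fun n q _ => by
      simpa using D.norm_beta_le (N n) (y n) q.1 q.2
  have hβk : ∀ i k, Filter.Tendsto (fun n => D.beta (N (φ n)) (y (φ n)) i k) Filter.atTop
      (nhds (β (i, k))) := fun i k => (tendsto_pi_nhds.1 hβ) (i, k)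
  have hβC : ∀ i k, ‖β (i, k)‖ ≤ D.C := fun i k =>
    le_of_tendsto (hβk i k).norm (Filter.Eventually.of_forall fun n => D.norm_beta_le _ _ _ _)
  have hβB : ∀ i (S : Finset ℤ), ∑ k ∈ S, ‖β (i, k)‖ ^ 2 ≤ D.C ^ 2 := by
    intro i S
    refine le_of_tendsto (tendsto_finsetSum S fun k _ => (hβk i k).norm.pow 2)
      (Filter.Eventually.of_forall fun n => D.beta_bessel _ _ _ _)
  have hsβ : ∀ i, Summable fun k => ‖β (i, k)‖ ^ 2 := fun i =>
    summable_of_sum_le (fun k => by positivity) (hβB i)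
  set dn : Fin 2 → ℤ → ℝ := fun i k => 2 * π * ((k : ℝ) - D.σ i) with hdn
  have hdnle : ∀ i (k : ℤ), c * (1 + |(k : ℝ)|) ≤ |dn i k| := by
    intro i k
    simp only [hdn]
    rw [abs_mul, abs_of_pos (show 0 < 2 * π by positivity)]
    exact hck i k
  have hdn0 : ∀ i k, 0 < |dn i k| := fun i k => lt_of_lt_of_le (by positivity) (hdnle i k)
  -- division by `dn` gains a factor `1 / (1 + |k|)`
  have hdiv : ∀ i k (v : ℂ), ‖v / (dn i k : ℂ)‖ ≤ 1 / c * ((1 / (1 + |(k : ℝ)|)) * ‖v‖) := by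
    intro i k v
    rw [norm_div, Complex.norm_real, Real.norm_eq_abs, div_le_iff₀ (hdn0 i k)]
    have h1 := hdnle i k
    have h2 : 1 / c * (1 / (1 + |(k : ℝ)|) * ‖v‖) * (c * (1 + |(k : ℝ)|)) = ‖v‖ := by
      field_simp
    calc ‖v‖ = _ := h2.symm
      _ ≤ _ := by gcongr
  set a : Fin 2 → ℤ → ℂ := fun i k => β (i, k) / (dn i k : ℂ) with ha
  have hsa : ∀ i, Summable fun k => ‖a i k‖ := by
    intro i
    refine Summable.of_nonneg_of_le (fun k => norm_nonneg _)
      (f := fun k : ℤ => 1 / c * ((1 / (1 + |(k : ℝ)|)) ^ 2 + ‖β (i, k)‖ ^ 2)) ?_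
      ((summable_inv_sq.add (hsβ i)).mul_left _)
    intro k
    refine (hdiv i k _).trans (mul_le_mul_of_nonneg_left ?_ (by positivity))
    nlinarith [sq_nonneg (1 / (1 + |(k : ℝ)|) - ‖β (i, k)‖), sq_nonneg (1 / (1 + |(k : ℝ)|)),
      sq_nonneg ‖β (i, k)‖]
  set x : ℝ → Fin 2 → ℂ := fun t i => fseries (a i) t with hx
  have hxc : Continuous x := continuous_pi fun i => continuous_fseries (hsa i)
  have hxp : ∀ t, x (t + 1) = x t := fun t => funext fun i => fseries_periodic _ _
  -- convergence in `L²`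
  have hlim : ∀ i, Filter.Tendsto (fun n => ∫ t in (0:ℝ)..1,
        ‖loopN (N (φ n)) (y (φ n)) t i - x t i‖ ^ 2) Filter.atTop (nhds 0) := by
    intro i
    set e : ℕ → ℤ → ℝ := fun n k => 2 * ‖(D.beta (N (φ n)) (y (φ n)) i k - β (i, k)) / (dn i k : ℂ)‖ ^ 2 +
      (if k ∈ Finset.Icc (-(N (φ n) : ℤ)) (N (φ n)) then 0 else ‖a i k‖ ^ 2) with he
    have he0 : Filter.Tendsto (fun n => ∑' k, e n k) Filter.atTop (nhds (∑' k : ℤ, (0:ℝ))) := by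
      refine tendsto_tsum_of_dominated_convergence
        (bound := fun k : ℤ => (2 * (1 / c * (2 * D.C)) ^ 2 + (1 / c * D.C) ^ 2) *
          (1 / (1 + |(k : ℝ)|)) ^ 2) (summable_inv_sq.mul_left _) ?_ ?_
      · intro k
        have h1 : Filter.Tendsto (fun n => 2 * ‖(D.beta (N (φ n)) (y (φ n)) i k - β (i, k)) /
            (dn i k : ℂ)‖ ^ 2) Filter.atTop (nhds (2 * ‖(β (i, k) - β (i, k)) / (dn i k : ℂ)‖ ^ 2)) :=
          ((((hβk i k).sub_const _).div_const _).norm.pow 2).const_mul _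
        have h2 : (fun n => (if k ∈ Finset.Icc (-(N (φ n) : ℤ)) (N (φ n)) then 0 else ‖a i k‖ ^ 2))
            =ᶠ[Filter.atTop] fun _ => (0 : ℝ) := by
          filter_upwards [(hN.comp hφ.tendsto_atTop).eventually_ge_atTop k.natAbs] with n hn
          simp only [Function.comp] at hn
          rw [if_pos]
          rw [Finset.mem_Icc]; omega
        have h3 := h1.add (tendsto_const_nhds.congr' h2.symm)
        rw [sub_self, zero_div, norm_zero, zero_pow two_ne_zero, mul_zero, add_zero] at h3
        exact h3
      · refine Filter.Eventually.of_forall fun n k => ?_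
        have p1 : ‖(D.beta (N (φ n)) (y (φ n)) i k - β (i, k)) / (dn i k : ℂ)‖ ≤
            1 / c * (2 * D.C) * (1 / (1 + |(k : ℝ)|)) := by
          refine (hdiv i k _).trans ?_
          have : ‖D.beta (N (φ n)) (y (φ n)) i k - β (i, k)‖ ≤ 2 * D.C := by
            refine (norm_sub_le _ _).trans ?_
            have := D.norm_beta_le (N (φ n)) (y (φ n)) i k
            have := hβC i k
            linarith
          calc _ ≤ 1 / c * (1 / (1 + |(k : ℝ)|) * (2 * D.C)) := by gcongr
            _ = _ := by ring
        have p2 : ‖a i k‖ ≤ 1 / c * D.C * (1 / (1 + |(k : ℝ)|)) := by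
          refine (hdiv i k _).trans ?_
          have := hβC i k
          calc _ ≤ 1 / c * (1 / (1 + |(k : ℝ)|) * D.C) := by gcongr
            _ = _ := by ring
        have p1' := pow_le_pow_left₀ (norm_nonneg _) p1 2
        have p2' := pow_le_pow_left₀ (norm_nonneg _) p2 2
        rw [mul_pow] at p1' p2'
        have p3 : (if k ∈ Finset.Icc (-(N (φ n) : ℤ)) (N (φ n)) then 0 else ‖a i k‖ ^ 2) ≤ ‖a i k‖ ^ 2 := by
          split_ifs
          · positivity
          · exact le_rfl
        have p4 : 0 ≤ e n k := by
          simp only [he]; split_ifs <;> positivity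
        rw [Real.norm_of_nonneg p4, add_mul]
        simp only [he]
        linarith
    rw [tsum_zero] at he0
    have hes : ∀ n, Summable (e n) := by
      intro n
      refine Summable.of_nonneg_of_le (f := fun k : ℤ => 4 * (1 / c) ^ 2 * D.C ^ 2 * 2 *
        (1 / (1 + |(k : ℝ)|)) ^ 2 + ‖a i k‖ * (1 / c * D.C)) (fun k => ?_) (fun k => ?_)
        ((summable_inv_sq.mul_left _).add ((hsa i).mul_right _))
      · simp only [he]; split_ifs <;> positivity
      · have p1 : ‖(D.beta (N (φ n)) (y (φ n)) i k - β (i, k)) / (dn i k : ℂ)‖ ≤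
            1 / c * (2 * D.C) * (1 / (1 + |(k : ℝ)|)) := by
          refine (hdiv i k _).trans ?_
          have : ‖D.beta (N (φ n)) (y (φ n)) i k - β (i, k)‖ ≤ 2 * D.C := by
            refine (norm_sub_le _ _).trans ?_
            have := D.norm_beta_le (N (φ n)) (y (φ n)) i k
            have := hβC i k
            linarith
          calc _ ≤ 1 / c * (1 / (1 + |(k : ℝ)|) * (2 * D.C)) := by gcongr
            _ = _ := by ring
        have p2 : ‖a i k‖ ≤ 1 / c * D.C := by
          refine (hdiv i k _).trans ?_
          have h1 := hβC i k
          have h2 : 1 / (1 + |(k : ℝ)|) ≤ 1 := by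
            rw [div_le_one (by positivity)]; linarith [abs_nonneg (k : ℝ)]
          have : 1 / (1 + |(k : ℝ)|) * ‖β (i, k)‖ ≤ 1 * D.C := by gcongr
          rw [one_mul] at this
          gcongr
        have p1' := pow_le_pow_left₀ (norm_nonneg _) p1 2
        have p3 : (if k ∈ Finset.Icc (-(N (φ n) : ℤ)) (N (φ n)) then 0 else ‖a i k‖ ^ 2) ≤
            ‖a i k‖ * (1 / c * D.C) := by
          have := mul_le_mul_of_nonneg_left p2 (norm_nonneg (a i k))
          have := norm_nonneg (a i k)
          have := mul_nonneg this (show 0 ≤ 1 / c * D.C by have := D.hC; positivity)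
          split_ifs <;> nlinarith
        simp only [he]
        nlinarith
    have hmain : ∀ n, ∫ t in (0:ℝ)..1, ‖loopN (N (φ n)) (y (φ n)) t i - x t i‖ ^ 2 ≤
        ∑' k, e n k + 2 / c ^ 2 * nsq (D.gr (N (φ n)) (y (φ n))) := by
      intro n
      set Nn := N (φ n)
      set yn := y (φ n)
      have hs : Summable fun k => ‖coef Nn yn i k - a i k‖ :=
        Summable.of_nonneg_of_le (fun _ => norm_nonneg _) (fun k => norm_sub_le _ _)
          ((summable_coef Nn yn i).add (hsa i))
      have hp := parseval_fseries hs
      have hfe : ∀ t, loopN Nn yn t i - x t i = fseries (fun k => coef Nn yn i k - a i k) t := by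
        intro t
        rw [loopN_eq_fseries, hx, fseries_sub (summable_coef Nn yn i) (hsa i)]
      have hInt : ∫ t in (0:ℝ)..1, ‖loopN Nn yn t i - x t i‖ ^ 2 =
          ∫ t in (0:ℝ)..1, ‖fseries (fun k => coef Nn yn i k - a i k) t‖ ^ 2 := by
        congr 1; funext t; rw [hfe]
      refine (le_of_eq hInt).trans ?_
      set G : ℤ → ℝ := fun k => if h : k ∈ Finset.Icc (-(Nn : ℤ)) Nn then
        2 / c ^ 2 * ‖D.gr Nn yn (i, ⟨k, h⟩)‖ ^ 2 else 0 with hG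
      have hGs : HasSum G (∑ k ∈ Finset.Icc (-(Nn : ℤ)) Nn, G k) :=
        hasSum_sum_of_ne_finset_zero fun k hk => by simp only [hG]; rw [dif_neg hk]
      have hGle : ∑ k ∈ Finset.Icc (-(Nn : ℤ)) Nn, G k ≤ 2 / c ^ 2 * nsq (D.gr Nn yn) := by
        rw [← Finset.sum_coe_sort, nsq, Finset.mul_sum, Fintype.sum_prod_type]
        have : ∀ k : IdxZ Nn, G k = 2 / c ^ 2 * ‖D.gr Nn yn (i, k)‖ ^ 2 := by
          intro k; simp only [hG]; rw [dif_pos k.2]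
        simp only [this]
        exact Finset.single_le_sum
          (f := fun i => ∑ k : IdxZ Nn, 2 / c ^ 2 * ‖D.gr Nn yn (i, k)‖ ^ 2)
          (fun i _ => by positivity) (Finset.mem_univ i)
      have hle : ∀ k, ‖coef Nn yn i k - a i k‖ ^ 2 ≤ e n k + G k := by
        intro k
        by_cases hk : k ∈ Finset.Icc (-(Nn : ℤ)) Nn
        · have h1 := D.coef_eq yn (i, ⟨k, hk⟩) (hns i k)
          simp only at h1
          have h2 : coef Nn yn i k - a i k = (D.beta Nn yn i k - β (i, k)) / (dn i k : ℂ) +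
              D.gr Nn yn (i, ⟨k, hk⟩) / ((sc k * dn i k : ℝ) : ℂ) := by
            rw [h1]; simp only [ha, hdn]; ring
          have h3 : ‖D.gr Nn yn (i, ⟨k, hk⟩) / ((sc k * dn i k : ℝ) : ℂ)‖ ^ 2 ≤
              1 / c ^ 2 * ‖D.gr Nn yn (i, ⟨k, hk⟩)‖ ^ 2 := by
            rw [norm_div, Complex.norm_real, Real.norm_eq_abs, div_pow, sq_abs, mul_pow,
              div_le_iff₀ (mul_pos (pow_pos (sc_pos k) 2) (by rw [← sq_abs]; exact pow_pos (hdn0 i k) 2))]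
            have h4 : c ^ 2 ≤ sc k ^ 2 * dn i k ^ 2 := by
              rw [← sq_abs (dn i k), sc_sq, ← div_eq_inv_mul, le_div_iff₀ (by positivity)]
              have h5 := pow_le_pow_left₀ (by positivity) (hdnle i k) 2
              refine le_trans ?_ h5
              have := abs_nonneg (k : ℝ)
              rw [mul_pow]
              refine mul_le_mul_of_nonneg_left ?_ (by positivity)
              nlinarith
            rw [mul_assoc, div_mul_eq_mul_div, one_mul, le_div_iff₀ (by positivity)]
            gcongr
          rw [h2]
          refine (half_norm_sq _ _).trans ?_
          simp only [he, hG]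
          rw [if_pos hk, dif_pos hk]
          have : 2 / c ^ 2 = 2 * (1 / c ^ 2) := by ring
          rw [this]; linarith
        · rw [coef_eq_zero yn i hk, zero_sub, norm_neg]
          simp only [he, hG]
          rw [if_neg hk, dif_neg hk]
          have : 0 ≤ 2 * ‖(D.beta (N (φ n)) (y (φ n)) i k - β (i, k)) / (dn i k : ℂ)‖ ^ 2 := by positivity
          linarith
      have := hasSum_le hle hp ((hes n).hasSum.add hGs)
      linarith
    refine squeeze_zero (fun n => ?_) hmain ?_
    · exact intervalIntegral.integral_nonneg zero_le_one fun t _ => by positivity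
    · have := he0.add ((hg.comp hφ.tendsto_atTop).const_mul (2 / c ^ 2))
      simpa using this
  refine ⟨φ, hφ, x, hxc, hxp, ?_, hlim⟩
  have hB : ∀ i k, fc (fun t => D.B (x t) i) k = β (i, k) := by
    intro i k
    have := fc_tendsto (fun n => loopN (N (φ n)) (y (φ n))) x (fun n => by fun_prop) hxc hlim
      (fun z => D.B z i) D.L D.hL.le (fun z w => (norm_le_pi_norm (D.B z - D.B w) i).trans (D.Blip z w)) k
    exact tendsto_nhds_unique this (hβk i k)
  intro t i
  have hxi : Continuous fun t => x t i := by fun_prop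
  have hBi : Continuous fun t => D.B (x t) i := by fun_prop
  refine ode_of_fc (fun t => x t i)
    (fun t => 2 * π * Complex.I * D.σ i * x t i + Complex.I * D.B (x t) i)
    hxi (by fun_prop) (fun t => by rw [hxp]) (fun t => by rw [hxp]) (fun k => ?_) t
  have h1 : fc (fun t => x t i) k = a i k := fc_fseries (hsa i) k
  have h2 : fc (fun t => 2 * π * Complex.I * D.σ i * x t i + Complex.I * D.B (x t) i) k =
      2 * π * Complex.I * D.σ i * fc (fun t => x t i) k + Complex.I * fc (fun t => D.B (x t) i) k := by
    simp only [fc, add_mul, mul_assoc]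
    rw [intervalIntegral.integral_add ((by fun_prop : Continuous _).intervalIntegrable _ _)
        ((by fun_prop : Continuous _).intervalIntegrable _ _)]
    simp only [intervalIntegral.integral_const_mul]
  rw [h2, hB, h1]
  have h3 : β (i, k) = (dn i k : ℂ) * a i k := by
    simp only [ha]
    rw [mul_div_cancel₀]
    rw [Complex.ofReal_ne_zero]; exact abs_pos.1 (hdn0 i k)
  rw [h3]
  simp only [hdn]; push_cast; ring

end HamData

/-! ### Existence of periodic solutions -/

namespace HamData

variable (D : HamData)

/-- One-periodic solutions of Hamilton's equations. -/
def Sol (x : ℝ → Fin 2 → ℂ) : Prop :=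
  (∀ t, x (t + 1) = x t) ∧ ∀ t i, HasDerivAt (fun t => x t i)
        (2 * π * Complex.I * D.σ i * x t i + Complex.I * D.B (x t) i) t

lemma act_tendsto (hns : ∀ i (k : ℤ), (k : ℝ) ≠ D.σ i)
    (ME : ℝ) (hME : 0 ≤ ME)
    (hE : ∀ z w, |(1 / 2 * ∑ i, ((starRingEnd ℂ) (D.B z i) * z i).re - D.K z) -
      (1 / 2 * ∑ i, ((starRingEnd ℂ) (D.B w i) * w i).re - D.K w)| ≤ ME * ‖z - w‖)
    (N : ℕ → ℕ) (y : ∀ n, Idx (N n) → ℂ)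
    (hg : Filter.Tendsto (fun n => nsq (D.gr (N n) (y n))) Filter.atTop (nhds 0))
    (x : ℝ → Fin 2 → ℂ) (hx : Continuous x)
    (hlim : ∀ i, Filter.Tendsto (fun n => ∫ t in (0:ℝ)..1,
        ‖loopN (N n) (y n) t i - x t i‖ ^ 2) Filter.atTop (nhds 0)) :
    Filter.Tendsto (fun n => D.A (N n) (y n)) Filter.atTop (nhds (D.act x)) := by
  obtain ⟨R, hR, hRy⟩ := D.nsq_bdd hns
  have h1 : Filter.Tendsto (fun n => ip (D.gr (N n) (y n)) (y n)) Filter.atTop (nhds 0) := by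
    refine squeeze_zero_norm (a := fun n => √(nsq (D.gr (N n) (y n))) *
      √(R * (1 + nsq (D.gr (N n) (y n))))) (fun n => ?_) ?_
    · rw [Real.norm_eq_abs]
      refine (ip_sq_le _ _).trans ?_
      gcongr
      exact hRy _ _
    · have e1 := (Real.continuous_sqrt.tendsto _).comp hg
      have e2 := (Real.continuous_sqrt.tendsto _).comp ((hg.const_add 1).const_mul R)
      have e3 := e1.mul e2
      rw [Real.sqrt_zero, zero_mul] at e3
      exact e3
  have h2 := fc_tendsto (fun n => loopN (N n) (y n)) x (fun n => by fun_prop) hx hlim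
    (fun z => ((1 / 2 * ∑ i, ((starRingEnd ℂ) (D.B z i) * z i).re - D.K z : ℝ) : ℂ)) ME hME
    (fun z w => by
      rw [← Complex.ofReal_sub, Complex.norm_real, Real.norm_eq_abs]; exact hE z w) 0
  have h3 : ∀ f : ℝ → ℝ, fc (fun t => (f t : ℂ)) 0 = ((∫ t in (0:ℝ)..1, f t : ℝ) : ℂ) := by
    intro f
    simp only [fc, neg_zero, ex_zero, mul_one]
    exact intervalIntegral.integral_ofReal
  simp only [h3] at h2
  have h4 := (Complex.continuous_re.tendsto _).comp h2
  simp only [Function.comp_def, Complex.ofReal_re] at h4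
  have h5 : Filter.Tendsto (fun n => D.act (loopN (N n) (y n))) Filter.atTop (nhds (D.act x)) :=
    h4.sub_const _
  have h6 := (h1.const_mul (1 / 2)).add h5
  simp only [A_eq_act]
  simpa using h6

/-- Almost critical points of the Galerkin functionals accumulate at periodic solutions. -/
lemma exists_sol_of_seq (hns : ∀ i (k : ℤ), (k : ℝ) ≠ D.σ i)
    (ME : ℝ) (hME : 0 ≤ ME)
    (hE : ∀ z w, |(1 / 2 * ∑ i, ((starRingEnd ℂ) (D.B z i) * z i).re - D.K z) -
      (1 / 2 * ∑ i, ((starRingEnd ℂ) (D.B w i) * w i).re - D.K w)| ≤ ME * ‖z - w‖)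
    (ψ : (Fin 2 → ℂ) → ℂ) (Mψ : ℝ) (hMψ : 0 ≤ Mψ) (hψ : ∀ z w, ‖ψ z - ψ w‖ ≤ Mψ * ‖z - w‖)
    (P : ∀ N, (Idx N → ℂ) → Prop)
    (h : ∀ n : ℕ, ∃ N ≥ n, ∃ y : Idx N → ℂ, nsq (D.gr N y) ≤ 1 / ((n : ℝ) + 1) ∧ P N y) :
    ∃ x, D.Sol x ∧ ∃ (N : ℕ → ℕ) (y : ∀ n, Idx (N n) → ℂ), (∀ n, P (N n) (y n)) ∧
      Filter.Tendsto (fun n => D.A (N n) (y n)) Filter.atTop (nhds (D.act x)) ∧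
      Filter.Tendsto (fun n => ell ψ (N n) (y n)) Filter.atTop (nhds (fc (fun t => ψ (x t)) 1)) := by
  choose N hN y hy hP using h
  have hNt : Filter.Tendsto N Filter.atTop Filter.atTop :=
    Filter.tendsto_atTop_mono hN Filter.tendsto_id
  have hg : Filter.Tendsto (fun n => nsq (D.gr (N n) (y n))) Filter.atTop (nhds 0) :=
    squeeze_zero (fun n => nsq_nonneg _) hy tendsto_one_div_add_atTop_nhds_zero_nat
  obtain ⟨φ, hφ, x, hxc, hxp, hxo, hlim⟩ := D.compactPS hns N hNt y hg
  refine ⟨x, ⟨hxp, hxo⟩, fun n => N (φ n), fun n => y (φ n), fun n => hP _, ?_, ?_⟩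
  · exact D.act_tendsto hns ME hME hE _ _ (hg.comp hφ.tendsto_atTop) x hxc hlim
  · exact fc_tendsto _ x (fun n => by fun_prop) hxc hlim ψ Mψ hMψ hψ 1

/-- Existence of a periodic solution of positive action when one frequency exceeds one. -/
theorem exists_solA (hns : ∀ i (k : ℤ), (k : ℝ) ≠ D.σ i)
    (ME : ℝ) (hME : 0 ≤ ME)
    (hE : ∀ z w, |(1 / 2 * ∑ i, ((starRingEnd ℂ) (D.B z i) * z i).re - D.K z) -
      (1 / 2 * ∑ i, ((starRingEnd ℂ) (D.B w i) * w i).re - D.K w)| ≤ ME * ‖z - w‖)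
    (M : ℝ) (hM : 0 ≤ M) (Cq : ℝ) (hCq : 0 ≤ Cq) (p : Fin 2 → ℂ)
    (h0 : ∀ z, 0 ≤ D.H z) (h1 : ∀ z, π * ∑ i, D.σ i * ‖z i‖ ^ 2 - M ≤ D.H z)
    (h2 : ∀ z, D.H z ≤ Cq * (∑ i, ‖z i - p i‖ ^ 2) ^ 2) (hσ0 : 1 < D.σ 0) (hσ1 : 0 < D.σ 1) :
    ∃ x, D.Sol x ∧ 0 < D.act x := by
  obtain ⟨α, hα, H⟩ := D.almostA M hM Cq hCq p h0 h1 h2 hσ0 hσ1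
  obtain ⟨x, hx, N, y, hP, hA, -⟩ := D.exists_sol_of_seq hns ME hME hE (fun _ => 0) 0 le_rfl
    (by simp) (fun N y => α ≤ D.A N y) (fun n => by
      obtain ⟨y, hy1, hy2, hy3⟩ := H (n + 1) (by omega) (1 / ((n : ℝ) + 1)) (by positivity)
      exact ⟨n + 1, by omega, y, hy1, hy2⟩)
  exact ⟨x, hx, lt_of_lt_of_le hα (ge_of_tendsto' hA hP)⟩

/-- When both frequencies exceed one, there is a periodic solution of positive action which
either has action different from a prescribed value or vanishing first Fourier coefficient of a
prescribed observable. -/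
theorem exists_solB (hns : ∀ i (k : ℤ), (k : ℝ) ≠ D.σ i)
    (ME : ℝ) (hME : 0 ≤ ME)
    (hE : ∀ z w, |(1 / 2 * ∑ i, ((starRingEnd ℂ) (D.B z i) * z i).re - D.K z) -
      (1 / 2 * ∑ i, ((starRingEnd ℂ) (D.B w i) * w i).re - D.K w)| ≤ ME * ‖z - w‖)
    (M : ℝ) (hM : 0 ≤ M) (Cq : ℝ) (hCq : 0 ≤ Cq) (p : Fin 2 → ℂ)
    (h0 : ∀ z, 0 ≤ D.H z) (h1 : ∀ z, π * ∑ i, D.σ i * ‖z i‖ ^ 2 - M ≤ D.H z)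
    (h2 : ∀ z, D.H z ≤ Cq * (∑ i, ‖z i - p i‖ ^ 2) ^ 2) (hσ : ∀ i, 1 < D.σ i)
    (ψ : (Fin 2 → ℂ) → ℂ) (Mψ : ℝ) (hMψ : 0 ≤ Mψ) (hψ : ∀ z w, ‖ψ z - ψ w‖ ≤ Mψ * ‖z - w‖)
    (a₀ : ℝ) :
    ∃ x, D.Sol x ∧ 0 < D.act x ∧ (D.act x = a₀ → fc (fun t => ψ (x t)) 1 = 0) := by
  by_contra hcon
  push Not at hcon
  obtain ⟨α, hα, H⟩ := D.almostB M hM Cq hCq p h0 h1 h2 hσ ψ Mψ hMψ hψ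
  have c1 : ∃ n : ℕ, ∀ N ≥ n, ∀ y : Idx N → ℂ, nsq (D.gr N y) ≤ 1 / ((n : ℝ) + 1) →
      ¬ (α ≤ D.A N y ∧ ell ψ N y = 0) := by
    by_contra hc
    push Not at hc
    obtain ⟨x, hx, N, y, hP, hA, hl⟩ := D.exists_sol_of_seq hns ME hME hE ψ Mψ hMψ hψ
      (fun N y => α ≤ D.A N y ∧ ell ψ N y = 0) hc
    have h3 : 0 < D.act x := lt_of_lt_of_le hα (ge_of_tendsto' hA fun n => (hP n).1)
    have h4 : fc (fun t => ψ (x t)) 1 = 0 := by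
      refine tendsto_nhds_unique hl ?_
      simp only [(hP _).2]; exact tendsto_const_nhds
    exact (hcon x hx h3).2 h4
  obtain ⟨n₀, hn₀⟩ := c1
  set ν₀ : ℝ := 1 / ((n₀ : ℝ) + 1) with hν₀
  have hν₀p : 0 < ν₀ := by positivity
  have hLp := D.L'_pos
  have c2 : ∃ n : ℕ, ∀ N ≥ n, ∀ y : Idx N → ℂ, nsq (D.gr N y) ≤ 1 / ((n : ℝ) + 1) →
      ¬ (α ≤ D.A N y ∧ ν₀ / (8 * D.L') < |D.A N y - a₀|) := by
    by_contra hc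
    push Not at hc
    obtain ⟨x, hx, N, y, hP, hA, hl⟩ := D.exists_sol_of_seq hns ME hME hE ψ Mψ hMψ hψ
      (fun N y => α ≤ D.A N y ∧ ν₀ / (8 * D.L') < |D.A N y - a₀|) hc
    have h3 : 0 < D.act x := lt_of_lt_of_le hα (ge_of_tendsto' hA fun n => (hP n).1)
    have h4 := (hcon x hx h3).1
    have h5 : ν₀ / (8 * D.L') ≤ |D.act x - a₀| :=
      ge_of_tendsto' (hA.sub_const a₀).abs fun n => (hP n).2.le
    rw [h4, sub_self, abs_zero] at h5
    have : 0 < ν₀ / (8 * D.L') := by positivity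
    linarith
  obtain ⟨n₁, hn₁⟩ := c2
  refine H (max (max n₀ n₁) 1) (le_max_right _ _) a₀ ν₀ (1 / ((n₁ : ℝ) + 1)) hν₀p (by positivity) ?_ ?_
  · intro y hy1 hy2 hy3 hy4
    exact hn₀ _ (le_trans (le_max_left _ _) (le_max_left _ _)) y hy3 ⟨hy1, hy4⟩
  · intro y hy1 hy2 hy3
    by_contra hy4
    exact hn₁ _ (le_trans (le_max_right _ _) (le_max_left _ _)) y hy3 ⟨hy1, not_le.1 hy4⟩

end HamData

/-! ### Periodic orbits of smooth Hamiltonians that are quadratic at infinity -/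

/-- One-periodic solutions of Hamilton's equations of `H`. -/
def HSol (H : (Fin 2 → ℂ) → ℝ) (x : ℝ → Fin 2 → ℂ) : Prop :=
  (∀ t, x (t + 1) = x t) ∧ ∀ t, ∃ v, HasDerivAt x v t ∧
    ∀ w, stdSymp 2 v w = - fderiv ℝ H (x t) w

/-- The action of a one-periodic solution. -/
def hact (H : (Fin 2 → ℂ) → ℝ) (x : ℝ → Fin 2 → ℂ) : ℝ :=
  ∫ t in (0:ℝ)..1, (1 / 2 * fderiv ℝ H (x t) (x t) - H (x t))

lemma pi_decomp (h : Fin 2 → ℂ) : h = ∑ i, ((h i).re • (Pi.single i (1:ℂ) : Fin 2 → ℂ) +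
    (h i).im • (Pi.single i Complex.I : Fin 2 → ℂ)) := by
  rw [Fin.sum_univ_two]
  funext j
  fin_cases j <;> simp [Complex.ext_iff]

/-- The gradient of a function on `ℂ²`. -/
def grad (K : (Fin 2 → ℂ) → ℝ) (z : Fin 2 → ℂ) (i : Fin 2) : ℂ :=
  ⟨fderiv ℝ K z (Pi.single i 1), fderiv ℝ K z (Pi.single i Complex.I)⟩

lemma grad_ip (K : (Fin 2 → ℂ) → ℝ) (z h : Fin 2 → ℂ) :
    ∑ i, ((starRingEnd ℂ) (grad K z i) * h i).re = fderiv ℝ K z h := by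
  conv_rhs => rw [pi_decomp h]
  rw [map_sum]
  refine Finset.sum_congr rfl fun i _ => ?_
  rw [map_add, map_smul, map_smul]
  simp [grad, Complex.mul_re]
  ring

lemma norm_single_le (i : Fin 2) (c : ℂ) : ‖(Pi.single i c : Fin 2 → ℂ)‖ ≤ ‖c‖ := by
  refine (pi_norm_le_iff_of_nonneg (norm_nonneg _)).2 fun j => ?_
  by_cases h : j = i
  · subst h; simp
  · simp [h]

lemma exists_hamData (σ : Fin 2 → ℝ) (c₀ : ℝ) (K : (Fin 2 → ℂ) → ℝ) (hK : ContDiff ℝ (⊤ : ℕ∞) K)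
    (hKs : HasCompactSupport K) :
    ∃ D : HamData, D.σ = σ ∧ D.c₀ = c₀ ∧ D.K = K ∧ D.B = grad K := by
  have hfd : ContDiff ℝ 1 (fderiv ℝ K) := hK.fderiv_right (by norm_cast)
  have hfs : HasCompactSupport (fderiv ℝ K) := hKs.fderiv (𝕜 := ℝ)
  obtain ⟨L0, hL0⟩ := hfd.lipschitzWith_of_hasCompactSupport hfs (by norm_num)
  obtain ⟨C0, hC0⟩ := hfs.exists_bound_of_continuous hfd.continuous
  have hlip : ∀ z w, ‖fderiv ℝ K z - fderiv ℝ K w‖ ≤ L0 * ‖z - w‖ := by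
    intro z w
    have := hL0.dist_le_mul z w
    rwa [dist_eq_norm, dist_eq_norm] at this
  have hL0' : (0 : ℝ) ≤ L0 := L0.2
  have hC0' : 0 ≤ C0 := (norm_nonneg _).trans (hC0 0)
  refine ⟨⟨σ, K, grad K, c₀, 2 * L0 + 1, 2 * C0 + 1, by positivity, by positivity, hK.continuous,
    fun z w => ?_, fun z i => ?_, fun z h => ?_⟩, rfl, rfl, rfl, rfl⟩
  · refine (pi_norm_le_iff_of_nonneg (by positivity)).2 fun i => ?_
    have h1 : ∀ v, |fderiv ℝ K z v - fderiv ℝ K w v| ≤ L0 * ‖z - w‖ * ‖v‖ := by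
      intro v
      rw [← sub_apply, ← Real.norm_eq_abs]
      exact (ContinuousLinearMap.le_opNorm _ _).trans (by gcongr; exact hlip z w)
    refine (Complex.norm_le_abs_re_add_abs_im _).trans ?_
    simp only [grad, Pi.sub_apply, Complex.sub_re, Complex.sub_im]
    have h2 := h1 (Pi.single i 1)
    have h3 := h1 (Pi.single i Complex.I)
    have n2 := norm_single_le i 1
    have n3 := norm_single_le i Complex.I
    rw [Complex.norm_I] at n3
    rw [norm_one] at n2
    have hp : 0 ≤ L0 * ‖z - w‖ := by positivity
    have := norm_nonneg (z - w)
    nlinarith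
  · refine (Complex.norm_le_abs_re_add_abs_im _).trans ?_
    simp only [grad]
    have h1 : ∀ v, |fderiv ℝ K z v| ≤ C0 * ‖v‖ := by
      intro v
      rw [← Real.norm_eq_abs]
      exact (ContinuousLinearMap.le_opNorm _ _).trans (by gcongr; exact hC0 z)
    have h2 := h1 (Pi.single i 1)
    have h3 := h1 (Pi.single i Complex.I)
    have n2 := norm_single_le i 1
    have n3 := norm_single_le i Complex.I
    rw [Complex.norm_I] at n3
    rw [norm_one] at n2
    nlinarith
  · rw [grad_ip]
    have hdiff : Differentiable ℝ K := hK.differentiable (by simp)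
    have h1 := (convex_segment z (z + h)).norm_image_sub_le_of_norm_fderiv_le' (𝕜 := ℝ) (f := K)
      (φ := fderiv ℝ K z) (C := L0 * ‖h‖) (x := z) (y := z + h)
      (fun u _ => hdiff u) (fun u hu => by
        refine (hlip u z).trans ?_
        obtain ⟨t, ht, rfl⟩ := (segment_eq_image' ℝ z (z + h)) ▸ hu
        simp only [add_sub_cancel_left, norm_smul, Real.norm_eq_abs]
        have := abs_le.2 ⟨by linarith [ht.1], ht.2⟩
        exact mul_le_mul_of_nonneg_left (mul_le_of_le_one_left (norm_nonneg _) this) hL0')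
      (left_mem_segment _ _ _) (right_mem_segment _ _ _)
    rw [add_sub_cancel_left, Real.norm_eq_abs] at h1
    have h2 := (abs_le.1 h1).1
    have h3 := norm_sq_le_nsq h
    rw [nsq] at h3
    have h4 : (0:ℝ) ≤ ∑ i, ‖h i‖ ^ 2 := by positivity
    nlinarith

/-- The standard quadratic Hamiltonian. -/
def quad (σ : Fin 2 → ℝ) (z : Fin 2 → ℂ) : ℝ := π * ∑ i, σ i * ‖z i‖ ^ 2

lemma norm_sq_re_im (z : ℂ) : ‖z‖ ^ 2 = z.re ^ 2 + z.im ^ 2 := by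
  rw [← Complex.normSq_eq_norm_sq, Complex.normSq_apply]; ring

lemma hasFDerivAt_normSq (i : Fin 2) (z : Fin 2 → ℂ) :
    ∃ f' : (Fin 2 → ℂ) →L[ℝ] ℝ, HasFDerivAt (fun z : Fin 2 → ℂ => ‖z i‖ ^ 2) f' z ∧
      ∀ h, f' h = 2 * ((starRingEnd ℂ) (z i) * h i).re := by
  have h1 : HasFDerivAt (fun z : Fin 2 → ℂ => (z i)) (ContinuousLinearMap.proj (R := ℝ) i) z :=
    (ContinuousLinearMap.proj (R := ℝ) (φ := fun _ : Fin 2 => ℂ) i).hasFDerivAt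
  have h2 : HasFDerivAt (fun z : Fin 2 → ℂ => (z i).re) _ z :=
    Complex.reCLM.hasFDerivAt.comp z h1
  have h3 : HasFDerivAt (fun z : Fin 2 → ℂ => (z i).im) _ z :=
    Complex.imCLM.hasFDerivAt.comp z h1
  refine ⟨_, ((h2.pow 2).add (h3.pow 2)).congr_of_eventuallyEq
    (Filter.Eventually.of_forall fun z => norm_sq_re_im _), fun h => ?_⟩
  simp [Complex.mul_re]
  ring

lemma contDiff_normSq (i : Fin 2) : ContDiff ℝ (⊤ : ℕ∞) fun z : Fin 2 → ℂ => ‖z i‖ ^ 2 :=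
  (contDiff_apply ℝ ℂ i).norm_sq ℝ

lemma contDiff_quad (σ : Fin 2 → ℝ) : ContDiff ℝ (⊤ : ℕ∞) (quad σ) := by
  unfold quad
  refine contDiff_const.mul (ContDiff.sum fun i _ => contDiff_const.mul (contDiff_normSq i))

lemma fderiv_quad (σ : Fin 2 → ℝ) (z h : Fin 2 → ℂ) :
    fderiv ℝ (quad σ) z h = ∑ i, ((starRingEnd ℂ) (2 * π * σ i * z i) * h i).re := by
  choose f' hf' hfe using fun i => hasFDerivAt_normSq i z
  have h1 : HasFDerivAt (quad σ) (π • ∑ i, σ i • f' i) z := by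
    unfold quad
    refine HasFDerivAt.const_mul (HasFDerivAt.fun_sum fun i _ => (hf' i).const_mul (σ i)) π
  rw [h1.fderiv]
  simp only [smul_apply, sum_apply, hfe, smul_eq_mul, Finset.mul_sum]
  refine Finset.sum_congr rfl fun i _ => ?_
  have : (starRingEnd ℂ) (2 * π * σ i * z i) * h i = ((2 * π * σ i : ℝ) : ℂ) * ((starRingEnd ℂ) (z i) * h i) := by
    simp only [map_mul, Complex.conj_ofReal, map_ofNat]; push_cast; ring
  rw [this, Complex.re_ofReal_mul]; ring

/-- The standing hypotheses on a Hamiltonian: smooth, nonnegative, equal to a non-resonant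
quadratic form plus a constant at infinity, bounded below by the quadratic form up to a constant,
and vanishing near a point. -/
structure GoodH (H : (Fin 2 → ℂ) → ℝ) (σ : Fin 2 → ℝ) : Prop where
  smooth : ContDiff ℝ (⊤ : ℕ∞) H
  nonres : ∀ i (k : ℤ), (k : ℝ) ≠ σ i
  infty : ∃ c₀, HasCompactSupport fun z => H z - quad σ z - c₀
  nonneg : ∀ z, 0 ≤ H z
  lower : ∃ M, 0 ≤ M ∧ ∀ z, quad σ z - M ≤ H z
  zero : ∃ p, ∀ᶠ z in nhds p, H z = 0

lemma GoodH.quartic {H : (Fin 2 → ℂ) → ℝ} {σ : Fin 2 → ℝ} (h : GoodH H σ) :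
    ∃ (p : Fin 2 → ℂ) (Cq : ℝ), 0 ≤ Cq ∧ ∀ z, H z ≤ Cq * (∑ i, ‖z i - p i‖ ^ 2) ^ 2 := by
  obtain ⟨p, hp⟩ := h.zero
  obtain ⟨c₀, hc₀⟩ := h.infty
  obtain ⟨r, hr, hrp⟩ := Metric.eventually_nhds_iff.1 hp
  have hHc : Continuous H := h.smooth.continuous
  have hqc : Continuous (quad σ) := (contDiff_quad σ).continuous
  obtain ⟨C1, hC1⟩ := hc₀.exists_bound_of_continuous (by fun_prop)
  set S : ℝ := |σ 0| + |σ 1| with hS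
  set A1 := C1 + |c₀| + π * S * 2 * ‖p‖ ^ 2 with hA1
  have hC1' : 0 ≤ C1 := (norm_nonneg _).trans (hC1 0)
  have hS0 : 0 ≤ S := by positivity
  have hA1' : 0 ≤ A1 := by positivity
  refine ⟨p, A1 / r ^ 4 + 2 * π * S / r ^ 2, by positivity, fun z => ?_⟩
  set d := ∑ i, ‖z i - p i‖ ^ 2 with hd
  have hd0 : 0 ≤ d := by positivity
  by_cases hz : dist z p < r
  · rw [hrp hz]; positivity
  · push Not at hz
    have hdr : r ^ 2 ≤ d := by
      have h1 := norm_sq_le_nsq (z - p)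
      rw [dist_eq_norm] at hz
      calc r ^ 2 ≤ ‖z - p‖ ^ 2 := by gcongr
        _ ≤ _ := h1
    have hq : quad σ z ≤ π * S * (2 * d + 2 * ‖p‖ ^ 2) := by
      unfold quad
      rw [mul_assoc]
      refine mul_le_mul_of_nonneg_left ?_ Real.pi_pos.le
      have e1 : ∀ i, ‖z i‖ ^ 2 ≤ 2 * d + 2 * ‖p‖ ^ 2 := by
        intro i
        have h1 := HamData.half_norm_sq (z i - p i) (p i)
        rw [sub_add_cancel] at h1
        have h2 : ‖z i - p i‖ ^ 2 ≤ d :=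
          Finset.single_le_sum (f := fun i => ‖z i - p i‖ ^ 2) (fun i _ => by positivity)
            (Finset.mem_univ i)
        have h3 : ‖p i‖ ^ 2 ≤ ‖p‖ ^ 2 := by
          have := norm_le_pi_norm p i
          gcongr
        linarith
      rw [Fin.sum_univ_two, hS, add_mul]
      have f0 := mul_le_mul (le_abs_self (σ 0)) (e1 0) (by positivity) (abs_nonneg _)
      have f1 := mul_le_mul (le_abs_self (σ 1)) (e1 1) (by positivity) (abs_nonneg _)
      linarith
    have hH : H z ≤ A1 + 2 * π * S * d := by
      have h1 := (abs_le.1 (hC1 z)).2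
      have h2 := le_abs_self c₀
      rw [hA1]; linarith
    refine hH.trans ?_
    have g1 : A1 ≤ A1 / r ^ 4 * d ^ 2 := by
      rw [div_mul_eq_mul_div, le_div_iff₀ (by positivity)]
      have : r ^ 4 ≤ d ^ 2 := by
        calc r ^ 4 = (r ^ 2) ^ 2 := by ring
          _ ≤ _ := by gcongr
      gcongr
    have g2 : 2 * π * S * d ≤ 2 * π * S / r ^ 2 * d ^ 2 := by
      rw [div_mul_eq_mul_div, le_div_iff₀ (by positivity), mul_assoc, sq d]
      have : d * r ^ 2 ≤ d * d := by gcongr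
      exact mul_le_mul_of_nonneg_left this (by positivity)
    rw [add_mul]; linarith

/-- The data attached to a good Hamiltonian. -/
lemma GoodH.data {H : (Fin 2 → ℂ) → ℝ} {σ : Fin 2 → ℝ} (h : GoodH H σ) :
    ∃ D : HamData, D.σ = σ ∧ D.H = H ∧
      (∃ ME, 0 ≤ ME ∧ ∀ z w, |(1 / 2 * ∑ i, ((starRingEnd ℂ) (D.B z i) * z i).re - D.K z) -
      (1 / 2 * ∑ i, ((starRingEnd ℂ) (D.B w i) * w i).re - D.K w)| ≤ ME * ‖z - w‖) ∧
      ∀ x, D.Sol x → HSol H x ∧ D.act x = hact H x := by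
  obtain ⟨c₀, hc₀⟩ := h.infty
  set K : (Fin 2 → ℂ) → ℝ := fun z => H z - quad σ z - c₀ with hKdef
  have hK : ContDiff ℝ (⊤ : ℕ∞) K := (h.smooth.sub (contDiff_quad σ)).sub contDiff_const
  obtain ⟨D, h1, h2, h3, h4⟩ := exists_hamData σ c₀ K hK hc₀
  have hHd : Differentiable ℝ H := h.smooth.differentiable (by simp)
  have hqd : Differentiable ℝ (quad σ) := (contDiff_quad σ).differentiable (by simp)
  have hder : ∀ z v, fderiv ℝ K z v = fderiv ℝ H z v - fderiv ℝ (quad σ) z v := by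
    intro z v
    have : HasFDerivAt K (fderiv ℝ H z - fderiv ℝ (quad σ) z) z :=
      ((hHd z).hasFDerivAt.sub (hqd z).hasFDerivAt).sub_const c₀
    rw [this.fderiv, sub_apply]
  have hDH : D.H = H := by
    funext z
    simp only [HamData.H, h1, h2, h3, hKdef, quad]; ring
  refine ⟨D, h1, hDH, ?_, ?_⟩
  · simp only [h4, h3, grad_ip]
    have hs : ContDiff ℝ 1 fun z => 1 / 2 * fderiv ℝ K z z - K z := by
      have e1 : ContDiff ℝ 1 fun z => fderiv ℝ K z z := by
        have : ContDiff ℝ 1 (fderiv ℝ K) := hK.fderiv_right (by norm_cast)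
        exact this.clm_apply contDiff_id
      exact (contDiff_const.mul e1).sub (hK.of_le (by norm_cast))
    have hcs : HasCompactSupport fun z => 1 / 2 * fderiv ℝ K z z - K z := by
      have hfs : HasCompactSupport (fderiv ℝ K) := hc₀.fderiv (𝕜 := ℝ)
      refine HasCompactSupport.intro (hc₀.isCompact.union hfs.isCompact) fun z hz => ?_
      rw [Set.mem_union, not_or] at hz
      rw [image_eq_zero_of_notMem_tsupport hz.1, image_eq_zero_of_notMem_tsupport hz.2]
      simp
    obtain ⟨C, hC⟩ := hs.lipschitzWith_of_hasCompactSupport hcs (by norm_num)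
    refine ⟨C, C.2, fun z w => ?_⟩
    have := hC.dist_le_mul z w
    rwa [dist_eq_norm, dist_eq_norm] at this
  · rintro x ⟨hxp, hx⟩
    have hgrad : ∀ t w, fderiv ℝ H (x t) w = ∑ i, ((starRingEnd ℂ)
        (2 * π * σ i * x t i + D.B (x t) i) * w i).re := by
      intro t w
      have e1 := hder (x t) w
      rw [← grad_ip K, fderiv_quad] at e1
      simp only [map_add, add_mul, Complex.add_re, Finset.sum_add_distrib, h4]
      simp only [map_mul] at e1 ⊢
      linarith
    refine ⟨⟨hxp, fun t => ⟨_, hasDerivAt_pi.2 (hx t), fun w => ?_⟩⟩, ?_⟩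
    · rw [hgrad, stdSymp, ← Finset.sum_neg_distrib]
      refine Finset.sum_congr rfl fun i _ => ?_
      rw [h1]
      have : 2 * π * Complex.I * σ i * x t i + Complex.I * D.B (x t) i =
        Complex.I * (2 * π * σ i * x t i + D.B (x t) i) := by ring
      rw [this, map_mul, Complex.conj_I]
      generalize (starRingEnd ℂ) (2 * π * σ i * x t i + D.B (x t) i) = u
      simp [Complex.mul_im, Complex.mul_re]
      ring
    · have hxc : Continuous x := continuous_pi fun i =>
        continuous_iff_continuousAt.2 fun t => (hx t i).continuousAt
      have hc1 : Continuous fun z => fderiv ℝ H z z :=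
        (h.smooth.continuous_fderiv (by simp)).clm_apply continuous_id
      have hc2 := h.smooth.continuous
      simp only [HamData.act, hact, h2]
      have e : ∀ t, (1 / 2 * ∑ i, ((starRingEnd ℂ) (D.B (x t) i) * x t i).re - D.K (x t)) =
          (1 / 2 * fderiv ℝ H (x t) (x t) - H (x t)) + c₀ := by
        intro t
        rw [h4, grad_ip, h3, hder, fderiv_quad]
        have : ∑ i, ((starRingEnd ℂ) (2 * π * σ i * x t i) * x t i).re = 2 * quad σ (x t) := by
          rw [quad, Finset.mul_sum, Finset.mul_sum]
          refine Finset.sum_congr rfl fun i _ => ?_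
          have : (starRingEnd ℂ) (2 * π * σ i * x t i) * x t i =
              ((2 * π * σ i * ‖x t i‖ ^ 2 : ℝ) : ℂ) := by
            rw [Complex.ofReal_mul, ofReal_normSq']
            simp only [map_mul, Complex.conj_ofReal, map_ofNat]; push_cast; ring
          rw [this, Complex.ofReal_re]; ring
        rw [this]
        simp only [hKdef]; ring
      simp only [e]
      rw [intervalIntegral.integral_add]
      · simp
      · exact ((continuous_const.mul (hc1.comp hxc)).sub (hc2.comp hxc)).intervalIntegrable _ _
      · exact (by fun_prop : Continuous _).intervalIntegrable _ _

/-- Existence of a periodic orbit of positive action. -/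
theorem exists_hsolA {H : (Fin 2 → ℂ) → ℝ} {σ : Fin 2 → ℝ} (h : GoodH H σ) (hσ0 : 1 < σ 0)
    (hσ1 : 0 < σ 1) : ∃ x, HSol H x ∧ 0 < hact H x := by
  obtain ⟨D, h1, h2, ⟨ME, hME, hE⟩, h4⟩ := h.data
  obtain ⟨M, hM, hM'⟩ := h.lower
  obtain ⟨p, Cq, hCq, hq⟩ := h.quartic
  obtain ⟨x, hx, hx'⟩ := D.exists_solA (by rw [h1]; exact h.nonres) ME hME hE M hM Cq hCq p
    (by rw [h2]; exact h.nonneg) (by rw [h1, h2]; exact hM') (by rw [h2]; exact hq)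
    (by rw [h1]; exact hσ0) (by rw [h1]; exact hσ1)
  exact ⟨x, (h4 x hx).1, (h4 x hx).2 ▸ hx'⟩

/-- Existence of a periodic orbit of positive action which, if it has the prescribed action `a₀`,
has vanishing first Fourier coefficient along the observable `ψ`. -/
theorem exists_hsolB {H : (Fin 2 → ℂ) → ℝ} {σ : Fin 2 → ℝ} (h : GoodH H σ) (hσ : ∀ i, 1 < σ i)
    (ψ : (Fin 2 → ℂ) → ℂ) (hψ : ContDiff ℝ (⊤ : ℕ∞) ψ) (hψs : HasCompactSupport ψ) (a₀ : ℝ) :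
    ∃ x, HSol H x ∧ 0 < hact H x ∧ (hact H x = a₀ → fc (fun t => ψ (x t)) 1 = 0) := by
  obtain ⟨D, h1, h2, ⟨ME, hME, hE⟩, h4⟩ := h.data
  obtain ⟨M, hM, hM'⟩ := h.lower
  obtain ⟨p, Cq, hCq, hq⟩ := h.quartic
  obtain ⟨C, hC⟩ := hψ.lipschitzWith_of_hasCompactSupport hψs (by simp)
  obtain ⟨x, hx, hx', hx''⟩ := D.exists_solB (by rw [h1]; exact h.nonres) ME hME hE M hM Cq hCq p
    (by rw [h2]; exact h.nonneg) (by rw [h1, h2]; exact hM') (by rw [h2]; exact hq)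
    (by rw [h1]; exact hσ) ψ C C.2 (fun z w => by
      have := hC.dist_le_mul z w
      rwa [dist_eq_norm, dist_eq_norm] at this) a₀
  have e := (h4 x hx).2
  exact ⟨x, (h4 x hx).1, e ▸ hx', e ▸ hx''⟩

/-! ### Symplectic maps are local diffeomorphisms -/

/-- The standard symplectic form on `ℂ²` as a continuous bilinear form. -/
def sympB : (Fin 2 → ℂ) →L[ℝ] (Fin 2 → ℂ) →L[ℝ] ℝ :=
  LinearMap.toContinuousLinearMap
    ((LinearMap.toContinuousLinearMap :
        ((Fin 2 → ℂ) →ₗ[ℝ] ℝ) ≃ₗ[ℝ] ((Fin 2 → ℂ) →L[ℝ] ℝ)).toLinearMap ∘ₗ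
      LinearMap.mk₂ ℝ (stdSymp 2)
        (by intro a b c; simp only [stdSymp, ← Finset.sum_add_distrib]; refine Finset.sum_congr rfl fun i _ => ?_; simp; ring)
        (by intro r a c; simp only [stdSymp, Finset.smul_sum]; refine Finset.sum_congr rfl fun i _ => ?_; simp; ring)
        (by intro a b c; simp only [stdSymp, ← Finset.sum_add_distrib]; refine Finset.sum_congr rfl fun i _ => ?_; simp; ring)
        (by intro r a c; simp only [stdSymp, Finset.smul_sum]; refine Finset.sum_congr rfl fun i _ => ?_; simp; ring))

@[simp] lemma sympB_apply (v w : Fin 2 → ℂ) : sympB v w = stdSymp 2 v w := rfl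

lemma stdSymp_nondeg {v : Fin 2 → ℂ} (h : ∀ w, stdSymp 2 v w = 0) : v = 0 := by
  have h1 := h (fun i => Complex.I * v i)
  simp only [stdSymp, Fin.sum_univ_two] at h1
  simp at h1
  funext i
  have h2 : (v 0).re = 0 ∧ (v 0).im = 0 ∧ (v 1).re = 0 ∧ (v 1).im = 0 := by
    refine ⟨?_, ?_, ?_, ?_⟩ <;> refine pow_eq_zero_iff (two_ne_zero) |>.1 ?_ <;>
    nlinarith [sq_nonneg (v 0).re, sq_nonneg (v 0).im, sq_nonneg (v 1).re, sq_nonneg (v 1).im]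
  fin_cases i <;> simp [Complex.ext_iff, h2]

lemma stdSymp_ext {u v : Fin 2 → ℂ} (h : ∀ w, stdSymp 2 u w = stdSymp 2 v w) : u = v := by
  rw [← sub_eq_zero]
  refine stdSymp_nondeg fun w => ?_
  rw [← sympB_apply, map_sub, sub_apply, sympB_apply, sympB_apply, h, sub_self]

lemma stdSymp_self (v : Fin 2 → ℂ) : stdSymp 2 v v = 0 := by
  simp [stdSymp, Fin.sum_univ_two]; ring

lemma stdSymp_swap (v w : Fin 2 → ℂ) : stdSymp 2 v w = - stdSymp 2 w v := by
  simp [stdSymp, Fin.sum_univ_two]; ring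

/-- A linear map preserving the symplectic form, as an invertible map. -/
lemma symp_equiv (L : (Fin 2 → ℂ) →L[ℝ] (Fin 2 → ℂ))
    (hL : ∀ v w, stdSymp 2 (L v) (L w) = stdSymp 2 v w) :
    ∃ e : (Fin 2 → ℂ) ≃L[ℝ] (Fin 2 → ℂ), (e : (Fin 2 → ℂ) →L[ℝ] (Fin 2 → ℂ)) = L := by
  have hinj : Function.Injective (L : (Fin 2 → ℂ) →ₗ[ℝ] (Fin 2 → ℂ)) := by
    rw [← LinearMap.ker_eq_bot, LinearMap.ker_eq_bot']
    intro v hv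
    refine stdSymp_nondeg fun w => ?_
    rw [← hL]
    have : L v = 0 := hv
    rw [this, ← sympB_apply]; simp
  refine ⟨(LinearEquiv.ofInjectiveEndo _ hinj).toContinuousLinearEquiv, ?_⟩
  ext v; rfl

/-- A smooth injective symplectic map on an open set. -/
structure SympMap (φ : (Fin 2 → ℂ) → (Fin 2 → ℂ)) (U : Set (Fin 2 → ℂ)) : Prop where
  isOpen : IsOpen U
  smooth : ContDiffOn ℝ (⊤ : ℕ∞) φ U
  inj : InjOn φ U
  symp : ∀ x ∈ U, ∀ v w, stdSymp 2 (fderiv ℝ φ x v) (fderiv ℝ φ x w) = stdSymp 2 v w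

namespace SympMap

variable {φ : (Fin 2 → ℂ) → (Fin 2 → ℂ)} {U : Set (Fin 2 → ℂ)}

lemma mono (h : SympMap φ U) {V : Set (Fin 2 → ℂ)} (hV : IsOpen V) (hVU : V ⊆ U) : SympMap φ V :=
  ⟨hV, h.smooth.mono hVU, h.inj.mono hVU, fun x hx => h.symp x (hVU hx)⟩

lemma contDiffAt (h : SympMap φ U) {x : Fin 2 → ℂ} (hx : x ∈ U) :
    ContDiffAt ℝ (⊤ : ℕ∞) φ x :=
  h.smooth.contDiffAt (h.isOpen.mem_nhds hx)

lemma hasFDerivAt (h : SympMap φ U) {x : Fin 2 → ℂ} (hx : x ∈ U) :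
    HasFDerivAt φ (fderiv ℝ φ x) x :=
  ((h.contDiffAt hx).differentiableAt (by simp)).hasFDerivAt

lemma surj (h : SympMap φ U) {x : Fin 2 → ℂ} (hx : x ∈ U) (w : Fin 2 → ℂ) :
    ∃ v, fderiv ℝ φ x v = w := by
  obtain ⟨e, he⟩ := symp_equiv _ (h.symp x hx)
  refine ⟨e.symm w, ?_⟩
  rw [← he]; simp

lemma isOpen_image (h : SympMap φ U) : IsOpen (φ '' U) := by
  rw [isOpen_iff_mem_nhds]
  rintro _ ⟨x, hx, rfl⟩
  obtain ⟨e, he⟩ := symp_equiv _ (h.symp x hx)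
  have h1 : HasFDerivAt φ (e : (Fin 2 → ℂ) →L[ℝ] (Fin 2 → ℂ)) x := by
    rw [he]; exact h.hasFDerivAt hx
  have h2 := (h.contDiffAt hx).hasStrictFDerivAt' h1 (by simp)
  have h3 := h2.map_nhds_eq_of_equiv
  rw [← h3]
  exact Filter.image_mem_map (h.isOpen.mem_nhds hx)

/-- The inverse of a symplectic map is smooth. -/
lemma contDiffAt_inv (h : SympMap φ U) {x : Fin 2 → ℂ} (hx : x ∈ U) :
    ContDiffAt ℝ (⊤ : ℕ∞) (Function.invFunOn φ U) (φ x) := by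
  obtain ⟨e, he⟩ := symp_equiv _ (h.symp x hx)
  have h1 : HasFDerivAt φ (e : (Fin 2 → ℂ) →L[ℝ] (Fin 2 → ℂ)) x := by
    rw [he]; exact h.hasFDerivAt hx
  have h2 := (h.contDiffAt hx).hasStrictFDerivAt' h1 (by simp)
  have h3 := (h.contDiffAt hx).to_localInverse h1 (by simp)
  refine h3.congr_of_eventuallyEq ?_
  have h4 := h2.eventually_right_inverse
  have h5 : ∀ᶠ y in nhds (φ x), (h.contDiffAt hx).localInverse h1 (by simp) y ∈ U := by
    have h6 := h3.continuousAt
    refine h6.eventually_mem ?_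
    rw [ContDiffAt.localInverse_apply_image]
    exact h.isOpen.mem_nhds hx
  filter_upwards [h4, h5] with y hy hyU
  have hy' : φ ((h.contDiffAt hx).localInverse h1 (by simp) y) = y := hy
  conv_lhs => rw [← hy']
  exact h.inj.leftInvOn_invFunOn hyU

lemma inv_apply (h : SympMap φ U) {x : Fin 2 → ℂ} (hx : x ∈ U) :
    Function.invFunOn φ U (φ x) = x := h.inj.leftInvOn_invFunOn hx

end SympMap

open Classical in
/-- Transport of a function supported in `U` by an injective map `φ` on `U`, extended by zero. -/
def push {F : Type*} [Zero F] (φ : (Fin 2 → ℂ) → (Fin 2 → ℂ)) (U : Set (Fin 2 → ℂ))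
    (f : (Fin 2 → ℂ) → F) (y : Fin 2 → ℂ) : F :=
  if y ∈ φ '' U then f (Function.invFunOn φ U y) else 0

section push
variable {F : Type*} [NormedAddCommGroup F] [NormedSpace ℝ F]
  {φ : (Fin 2 → ℂ) → (Fin 2 → ℂ)} {U K : Set (Fin 2 → ℂ)}

lemma push_apply (h : SympMap φ U) (f : (Fin 2 → ℂ) → F) {x : Fin 2 → ℂ} (hx : x ∈ U) :
    push φ U f (φ x) = f x := by
  rw [push, if_pos (mem_image_of_mem _ hx), h.inv_apply hx]

lemma push_eq_zero (h : SympMap φ U) {f : (Fin 2 → ℂ) → F} (hf : ∀ x ∈ U, x ∉ K → f x = 0)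
    {y : Fin 2 → ℂ} (hy : y ∉ φ '' K) : push φ U f y = 0 := by
  by_cases h1 : y ∈ φ '' U
  · obtain ⟨x, hx, rfl⟩ := h1
    rw [push_apply h f hx]
    exact hf x hx fun hK => hy (mem_image_of_mem _ hK)
  · rw [push, if_neg h1]

lemma isCompact_image_of (h : SympMap φ U) (hK : IsCompact K) (hKU : K ⊆ U) :
    IsCompact (φ '' K) := hK.image_of_continuousOn (h.smooth.continuousOn.mono hKU)

lemma push_compact (h : SympMap φ U) (hK : IsCompact K) (hKU : K ⊆ U) {f : (Fin 2 → ℂ) → F}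
    (hf : ∀ x ∈ U, x ∉ K → f x = 0) : HasCompactSupport (push φ U f) :=
  HasCompactSupport.intro (isCompact_image_of h hK hKU) fun _ hy => push_eq_zero h hf hy

lemma push_smooth (h : SympMap φ U) (hK : IsCompact K) (hKU : K ⊆ U) {f : (Fin 2 → ℂ) → F}
    (hf : ∀ x ∈ U, x ∉ K → f x = 0) (hfs : ContDiff ℝ (⊤ : ℕ∞) f) :
    ContDiff ℝ (⊤ : ℕ∞) (push φ U f) := by
  rw [contDiff_iff_contDiffAt]
  intro y
  by_cases h1 : y ∈ φ '' U
  · have h2 : push φ U f =ᶠ[nhds y] fun z => f (Function.invFunOn φ U z) := by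
      filter_upwards [h.isOpen_image.mem_nhds h1] with z hz
      rw [push, if_pos hz]
    refine ContDiffAt.congr_of_eventuallyEq ?_ h2
    obtain ⟨x, hx, rfl⟩ := h1
    exact hfs.contDiffAt.comp _ (h.contDiffAt_inv hx)
  · have h3 : y ∉ φ '' K := fun hy => h1 (image_mono hKU hy)
    have h2 : push φ U f =ᶠ[nhds y] fun _ => 0 := by
      filter_upwards [(isCompact_image_of h hK hKU).isClosed.isOpen_compl.mem_nhds h3] with z hz
      exact push_eq_zero h hf hz
    exact contDiffAt_const.congr_of_eventuallyEq h2

end push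

/-! ### Uniqueness for Hamilton's equations -/

lemma symp_grad (H : (Fin 2 → ℂ) → ℝ) (z v : Fin 2 → ℂ)
    (hv : ∀ w, stdSymp 2 v w = - fderiv ℝ H z w) : v = fun i => Complex.I * grad H z i := by
  refine stdSymp_ext fun w => ?_
  rw [hv, ← grad_ip]
  simp only [stdSymp, Fin.sum_univ_two]
  simp
  ring

/-- Curves solving Hamilton's equations, without periodicity. -/
def HOde (H : (Fin 2 → ℂ) → ℝ) (x : ℝ → Fin 2 → ℂ) : Prop :=
  ∀ t, ∃ v, HasDerivAt x v t ∧ ∀ w, stdSymp 2 v w = - fderiv ℝ H (x t) w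

lemma GoodH.lipschitz_grad {H : (Fin 2 → ℂ) → ℝ} {σ : Fin 2 → ℝ} (h : GoodH H σ) :
    ∃ L : NNReal, LipschitzWith L fun z : Fin 2 → ℂ => fun i => Complex.I * grad H z i := by
  obtain ⟨c₀, hc⟩ := h.infty
  set K : (Fin 2 → ℂ) → ℝ := fun z => H z - quad σ z - c₀ with hKdef
  have hK : ContDiff ℝ (⊤ : ℕ∞) K := (h.smooth.sub (contDiff_quad σ)).sub contDiff_const
  obtain ⟨D, hDσ, hD0, hDK, hDB⟩ := exists_hamData σ c₀ K hK hc
  have hfd : ContDiff ℝ 1 (fderiv ℝ K) := hK.fderiv_right (by norm_cast)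
  have hfs : HasCompactSupport (fderiv ℝ K) := hc.fderiv (𝕜 := ℝ)
  obtain ⟨L0, hL0⟩ := hfd.lipschitzWith_of_hasCompactSupport hfs (by norm_num)
  have hgrad : ∀ z i, grad H z i = 2 * π * σ i * z i + grad K z i := by
    intro z i
    have h1 : ∀ w, fderiv ℝ K z w = fderiv ℝ H z w - fderiv ℝ (quad σ) z w := by
      intro w
      have h2 : HasFDerivAt K (fderiv ℝ H z - fderiv ℝ (quad σ) z) z :=
        ((h.smooth.differentiable (by simp) z).hasFDerivAt.sub
          ((contDiff_quad σ).differentiable (by simp) z).hasFDerivAt).sub_const c₀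
      rw [h2.fderiv, sub_apply]
    apply Complex.ext
    · simp only [grad, h1, fderiv_quad]
      fin_cases i <;> simp
    · simp only [grad, h1, fderiv_quad]
      fin_cases i <;> simp
  have hnn : (0:ℝ) ≤ 2 * π * (|σ 0| + |σ 1|) + 2 * (L0 : ℝ) := by positivity
  refine ⟨⟨2 * π * (|σ 0| + |σ 1|) + 2 * L0, hnn⟩, ?_⟩
  refine LipschitzWith.of_dist_le_mul fun z w => ?_
  rw [dist_eq_norm, dist_eq_norm]
  refine (pi_norm_le_iff_of_nonneg (by positivity)).2 fun i => ?_
  have h1 : ∀ v, |fderiv ℝ K z v - fderiv ℝ K w v| ≤ L0 * ‖z - w‖ * ‖v‖ := by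
    intro v
    have h2 := (fderiv ℝ K z - fderiv ℝ K w).le_opNorm v
    rw [sub_apply, Real.norm_eq_abs] at h2
    refine h2.trans ?_
    have := hL0.dist_le_mul z w
    rw [dist_eq_norm, dist_eq_norm] at this
    gcongr
  have h3 : ‖grad K z i - grad K w i‖ ≤ 2 * L0 * ‖z - w‖ := by
    refine (Complex.norm_le_abs_re_add_abs_im _).trans ?_
    have e1 := h1 (Pi.single i 1)
    have e2 := h1 (Pi.single i Complex.I)
    have n1 := norm_single_le i 1
    have n2 := norm_single_le i Complex.I
    rw [norm_one] at n1
    rw [Complex.norm_I] at n2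
    have p : 0 ≤ L0 * ‖z - w‖ := by positivity
    have q1 := mul_le_mul_of_nonneg_left n1 p
    have q2 := mul_le_mul_of_nonneg_left n2 p
    simp only [grad, Complex.sub_re, Complex.sub_im]
    linarith
  have h4 : (fun i => Complex.I * grad H z i) i - (fun i => Complex.I * grad H w i) i =
      Complex.I * (2 * π * σ i * (z i - w i) + (grad K z i - grad K w i)) := by
    simp only [hgrad]; ring
  have h5 : ‖z i - w i‖ ≤ ‖z - w‖ := norm_le_pi_norm (z - w) i
  have h6 : |σ i| ≤ |σ 0| + |σ 1| := by
    fin_cases i <;> simp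
  change ‖(fun i => Complex.I * grad H z i) i - (fun i => Complex.I * grad H w i) i‖ ≤ _
  rw [h4, norm_mul, Complex.norm_I, one_mul]
  refine (norm_add_le _ _).trans ?_
  have h7 : ‖(2 * π * σ i * (z i - w i) : ℂ)‖ ≤ 2 * π * (|σ 0| + |σ 1|) * ‖z - w‖ := by
    rw [norm_mul, norm_mul, norm_mul, Complex.norm_real, Complex.norm_real,
      Real.norm_of_nonneg Real.pi_pos.le, Real.norm_eq_abs]
    simp only [Complex.norm_ofNat]
    gcongr
  change _ ≤ (2 * π * (|σ 0| + |σ 1|) + 2 * L0) * ‖z - w‖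
  linarith

lemma GoodH.unique {H : (Fin 2 → ℂ) → ℝ} {σ : Fin 2 → ℝ} (h : GoodH H σ) {x y : ℝ → Fin 2 → ℂ}
    (hx : HOde H x) (hy : HOde H y) (h0 : x 0 = y 0) : x = y := by
  obtain ⟨L, hL⟩ := h.lipschitz_grad
  refine ODE_solution_unique_univ (v := fun _ z i => Complex.I * grad H z i)
    (s := fun _ => univ) (K := L) (t₀ := 0) (fun t => hL.lipschitzOnWith) ?_ ?_ h0
  · intro t
    obtain ⟨v, hv, hw⟩ := hx t
    rw [symp_grad H _ v hw] at hv
    exact ⟨hv, mem_univ _⟩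
  · intro t
    obtain ⟨v, hv, hw⟩ := hy t
    rw [symp_grad H _ v hw] at hv
    exact ⟨hv, mem_univ _⟩

/-! ### Profile functions -/

lemma growth_ge {F F' : ℝ → ℝ} (hF : ∀ s, HasDerivAt F (F' s) s) {l s₁ s₂ : ℝ} (h : s₁ ≤ s₂)
    (hl : ∀ x ∈ Icc s₁ s₂, l ≤ F' x) : l * (s₂ - s₁) ≤ F s₂ - F s₁ := by
  refine (convex_Icc s₁ s₂).mul_sub_le_image_sub_of_le_deriv
    (fun x _ => (hF x).continuousAt.continuousWithinAt)
    (fun x _ => (hF x).differentiableAt.differentiableWithinAt) (fun x hx => ?_) s₁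
    (left_mem_Icc.2 h) s₂ (right_mem_Icc.2 h) h
  rw [(hF x).deriv]; exact hl x (interior_subset hx)

lemma growth_le {F F' : ℝ → ℝ} (hF : ∀ s, HasDerivAt F (F' s) s) {l s₁ s₂ : ℝ} (h : s₁ ≤ s₂)
    (hl : ∀ x ∈ Icc s₁ s₂, F' x ≤ l) : F s₂ - F s₁ ≤ l * (s₂ - s₁) := by
  refine (convex_Icc s₁ s₂).image_sub_le_mul_sub_of_deriv_le
    (fun x _ => (hF x).continuousAt.continuousWithinAt)
    (fun x _ => (hF x).differentiableAt.differentiableWithinAt) (fun x hx => ?_) s₁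
    (left_mem_Icc.2 h) s₂ (right_mem_Icc.2 h) h
  rw [(hF x).deriv]; exact hl x (interior_subset hx)

lemma growth_eq {F F' : ℝ → ℝ} (hF : ∀ s, HasDerivAt F (F' s) s) {l s₁ s₂ : ℝ} (h : s₁ ≤ s₂)
    (hl : ∀ x ∈ Icc s₁ s₂, F' x = l) : F s₂ - F s₁ = l * (s₂ - s₁) :=
  le_antisymm (growth_le hF h fun x hx => (hl x hx).le) (growth_ge hF h fun x hx => (hl x hx).ge)

lemma exists_primitive {f : ℝ → ℝ} (hf : ContDiff ℝ (⊤ : ℕ∞) f) (a m : ℝ) :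
    ∃ F : ℝ → ℝ, ContDiff ℝ (⊤ : ℕ∞) F ∧ F a = m ∧ ∀ s, HasDerivAt F (f s) s := by
  have hd : ∀ s, HasDerivAt (fun s => m + ∫ x in a..s, f x) (f s) s := fun s =>
    (intervalIntegral.integral_hasDerivAt_right (hf.continuous.intervalIntegrable _ _)
      (hf.continuous.stronglyMeasurableAtFilter _ _) hf.continuous.continuousAt).const_add m
  refine ⟨fun s => m + ∫ x in a..s, f x, ?_, by simp, hd⟩
  refine contDiff_infty_iff_deriv.2 ⟨fun s => (hd s).differentiableAt, ?_⟩
  have : deriv (fun s => m + ∫ x in a..s, f x) = f := funext fun s => (hd s).deriv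
  rw [this]; exact hf

/-- A profile that vanishes near `0`, is constant `m' > m` near `1`, has slope at most `κ`, and is
first convex and then concave. -/
lemma exists_profile {κ m : ℝ} (hκ : 0 < κ) (hm : m < κ) :
    ∃ (f f' : ℝ → ℝ) (δ m' : ℝ), 0 < δ ∧ δ < 1 / 8 ∧ m < m' ∧ ContDiff ℝ (⊤ : ℕ∞) f ∧
      (∀ s, HasDerivAt f (f' s) s) ∧ (∀ s, 0 ≤ f' s) ∧ (∀ s, f' s ≤ κ) ∧ (∀ s, 0 ≤ f s) ∧
      (∀ s, s ≤ δ → f s = 0) ∧ (∀ s, 1 - δ ≤ s → f s = m') ∧ (∀ s, 1 - δ ≤ s → f' s = 0) ∧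
      (∀ l s₁ s₂, s₁ ≤ 1 / 2 → s₂ ≤ 1 / 2 → f' s₁ = l → f' s₂ = l →
        l * s₁ - f s₁ = l * s₂ - f s₂) ∧
      (∀ l s, 1 / 2 ≤ s → s ≤ 1 → f' s = l → l * s - f s ≤ l - m') := by
  obtain ⟨δ, hδ0, hδ1, hδ2⟩ : ∃ δ : ℝ, 0 < δ ∧ δ < 1 / 8 ∧ m < κ * (1 - 4 * δ) := by
    refine ⟨min (1 / 16) ((κ - m) / (8 * κ)), by
      have : 0 < κ - m := sub_pos.2 hm
      positivity, lt_of_le_of_lt (min_le_left _ _) (by norm_num), ?_⟩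
    have h1 : min (1 / 16) ((κ - m) / (8 * κ)) ≤ (κ - m) / (8 * κ) := min_le_right _ _
    have h2 : (κ - m) / (8 * κ) * κ = (κ - m) / 8 := by field_simp
    nlinarith
  set f' : ℝ → ℝ := fun s => κ * Real.smoothTransition ((s - δ) / δ) *
    Real.smoothTransition ((1 - δ - s) / δ) with hf'
  have hS1 := Real.smoothTransition.le_one
  have hS0 := Real.smoothTransition.nonneg
  have hsm : ContDiff ℝ (⊤ : ℕ∞) f' := by
    refine (contDiff_const.mul (Real.smoothTransition.contDiff.comp ?_)).mul
      (Real.smoothTransition.contDiff.comp ?_)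
    · exact (contDiff_id.sub contDiff_const).div_const _
    · exact (contDiff_const.sub contDiff_id).div_const _
  obtain ⟨f, hfs, hf0, hfd⟩ := exists_primitive hsm 0 0
  have p0 : ∀ s, 0 ≤ f' s := fun s => by have := hS0 ((s - δ) / δ); have := hS0 ((1 - δ - s) / δ); positivity
  have p1 : ∀ s, f' s ≤ κ := fun s => by
    have h1 : Real.smoothTransition ((s - δ) / δ) * Real.smoothTransition ((1 - δ - s) / δ) ≤ 1 :=
      mul_le_one₀ (hS1 _) (hS0 _) (hS1 _)
    simp only [hf', mul_assoc]
    nlinarith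
  have z0 : ∀ s, s ≤ δ → f' s = 0 := fun s hs => by
    have : (s - δ) / δ ≤ 0 := div_nonpos_of_nonpos_of_nonneg (by linarith) hδ0.le
    simp [hf', Real.smoothTransition.zero_of_nonpos this]
  have z1 : ∀ s, 1 - δ ≤ s → f' s = 0 := fun s hs => by
    have : (1 - δ - s) / δ ≤ 0 := div_nonpos_of_nonpos_of_nonneg (by linarith) hδ0.le
    simp [hf', Real.smoothTransition.zero_of_nonpos this]
  have zm : ∀ s, 2 * δ ≤ s → s ≤ 1 - 2 * δ → f' s = κ := fun s h1 h2 => by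
    have e1 : 1 ≤ (s - δ) / δ := by rw [le_div_iff₀ hδ0]; linarith
    have e2 : 1 ≤ (1 - δ - s) / δ := by rw [le_div_iff₀ hδ0]; linarith
    simp [hf', Real.smoothTransition.one_of_one_le e1, Real.smoothTransition.one_of_one_le e2]
  have mono1 : ∀ s₁ s₂, s₁ ≤ s₂ → s₂ ≤ 1 / 2 → f' s₁ ≤ f' s₂ := fun s₁ s₂ h h2 => by
    have e : ∀ s, s ≤ 1 / 2 → f' s = κ * Real.smoothTransition ((s - δ) / δ) := fun s hs => by
      have e2 : 1 ≤ (1 - δ - s) / δ := by rw [le_div_iff₀ hδ0]; linarith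
      simp [hf', Real.smoothTransition.one_of_one_le e2]
    rw [e s₁ (h.trans h2), e s₂ h2]
    have := Real.smoothTransition.monotone
      (show (s₁ - δ) / δ ≤ (s₂ - δ) / δ by gcongr)
    gcongr
  have mono2 : ∀ s₁ s₂, 1 / 2 ≤ s₁ → s₁ ≤ s₂ → f' s₂ ≤ f' s₁ := fun s₁ s₂ h2 h => by
    have e : ∀ s, 1 / 2 ≤ s → f' s = κ * Real.smoothTransition ((1 - δ - s) / δ) := fun s hs => by
      have e2 : 1 ≤ (s - δ) / δ := by rw [le_div_iff₀ hδ0]; linarith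
      simp [hf', Real.smoothTransition.one_of_one_le e2]
    rw [e s₁ h2, e s₂ (h2.trans h)]
    have := Real.smoothTransition.monotone
      (show (1 - δ - s₂) / δ ≤ (1 - δ - s₁) / δ by gcongr)
    gcongr
  have fz : ∀ s, s ≤ δ → f s = 0 := fun s hs => by
    rcases le_total s 0 with h | h
    · have := growth_eq hfd h (l := 0) fun x hx => z0 x (hx.2.trans hδ0.le)
      linarith
    · have := growth_eq hfd h (l := 0) fun x hx => z0 x (hx.2.trans hs)
      linarith
  have fpos : ∀ s, 0 ≤ f s := fun s => by
    rcases le_total s δ with h | h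
    · exact (fz s h).ge
    · have := growth_ge hfd h (l := 0) fun x _ => p0 x
      have := fz δ le_rfl
      linarith
  have f1 : ∀ s, 1 - δ ≤ s → f s = f 1 := fun s hs => by
    rcases le_total s 1 with h | h
    · have := growth_eq hfd h (l := 0) fun x hx => z1 x (hs.trans hx.1)
      linarith
    · have := growth_eq hfd h (l := 0) fun x hx => z1 x (by linarith [hx.1])
      linarith
  refine ⟨f, f', δ, f 1, hδ0, hδ1, ?_, hfs, hfd, p0, p1, fpos, fz, f1, z1, ?_, ?_⟩
  · have e1 := growth_eq hfd (show 2 * δ ≤ 1 - 2 * δ by linarith) (l := κ)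
      fun x hx => zm x hx.1 hx.2
    have e2 := growth_ge hfd (show 1 - 2 * δ ≤ 1 by linarith) (l := 0) fun x _ => p0 x
    have e3 := fpos (2 * δ)
    nlinarith
  · have key : ∀ l s₁ s₂, s₁ ≤ s₂ → s₂ ≤ 1 / 2 → f' s₁ = l → f' s₂ = l →
        l * s₁ - f s₁ = l * s₂ - f s₂ := fun l s₁ s₂ h h2 e1 e2 => by
      have := growth_eq hfd h (l := l) fun x hx =>
        le_antisymm (e2 ▸ mono1 x s₂ hx.2 h2) (e1 ▸ mono1 s₁ x hx.1 (hx.2.trans h2))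
      linarith
    intro l s₁ s₂ h1 h2 e1 e2
    rcases le_total s₁ s₂ with h | h
    · exact key l s₁ s₂ h h2 e1 e2
    · exact (key l s₂ s₁ h h1 e2 e1).symm
  · intro l s h1 h2 e
    have := growth_le hfd h2 (l := l) fun x hx => e ▸ mono2 s x h1 hx.1
    linarith

/-- A profile that is constant on `t ≤ 1` and becomes affine of slope `κ` for large `t`. -/
lemma exists_profile_infty {κ m : ℝ} (hκ : 0 < κ) (hm : κ < m) :
    ∃ (g g' : ℝ → ℝ) (T c₀ : ℝ), ContDiff ℝ (⊤ : ℕ∞) g ∧ (∀ s, HasDerivAt g (g' s) s) ∧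
      (∀ s, s ≤ 1 → g s = m) ∧ (∀ s, s ≤ 1 → g' s = 0) ∧ (∀ s, 0 ≤ g' s) ∧ (∀ s, g' s ≤ κ) ∧
      (∀ s, m ≤ g s) ∧ (∀ s, κ * s ≤ g s) ∧ (∀ s, T ≤ s → g s = κ * s + c₀) := by
  set ν := m / κ - 1 with hν
  have hν0 : 0 < ν := by rw [hν, sub_pos, lt_div_iff₀ hκ]; linarith
  have hνm : κ * (1 + ν) = m := by rw [hν]; field_simp; ring
  set g' : ℝ → ℝ := fun s => κ * Real.smoothTransition ((s - 1) / ν) with hg'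
  have hsm : ContDiff ℝ (⊤ : ℕ∞) g' :=
    contDiff_const.mul (Real.smoothTransition.contDiff.comp
      ((contDiff_id.sub contDiff_const).div_const _))
  obtain ⟨g, hgs, hg1, hgd⟩ := exists_primitive hsm 1 m
  have p0 : ∀ s, 0 ≤ g' s := fun s => mul_nonneg hκ.le (Real.smoothTransition.nonneg _)
  have p1 : ∀ s, g' s ≤ κ := fun s => mul_le_of_le_one_right hκ.le (Real.smoothTransition.le_one _)
  have z0 : ∀ s, s ≤ 1 → g' s = 0 := fun s hs => by
    have : (s - 1) / ν ≤ 0 := div_nonpos_of_nonpos_of_nonneg (by linarith) hν0.le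
    simp [hg', Real.smoothTransition.zero_of_nonpos this]
  have z1 : ∀ s, 1 + ν ≤ s → g' s = κ := fun s hs => by
    have : 1 ≤ (s - 1) / ν := by rw [le_div_iff₀ hν0]; linarith
    simp [hg', Real.smoothTransition.one_of_one_le this]
  have gm : ∀ s, s ≤ 1 → g s = m := fun s hs => by
    have := growth_eq hgd hs (l := 0) fun x hx => z0 x hx.2
    linarith
  have gge : ∀ s, m ≤ g s := fun s => by
    rcases le_total s 1 with h | h
    · exact (gm s h).ge
    · have := growth_ge hgd h (l := 0) fun x _ => p0 x
      linarith
  have ga : ∀ s, 1 + ν ≤ s → g s = κ * s + (g (1 + ν) - m) := fun s hs => by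
    have := growth_eq hgd hs (l := κ) fun x hx => z1 x hx.1
    linarith
  refine ⟨g, g', 1 + ν, g (1 + ν) - m, hgs, hgd, gm, z0, p0, p1, gge, fun s => ?_, ga⟩
  rcases le_total s (1 + ν) with h | h
  · have := gge s
    nlinarith
  · have := ga s h
    have := gge (1 + ν)
    linarith

/-! ### Linear flows and the action of loops under a symplectic map -/

/-- The linear rotation of `ℂ²` with speeds `τ`, applied to `z`. -/
def rot (τ : Fin 2 → ℝ) (z : Fin 2 → ℂ) (t : ℝ) : Fin 2 → ℂ :=
  fun i => z i * Complex.exp (2 * π * Complex.I * τ i * t)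

@[simp] lemma rot_zero (τ : Fin 2 → ℝ) (z : Fin 2 → ℂ) : rot τ z 0 = z := by
  funext i; simp [rot]

lemma norm_rot (τ : Fin 2 → ℝ) (z : Fin 2 → ℂ) (t : ℝ) (i : Fin 2) : ‖rot τ z t i‖ = ‖z i‖ := by
  rw [rot, norm_mul, show 2 * (π : ℂ) * Complex.I * τ i * t = ((2 * π * τ i * t : ℝ) : ℂ) * Complex.I by
    push_cast; ring, Complex.norm_exp_ofReal_mul_I, mul_one]

lemma quad_rot (σ τ : Fin 2 → ℝ) (z : Fin 2 → ℂ) (t : ℝ) : quad σ (rot τ z t) = quad σ z := by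
  simp only [quad, norm_rot]

lemma hasDerivAt_rot (τ : Fin 2 → ℝ) (z : Fin 2 → ℂ) (t : ℝ) :
    HasDerivAt (rot τ z) (fun i => 2 * π * Complex.I * τ i * rot τ z t i) t := by
  rw [hasDerivAt_pi]
  intro i
  have h : HasDerivAt (fun s : ℝ => 2 * π * Complex.I * τ i * (s : ℂ)) (2 * π * Complex.I * τ i) t := by
    simpa using (Complex.ofRealCLM.hasDerivAt (x := t)).const_mul (2 * π * Complex.I * τ i)
  have h2 := h.cexp.const_mul (z i)
  refine h2.congr_deriv ?_
  simp only [rot]; ring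

/-- The infinitesimal rotation is the Hamiltonian vector field of the quadratic form. -/
lemma symp_rot (σ : Fin 2 → ℝ) (l : ℝ) (z w : Fin 2 → ℂ) :
    stdSymp 2 (fun i => 2 * π * Complex.I * (l * σ i : ℝ) * z i) w = - (l * fderiv ℝ (quad σ) z w) := by
  rw [fderiv_quad]
  simp only [stdSymp, Fin.sum_univ_two]
  simp
  ring

lemma symp_rot_self (σ : Fin 2 → ℝ) (l : ℝ) (z : Fin 2 → ℂ) :
    stdSymp 2 z (fun i => 2 * π * Complex.I * (l * σ i : ℝ) * z i) = 2 * (l * quad σ z) := by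
  simp only [stdSymp, Fin.sum_univ_two, quad, norm_sq_re_im]
  simp
  ring

lemma fderiv_quad_self (σ : Fin 2 → ℝ) (z : Fin 2 → ℂ) : fderiv ℝ (quad σ) z z = 2 * quad σ z := by
  rw [fderiv_quad]
  simp only [Fin.sum_univ_two, quad, norm_sq_re_im]
  simp
  ring

lemma convexOn_quad {σ : Fin 2 → ℝ} (hσ : ∀ i, 0 ≤ σ i) : ConvexOn ℝ univ (quad σ) := by
  refine ⟨convex_univ, fun x _ y _ a b ha hb hab => ?_⟩
  have key : ∀ u v : ℝ, (a * u + b * v) ^ 2 ≤ a * u ^ 2 + b * v ^ 2 := by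
    intro u v
    have : b = 1 - a := by linarith
    subst this
    nlinarith [mul_nonneg ha hb, sq_nonneg (u - v), mul_nonneg (mul_nonneg ha hb) (sq_nonneg (u - v))]
  have k2 : ∀ i, ‖(a • x + b • y) i‖ ^ 2 ≤ a * ‖x i‖ ^ 2 + b * ‖y i‖ ^ 2 := by
    intro i
    rw [norm_sq_re_im, norm_sq_re_im, norm_sq_re_im]
    have e1 := key (x i).re (y i).re
    have e2 := key (x i).im (y i).im
    simp
    linarith
  simp only [quad, smul_eq_mul, Fin.sum_univ_two]
  have e0 := mul_le_mul_of_nonneg_left (k2 0) (hσ 0)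
  have e1 := mul_le_mul_of_nonneg_left (k2 1) (hσ 1)
  have := mul_le_mul_of_nonneg_left (add_le_add e0 e1) Real.pi_pos.le
  linarith

lemma isOpen_quad_lt (σ : Fin 2 → ℝ) (r : ℝ) : IsOpen {z | quad σ z < r} :=
  isOpen_lt (contDiff_quad σ).continuous continuous_const

lemma isCompact_quad_le {σ : Fin 2 → ℝ} (hσ : ∀ i, 0 < σ i) (r : ℝ) :
    IsCompact {z | quad σ z ≤ r} := by
  refine Metric.isCompact_of_isClosed_isBounded
    (isClosed_le (contDiff_quad σ).continuous continuous_const) ?_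
  set μ := min (σ 0) (σ 1) with hμ
  have hμ0 : 0 < μ := lt_min (hσ 0) (hσ 1)
  rw [Metric.isBounded_iff_subset_closedBall 0]
  refine ⟨r / (π * μ) + 1, fun z hz => ?_⟩
  have hz' : quad σ z ≤ r := hz
  have hr : 0 ≤ r / (π * μ) := by
    have : 0 ≤ quad σ z := by
      have h0 := (hσ 0).le
      have h1 := (hσ 1).le
      simp only [quad, Fin.sum_univ_two]; positivity
    have := this.trans hz'
    positivity
  rw [mem_closedBall_zero_iff]
  refine (pi_norm_le_iff_of_nonneg (by positivity)).2 fun i => ?_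
  have h1 : π * (μ * ‖z i‖ ^ 2) ≤ quad σ z := by
    simp only [quad]
    refine mul_le_mul_of_nonneg_left ?_ Real.pi_pos.le
    have h2 : μ ≤ σ i := by fin_cases i; exacts [min_le_left _ _, min_le_right _ _]
    calc μ * ‖z i‖ ^ 2 ≤ σ i * ‖z i‖ ^ 2 := by gcongr
      _ ≤ _ := Finset.single_le_sum (f := fun i => σ i * ‖z i‖ ^ 2)
        (fun j _ => mul_nonneg (hσ j).le (sq_nonneg _)) (Finset.mem_univ i)
  have h2 : ‖z i‖ ^ 2 ≤ r / (π * μ) := by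
    rw [le_div_iff₀ (by positivity)]; nlinarith
  nlinarith [sq_nonneg (‖z i‖ - 1)]

/-- The difference of the Liouville form and its pull-back by a symplectic map is exact. -/
lemma SympMap.primitive {φ : (Fin 2 → ℂ) → (Fin 2 → ℂ)} {U : Set (Fin 2 → ℂ)} (h : SympMap φ U)
    (hU : Convex ℝ U) : ∃ P : (Fin 2 → ℂ) → ℝ, ∀ z ∈ U, ∃ L : (Fin 2 → ℂ) →L[ℝ] ℝ,
      HasFDerivAt P L z ∧
      ∀ v, L v = stdSymp 2 (φ z) (fderiv ℝ φ z v) - stdSymp 2 z v := by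
  set α : (Fin 2 → ℂ) → (Fin 2 → ℂ) →L[ℝ] ℝ := fun z => (sympB (φ z)).comp (fderiv ℝ φ z) - sympB z
  have hd : ∀ z ∈ U, HasFDerivAt (fderiv ℝ φ) (fderiv ℝ (fderiv ℝ φ) z) z := fun z hz => by
    have h1 : ContDiffAt ℝ 1 (fderiv ℝ φ) z :=
      (h.contDiffAt hz).fderiv_right (by norm_cast)
    exact (h1.differentiableAt (by simp)).hasFDerivAt
  have hα : ∀ z ∈ U, ∃ A, HasFDerivAt α A z ∧ ∀ x y, A x y =
      stdSymp 2 (φ z) (fderiv ℝ (fderiv ℝ φ) z x y) := fun z hz => by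
    have h1 := ((sympB.hasFDerivAt (x := φ z)).comp z (h.hasFDerivAt hz)).clm_comp (hd z hz)
    have h2 := h1.sub (sympB.hasFDerivAt (x := z))
    refine ⟨_, h2, fun x y => ?_⟩
    simp [h.symp z hz]
  obtain ⟨P, hP⟩ := hU.exists_forall_hasFDerivAt_of_fderiv_symmetric h.isOpen (ω := α)
    (fun z hz => (hα z hz).choose_spec.1.differentiableAt.differentiableWithinAt)
    (fun z hz x y => by
      obtain ⟨A, hA, hA'⟩ := hα z hz
      rw [hA.fderiv, hA', hA', (h.contDiffAt hz).isSymmSndFDerivAt (by simp; norm_cast)])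
  exact ⟨P, fun z hz => ⟨_, hP z hz, fun v => rfl⟩⟩

/-! ### The Hamiltonian attached to an embedding of an ellipsoid -/

/-- A symplectic embedding `φ` of the open ellipsoid `{quad s < 1}` into `{quad q ≤ 1}`, together
with the profile `f` used inside the image of `φ` and the profile `g` used outside. -/
structure EmbSetup where
  φ : (Fin 2 → ℂ) → (Fin 2 → ℂ)
  s : Fin 2 → ℝ
  q : Fin 2 → ℝ
  hs : ∀ i, 0 < s i
  hq : ∀ i, 0 < q i
  hφ : SympMap φ {z | quad s z < 1}
  hφq : ∀ z, quad s z < 1 → quad q (φ z) ≤ 1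
  f : ℝ → ℝ
  f' : ℝ → ℝ
  δ : ℝ
  m : ℝ
  hδ0 : 0 < δ
  hδ1 : δ < 1 / 8
  f_smooth : ContDiff ℝ (⊤ : ℕ∞) f
  f_deriv : ∀ x, HasDerivAt f (f' x) x
  f_nonneg : ∀ x, 0 ≤ f x
  f_zero : ∀ x, x ≤ δ → f x = 0
  f_one : ∀ x, 1 - δ ≤ x → f x = m
  g : ℝ → ℝ
  g' : ℝ → ℝ
  k : ℝ
  T : ℝ
  c₀ : ℝ
  hk : 0 < k
  hm : 0 ≤ m
  g_smooth : ContDiff ℝ (⊤ : ℕ∞) g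
  g_deriv : ∀ x, HasDerivAt g (g' x) x
  g_one : ∀ x, x ≤ 1 → g x = m
  g'_one : ∀ x, x ≤ 1 → g' x = 0
  g'_le : ∀ x, g' x ≤ k
  g_ge : ∀ x, m ≤ g x
  g_lower : ∀ x, k * x ≤ g x
  g_infty : ∀ x, T ≤ x → g x = k * x + c₀

namespace EmbSetup

variable (S : EmbSetup)

/-- The domain of the embedding. -/
def U : Set (Fin 2 → ℂ) := {z | quad S.s z < 1}

/-- The Hamiltonian: `f ∘ quad s` transported by `φ`, and `g ∘ quad q` outside of the image. -/
def H (y : Fin 2 → ℂ) : ℝ := S.g (quad S.q y) + push S.φ S.U (fun z => S.f (quad S.s z) - S.m) y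

/-- The compact part of the domain outside of which the transported function vanishes. -/
def Kc : Set (Fin 2 → ℂ) := {z | quad S.s z ≤ 1 - S.δ}

lemma Kc_sub : S.Kc ⊆ S.U := fun z hz => by
  have : quad S.s z ≤ 1 - S.δ := hz
  have := S.hδ0
  change quad S.s z < 1
  linarith

lemma Kc_compact : IsCompact S.Kc := isCompact_quad_le S.hs _

lemma supp : ∀ x ∈ S.U, x ∉ S.Kc → S.f (quad S.s x) - S.m = 0 := fun x _ hx => by
  have : ¬ quad S.s x ≤ 1 - S.δ := hx
  rw [S.f_one _ (by linarith), sub_self]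

lemma map : SympMap S.φ S.U := S.hφ

lemma H_in {z : Fin 2 → ℂ} (hz : z ∈ S.U) : S.H (S.φ z) = S.f (quad S.s z) := by
  rw [H, push_apply S.map _ hz, S.g_one _ (S.hφq z hz)]; ring

lemma H_out {y : Fin 2 → ℂ} (hy : y ∉ S.φ '' S.Kc) : S.H y = S.g (quad S.q y) := by
  rw [H, push_eq_zero S.map S.supp hy, add_zero]

lemma isClosed_img : IsClosed (S.φ '' S.Kc) :=
  (isCompact_image_of S.map S.Kc_compact S.Kc_sub).isClosed

lemma H_smooth : ContDiff ℝ (⊤ : ℕ∞) S.H :=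
  (S.g_smooth.comp (contDiff_quad _)).add (push_smooth S.map S.Kc_compact S.Kc_sub S.supp
    ((S.f_smooth.comp (contDiff_quad _)).sub contDiff_const))

lemma quad_nonneg {σ : Fin 2 → ℝ} (hσ : ∀ i, 0 < σ i) (z : Fin 2 → ℂ) : 0 ≤ quad σ z :=
  mul_nonneg Real.pi_pos.le (Finset.sum_nonneg fun i _ => mul_nonneg (hσ i).le (sq_nonneg _))

lemma quad_smul (k : ℝ) (σ : Fin 2 → ℝ) (z : Fin 2 → ℂ) :
    quad (fun i => k * σ i) z = k * quad σ z := by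
  simp only [quad, Fin.sum_univ_two]; ring

lemma zero_mem : (0 : Fin 2 → ℂ) ∈ S.U := by
  change quad S.s 0 < 1
  simp [quad]

lemma good (hn : ∀ i (l : ℤ), (l : ℝ) ≠ S.k * S.q i) : GoodH S.H fun i => S.k * S.q i := by
  refine ⟨S.H_smooth, hn, ⟨S.c₀, ?_⟩, fun z => ?_, ⟨S.k, S.hk.le, fun z => ?_⟩, ⟨S.φ 0, ?_⟩⟩
  · refine HasCompactSupport.intro ((isCompact_quad_le S.hq S.T).union
      (isCompact_image_of S.map S.Kc_compact S.Kc_sub)) fun y hy => ?_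
    rw [mem_union, not_or] at hy
    have h1 : ¬ quad S.q y ≤ S.T := hy.1
    rw [S.H_out hy.2, S.g_infty _ (not_le.1 h1).le, quad_smul]; ring
  · by_cases hz : z ∈ S.φ '' S.U
    · obtain ⟨x, hx, rfl⟩ := hz
      rw [S.H_in hx]; exact S.f_nonneg _
    · rw [S.H_out fun h => hz (image_mono S.Kc_sub h)]
      exact S.hm.trans (S.g_ge _)
  · rw [quad_smul]
    by_cases hz : z ∈ S.φ '' S.U
    · obtain ⟨x, hx, rfl⟩ := hz
      rw [S.H_in hx]
      have h1 := S.f_nonneg (quad S.s x)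
      have h2 := S.hφq x hx
      have h3 := S.hk
      nlinarith
    · rw [S.H_out fun h => hz (image_mono S.Kc_sub h)]
      linarith [S.g_lower (quad S.q z), S.hk]
  · have hV : {z | quad S.s z < S.δ} ⊆ S.U := fun z hz => by
      have h1 : quad S.s z < S.δ := hz
      have := S.hδ1
      change quad S.s z < 1
      linarith
    have h1 := (S.map.mono (isOpen_quad_lt S.s S.δ) hV).isOpen_image
    filter_upwards [h1.mem_nhds (mem_image_of_mem _ (by simp [quad, S.hδ0]))] with y hy
    obtain ⟨z, hz, rfl⟩ := hy
    rw [S.H_in (hV hz), S.f_zero _ (le_of_lt hz)]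

/-- The candidate solution through `φ ξ`. -/
lemma hode_in {ξ : Fin 2 → ℂ} (hξ : ξ ∈ S.U) :
    HOde S.H fun t => S.φ (rot (fun i => S.f' (quad S.s ξ) * S.s i) ξ t) := by
  intro t
  set l := S.f' (quad S.s ξ) with hl
  set z := rot (fun i => l * S.s i) ξ t with hz
  have hzs : quad S.s z = quad S.s ξ := quad_rot _ _ _ _
  have hzU : z ∈ S.U := by change quad S.s z < 1; rw [hzs]; exact hξ
  refine ⟨_, (S.map.hasFDerivAt hzU).comp_hasDerivAt t (hasDerivAt_rot _ ξ t), fun w => ?_⟩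
  obtain ⟨w', rfl⟩ := S.map.surj hzU w
  rw [S.map.symp z hzU, ← hz, symp_rot]
  have h1 : HasFDerivAt (S.H ∘ S.φ) ((fderiv ℝ S.H (S.φ z)).comp (fderiv ℝ S.φ z)) z :=
    (S.H_smooth.differentiable (by simp) _).hasFDerivAt.comp z (S.map.hasFDerivAt hzU)
  have h2 : HasFDerivAt (fun z => S.f (quad S.s z)) (l • fderiv ℝ (quad S.s) z) z := by
    have h3 := ((contDiff_quad S.s).differentiable (by simp) z).hasFDerivAt
    have h4 := (S.f_deriv (quad S.s z)).comp_hasFDerivAt z h3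
    rw [hzs, ← hl] at h4
    exact h4
  have h5 : (S.H ∘ S.φ) =ᶠ[nhds z] fun z => S.f (quad S.s z) := by
    filter_upwards [S.map.isOpen.mem_nhds hzU] with y hy
    exact S.H_in hy
  have h6 := (h1.congr_of_eventuallyEq h5.symm).unique h2
  have h7 := congrArg (fun L => L w') h6
  simp only [ContinuousLinearMap.comp_apply, smul_apply, smul_eq_mul] at h7
  rw [h7]

lemma HSol.action_eq {H : (Fin 2 → ℂ) → ℝ} {x : ℝ → Fin 2 → ℂ} {v : Fin 2 → ℂ} {t : ℝ}
    (h : ∀ w, stdSymp 2 v w = - fderiv ℝ H (x t) w) :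
    fderiv ℝ H (x t) (x t) = stdSymp 2 (x t) v := by
  rw [stdSymp_swap, h]; ring

/-- Periodic solutions starting in the image of `φ` come from the linear flow on the ellipsoid. -/
lemma classify_in {σ : Fin 2 → ℝ} (hG : GoodH S.H σ) {x : ℝ → Fin 2 → ℂ} (hx : HSol S.H x)
    {ξ : Fin 2 → ℂ} (hξ : ξ ∈ S.U) (h0 : x 0 = S.φ ξ) :
    (x = fun t => S.φ (rot (fun i => S.f' (quad S.s ξ) * S.s i) ξ t)) ∧
    rot (fun i => S.f' (quad S.s ξ) * S.s i) ξ 1 = ξ ∧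
    hact S.H x = S.f' (quad S.s ξ) * quad S.s ξ - S.f (quad S.s ξ) := by
  set l := S.f' (quad S.s ξ) with hl
  set γ := rot (fun i => l * S.s i) ξ with hγ
  have hode := S.hode_in hξ
  have hxγ : x = fun t => S.φ (γ t) := hG.unique hx.2 hode (by simp [h0, hγ])
  have hγs : ∀ t, quad S.s (γ t) = quad S.s ξ := fun t => quad_rot _ _ _ _
  have hγU : ∀ t, γ t ∈ S.U := fun t => by change quad S.s (γ t) < 1; rw [hγs]; exact hξ
  have hper : γ 1 = ξ := by
    have h1 := hx.1 0
    rw [hxγ] at h1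
    have h2 := S.map.inj (hγU _) (hγU _) h1
    simpa [hγ] using h2
  refine ⟨hxγ, hper, ?_⟩
  have hUc : Convex ℝ S.U := by
    have := (convexOn_quad fun i => (S.hs i).le).convex_lt 1
    simpa [U] using this
  obtain ⟨P, hP⟩ := S.map.primitive hUc
  have hcont : Continuous x := by
    rw [continuous_iff_continuousAt]
    intro t
    obtain ⟨v, hv, -⟩ := hx.2 t
    exact hv.continuousAt
  have hfc : Continuous fun t => fderiv ℝ S.H (x t) (x t) :=
    ((S.H_smooth.continuous_fderiv (by simp)).comp hcont).clm_apply hcont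
  have hder : ∀ t, HasDerivAt (fun t => P (γ t))
      (fderiv ℝ S.H (x t) (x t) - 2 * (l * quad S.s ξ)) t := by
    intro t
    obtain ⟨L, hL, hLv⟩ := hP (γ t) (hγU t)
    have h1 := hL.comp_hasDerivAt t (hasDerivAt_rot (fun i => l * S.s i) ξ t)
    refine h1.congr_deriv ?_
    rw [hLv]
    change _ - stdSymp 2 (γ t) (fun i => 2 * π * Complex.I * (l * S.s i : ℝ) * γ t i) = _
    rw [symp_rot_self, hγs]
    congr 1
    obtain ⟨v, hv, hw⟩ := hx.2 t
    rw [HSol.action_eq hw]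
    have h2 : HasDerivAt x (fderiv ℝ S.φ (γ t) (fun i => 2 * π * Complex.I * (l * S.s i : ℝ) * γ t i)) t := by
      rw [hxγ]
      exact (S.map.hasFDerivAt (hγU t)).comp_hasDerivAt t (hasDerivAt_rot (fun i => l * S.s i) ξ t)
    rw [hv.unique h2, hxγ]
  have hInt := intervalIntegral.integral_eq_sub_of_hasDerivAt (a := 0) (b := 1)
    (fun t _ => hder t) ((hfc.sub continuous_const).intervalIntegrable _ _)
  rw [hper, show γ 0 = ξ from rot_zero _ _, sub_self, intervalIntegral.integral_sub
    (hfc.intervalIntegrable _ _) (continuous_const.intervalIntegrable _ _)] at hInt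
  have hHx : ∀ t, S.H (x t) = S.f (quad S.s ξ) := fun t => by
    rw [hxγ]; exact (S.H_in (hγU t)).trans (by rw [hγs])
  have hi1 : IntervalIntegrable (fun t => 1 / 2 * fderiv ℝ S.H (x t) (x t)) volume 0 1 :=
    (continuous_const.mul hfc).intervalIntegrable _ _
  have hi2 : IntervalIntegrable (fun _ : ℝ => S.f (quad S.s ξ)) volume 0 1 :=
    continuous_const.intervalIntegrable _ _
  rw [hact]
  simp only [hHx]
  rw [intervalIntegral.integral_sub hi1 hi2, intervalIntegral.integral_const_mul]
  simp only [intervalIntegral.integral_const, sub_zero, one_smul] at hInt ⊢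
  linarith

/-- Periodic solutions starting outside of the image of `φ` have nonpositive action. -/
lemma classify_out {σ : Fin 2 → ℝ} (hG : GoodH S.H σ) {x : ℝ → Fin 2 → ℂ} (hx : HSol S.H x)
    (h0 : x 0 ∉ S.φ '' S.U) : hact S.H x ≤ 0 := by
  set z := x 0 with hz
  set l := S.g' (quad S.q z) with hl
  set γ := rot (fun i => l * S.q i) z with hγ
  have hγq : ∀ t, quad S.q (γ t) = quad S.q z := fun t => quad_rot _ _ _ _
  have hγU : ∀ t, γ t ∉ S.φ '' S.Kc := by
    intro t
    by_cases h1 : quad S.q z ≤ 1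
    · have hl0 : l = 0 := S.g'_one _ h1
      have : γ t = z := by funext i; simp [hγ, rot, hl0]
      rw [this]
      exact fun h => h0 (image_mono S.Kc_sub h)
    · rintro ⟨y, hy, hyt⟩
      have h2 := S.hφq y (S.Kc_sub hy)
      rw [hyt, hγq] at h2
      exact h1 h2
  have hd : ∀ t, HasFDerivAt S.H (l • fderiv ℝ (quad S.q) (γ t)) (γ t) := by
    intro t
    have h3 := ((contDiff_quad S.q).differentiable (by simp) (γ t)).hasFDerivAt
    have h4 := (S.g_deriv (quad S.q (γ t))).comp_hasFDerivAt (γ t) h3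
    rw [hγq, ← hl] at h4
    refine h4.congr_of_eventuallyEq ?_
    filter_upwards [S.isClosed_img.isOpen_compl.mem_nhds (hγU t)] with y hy
    exact S.H_out hy
  have hode : HOde S.H γ := by
    intro t
    refine ⟨_, hasDerivAt_rot _ z t, fun w => ?_⟩
    rw [← hγ, symp_rot, (hd t).fderiv]
    rfl
  have hxγ : x = γ := hG.unique hx.2 hode (by simp [hγ, hz])
  have hval : ∀ t, 1 / 2 * fderiv ℝ S.H (x t) (x t) - S.H (x t) =
      l * quad S.q z - S.g (quad S.q z) := by
    intro t
    rw [hxγ, (hd t).fderiv, S.H_out (hγU t), smul_apply, smul_eq_mul, fderiv_quad_self, hγq]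
    ring
  rw [hact]
  simp only [hval]
  rw [intervalIntegral.integral_const]
  simp only [sub_zero, one_smul]
  have h1 := S.g_lower (quad S.q z)
  have h2 := mul_le_mul_of_nonneg_right (S.g'_le (quad S.q z)) (quad_nonneg S.hq z)
  linarith

/-- A fixed point of a rotation by a non-integral angle vanishes. -/
lemma rot_fix {τ : Fin 2 → ℝ} {ξ : Fin 2 → ℂ} (h : rot τ ξ 1 = ξ) (i : Fin 2)
    (hτ : ∀ n : ℤ, τ i ≠ n) : ξ i = 0 := by
  by_contra h0
  have h1 := congrFun h i
  simp only [rot] at h1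
  have h2 : Complex.exp (2 * π * Complex.I * τ i * (1:ℝ)) = 1 :=
    mul_left_cancel₀ h0 (by rw [h1, mul_one])
  rw [Complex.exp_eq_one_iff] at h2
  obtain ⟨n, hn⟩ := h2
  apply hτ n
  have h3 : (2 * π * Complex.I : ℂ) ≠ 0 := by simp [Real.pi_ne_zero]
  have h4 : (2 * π * Complex.I : ℂ) * (τ i : ℂ) = (2 * π * Complex.I) * ((n : ℝ) : ℂ) := by
    push_cast at hn ⊢; linear_combination hn
  exact_mod_cast mul_left_cancel₀ h3 h4

end EmbSetup

/-! ### The two obstructions -/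

lemma exists_setup {φ : (Fin 2 → ℂ) → (Fin 2 → ℂ)} {s q : Fin 2 → ℝ} (hs : ∀ i, 0 < s i)
    (hq : ∀ i, 0 < q i) (hφ : SympMap φ {z | quad s z < 1})
    (hφq : ∀ z, quad s z < 1 → quad q (φ z) ≤ 1) {κ m₀ k : ℝ} (hk : 0 < k) (hkm : k ≤ m₀)
    (hm : m₀ < κ) : ∃ S : EmbSetup, S.φ = φ ∧ S.s = s ∧ S.q = q ∧ S.k = k ∧ m₀ < S.m ∧
      (∀ x, 0 ≤ S.f' x) ∧ (∀ x, S.f' x ≤ κ) ∧ (∀ x, 1 - S.δ ≤ x → S.f' x = 0) ∧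
      (∀ l s₁ s₂, s₁ ≤ 1 / 2 → s₂ ≤ 1 / 2 → S.f' s₁ = l → S.f' s₂ = l →
        l * s₁ - S.f s₁ = l * s₂ - S.f s₂) ∧
      (∀ l s, 1 / 2 ≤ s → s ≤ 1 → S.f' s = l → l * s - S.f s ≤ l - S.m) := by
  obtain ⟨f, f', δ, m, hδ0, hδ1, hmm, hfs, hfd, hf0, hfκ, hfn, hfz, hf1, hf'1, hA, hB⟩ :=
    exists_profile (κ := κ) (m := m₀) (by linarith) hm
  obtain ⟨g, g', T, c₀, hgs, hgd, hg1, hg'1, hg'0, hg'k, hgm, hgk, hgT⟩ :=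
    exists_profile_infty (κ := k) (m := m) hk (by linarith)
  exact ⟨⟨φ, s, q, hs, hq, hφ, hφq, f, f', δ, m, hδ0, hδ1, hfs, hfd, hfn, hfz, hf1, g, g', k, T, c₀,
    hk, by linarith, hgs, hgd, hg1, hg'1, hg'k, hgm, hgk, hgT⟩, rfl, rfl, rfl, rfl, hmm, hf0, hfκ,
    hf'1, hA, hB⟩

lemma not_int_of_mem_Ioo {x : ℝ} {n : ℤ} (h1 : (n : ℝ) < x) (h2 : x < n + 1) (l : ℤ) : x ≠ l := by
  rintro rfl
  have a1 : n < l := by exact_mod_cast h1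
  have a2 : l < n + 1 := by exact_mod_cast h2
  omega

/-- Gromov-type non-squeezing for `E(c/2, c)`. -/
theorem obstructionA {φ : (Fin 2 → ℂ) → (Fin 2 → ℂ)} {c a₁ a₂ : ℝ} (hc : 0 < c) (ha₁ : 0 < a₁)
    (ha : 2 * a₁ ≤ a₂) (hφ : SympMap φ {z | quad ![2 / c, 1 / c] z < 1})
    (hφq : ∀ z, quad ![2 / c, 1 / c] z < 1 → quad ![1 / a₁, 1 / a₂] (φ z) ≤ 1) : c / 2 ≤ a₁ := by
  by_contra! hlt
  have ha₂ : 0 < a₂ := by linarith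
  obtain ⟨κ, h1, h2, h3⟩ : ∃ κ, a₁ < κ ∧ κ < c / 2 ∧ κ < 2 * a₁ := by
    obtain ⟨κ, h1, h2⟩ := exists_between (lt_min hlt (show a₁ < 2 * a₁ by linarith))
    exact ⟨κ, h1, h2.trans_le (min_le_left _ _), h2.trans_le (min_le_right _ _)⟩
  obtain ⟨k, hk1, hk2⟩ := exists_between h1
  obtain ⟨S, rfl, hSs, hSq, hSk, hm, hf0, hfκ, hf1, -, -⟩ := exists_setup (s := ![2 / c, 1 / c])
    (q := ![1 / a₁, 1 / a₂]) (κ := κ) (m₀ := k) (k := k)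
    (by intro i; fin_cases i <;> simp [hc]) (by intro i; fin_cases i <;> simp [ha₁, ha₂]) hφ hφq
    (by linarith) le_rfl hk2
  have e0 : S.k * S.q 0 = k / a₁ := by rw [hSk, hSq]; simp [div_eq_mul_inv]
  have e1 : S.k * S.q 1 = k / a₂ := by rw [hSk, hSq]; simp [div_eq_mul_inv]
  have hk0 : 0 < k := by linarith
  have hs0 : S.s 0 = 2 / c := by rw [hSs]; rfl
  have hs1 : S.s 1 = 1 / c := by rw [hSs]; rfl
  have g0 : 1 < k / a₁ := by rw [lt_div_iff₀ ha₁]; linarith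
  have g0' : k / a₁ < 2 := by rw [div_lt_iff₀ ha₁]; linarith
  have g1 : 0 < k / a₂ := by positivity
  have g1' : k / a₂ < 1 := by rw [div_lt_iff₀ ha₂]; linarith
  have hG := S.good (by
    intro i l
    fin_cases i
    · change _ ≠ S.k * S.q 0
      rw [e0]
      exact (not_int_of_mem_Ioo (n := 1) (by exact_mod_cast g0) (by norm_num; exact g0') l).symm
    · change _ ≠ S.k * S.q 1
      rw [e1]
      exact (not_int_of_mem_Ioo (n := 0) (by exact_mod_cast g1) (by norm_num; exact g1') l).symm)
  obtain ⟨x, hx, hpos⟩ := exists_hsolA hG (by rw [e0]; exact g0) (by rw [e1]; exact g1)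
  by_cases h0 : x 0 ∈ S.φ '' S.U
  · obtain ⟨ξ, hξ, hξ0⟩ := h0
    obtain ⟨-, hper, hact⟩ := S.classify_in hG hx hξ hξ0.symm
    set l := S.f' (quad S.s ξ) with hl
    have hfn := S.f_nonneg (quad S.s ξ)
    rcases (hf0 (quad S.s ξ)).eq_or_lt with h | h
    · rw [← hl] at h
      rw [hact, ← h] at hpos
      linarith
    · rw [← hl] at h
      have hlκ : l < c / 2 := (hfκ _).trans_lt h2
      have z0 : ξ 0 = 0 := EmbSetup.rot_fix hper 0 (by
        intro n
        refine not_int_of_mem_Ioo (n := 0) ?_ ?_ n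
        · simp only [hs0]; push_cast; positivity
        · simp only [hs0]; push_cast; rw [← mul_div_assoc, div_lt_iff₀ hc]; linarith)
      have z1 : ξ 1 = 0 := EmbSetup.rot_fix hper 1 (by
        intro n
        refine not_int_of_mem_Ioo (n := 0) ?_ ?_ n
        · simp only [hs1]; push_cast; positivity
        · simp only [hs1]; push_cast; rw [← mul_div_assoc, div_lt_iff₀ hc]; linarith)
      have : quad S.s ξ = 0 := by simp [quad, z0, z1]
      rw [hact, this] at hpos
      rw [this] at hfn
      linarith
  · linarith [S.classify_out hG hx h0]

/-- The second obstruction for `E(c/2, c)`, for balls as targets. -/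
theorem obstructionB {φ : (Fin 2 → ℂ) → (Fin 2 → ℂ)} {c w : ℝ} (hc : 0 < c) (hw : 0 < w)
    (hφ : SympMap φ {z | quad ![2 / c, 1 / c] z < 1})
    (hφq : ∀ z, quad ![2 / c, 1 / c] z < 1 → quad ![1 / w, 1 / w] (φ z) ≤ 1) : c ≤ w := by
  by_contra! hlt
  obtain ⟨κ, h1, h2⟩ := exists_between (max_lt hlt (show c / 2 < c by linarith))
  obtain ⟨m₀, hm1, hm2⟩ := exists_between h1
  have hmw : w < m₀ := (le_max_left _ _).trans_lt hm1
  have hmc : c / 2 < m₀ := (le_max_right _ _).trans_lt hm1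
  obtain ⟨k, hk1, hk2⟩ := exists_between (lt_min hmw (show w < 2 * w by linarith))
  have hkm : k < m₀ := hk2.trans_le (min_le_left _ _)
  have hkw : k < 2 * w := hk2.trans_le (min_le_right _ _)
  obtain ⟨S, rfl, hSs, hSq, hSk, hm, hf0, hfκ, hf1, hA, hB⟩ := exists_setup (s := ![2 / c, 1 / c])
    (q := ![1 / w, 1 / w]) (κ := κ) (m₀ := m₀) (k := k)
    (by intro i; fin_cases i <;> simp [hc]) (by intro i; fin_cases i <;> simp [hw]) hφ hφq
    (by linarith) hkm.le hm2
  have e0 : ∀ i, S.k * S.q i = k / w := by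
    intro i; rw [hSk, hSq]; fin_cases i <;> simp [div_eq_mul_inv]
  have hs0 : S.s 0 = 2 / c := by rw [hSs]; rfl
  have hs1 : S.s 1 = 1 / c := by rw [hSs]; rfl
  have g0 : 1 < k / w := by rw [lt_div_iff₀ hw]; linarith
  have g0' : k / w < 2 := by rw [div_lt_iff₀ hw]; linarith
  have hG := S.good (by
    intro i l
    rw [e0]
    exact (not_int_of_mem_Ioo (n := 1) (by exact_mod_cast g0) (by norm_num; exact g0') l).symm)
  -- the cut-off coordinate function, transported by the embedding
  set χ : ℝ → ℝ := fun r => Real.smoothTransition ((1 - S.δ / 2 - r) / (S.δ / 2)) with hχ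
  have hδ := S.hδ0
  have hδ' := S.hδ1
  have hχs : ContDiff ℝ (⊤ : ℕ∞) χ := Real.smoothTransition.contDiff.comp
    ((contDiff_const.sub contDiff_id).div_const _)
  have hχ1 : ∀ r, r ≤ 1 - S.δ → χ r = 1 := fun r hr => by
    refine Real.smoothTransition.one_of_one_le ?_
    rw [le_div_iff₀ (by positivity)]; linarith
  have hχ0 : ∀ r, 1 - S.δ / 2 ≤ r → χ r = 0 := fun r hr => by
    refine Real.smoothTransition.zero_of_nonpos ?_
    exact div_nonpos_of_nonpos_of_nonneg (by linarith) (by positivity)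
  set F : (Fin 2 → ℂ) → ℂ := fun z => χ (quad S.s z) • z 0 with hF
  have hFs : ContDiff ℝ (⊤ : ℕ∞) F :=
    (hχs.comp (contDiff_quad S.s)).smul (contDiff_apply ℝ ℂ (0 : Fin 2))
  have hK : IsCompact {z | quad S.s z ≤ 1 - S.δ / 2} := isCompact_quad_le S.hs _
  have hKU : {z | quad S.s z ≤ 1 - S.δ / 2} ⊆ S.U := fun z hz => by
    have : quad S.s z ≤ 1 - S.δ / 2 := hz
    change quad S.s z < 1
    linarith
  have hsupp : ∀ z ∈ S.U, z ∉ {z | quad S.s z ≤ 1 - S.δ / 2} → F z = 0 := fun z _ hz => by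
    have : ¬ quad S.s z ≤ 1 - S.δ / 2 := hz
    simp [hF, hχ0 _ (not_le.1 this).le]
  -- the only possible positive action value
  obtain ⟨a₀, ha₀⟩ : ∃ a₀, ∀ r, r ≤ 1 / 2 → S.f' r = c / 2 → c / 2 * r - S.f r = a₀ := by
    by_cases h : ∃ r, r ≤ 1 / 2 ∧ S.f' r = c / 2
    · obtain ⟨r, hr, hr'⟩ := h
      exact ⟨c / 2 * r - S.f r, fun r₂ h₂ h₂' => hA _ _ _ h₂ hr h₂' hr'⟩
    · exact ⟨0, fun r h₂ h₂' => absurd ⟨r, h₂, h₂'⟩ h⟩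
  obtain ⟨x, hx, hpos, hfc⟩ := exists_hsolB hG (fun i => by rw [e0]; exact g0) (push S.φ S.U F)
    (push_smooth S.map hK hKU hsupp hFs) (push_compact S.map hK hKU hsupp) a₀
  by_cases h0 : x 0 ∈ S.φ '' S.U
  · obtain ⟨ξ, hξ, hξ0⟩ := h0
    obtain ⟨hxe, hper, hact⟩ := S.classify_in hG hx hξ hξ0.symm
    set l := S.f' (quad S.s ξ) with hl
    have hfn := S.f_nonneg (quad S.s ξ)
    rcases (hf0 (quad S.s ξ)).eq_or_lt with h | h
    · rw [← hl] at h
      rw [hact, ← h] at hpos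
      linarith
    rw [← hl] at h
    have hlκ : l < c := (hfκ _).trans_lt h2
    have z1 : ξ 1 = 0 := EmbSetup.rot_fix hper 1 (by
      intro n
      refine not_int_of_mem_Ioo (n := 0) ?_ ?_ n
      · simp only [hs1]; push_cast; positivity
      · simp only [hs1]; push_cast; rw [← mul_div_assoc, div_lt_iff₀ hc]; linarith)
    have z0 : ξ 0 ≠ 0 := by
      intro z0
      have : quad S.s ξ = 0 := by simp [quad, z0, z1]
      rw [hact, this] at hpos
      rw [this] at hfn
      linarith
    have hlc : l = c / 2 := by
      by_contra hne
      refine z0 (EmbSetup.rot_fix hper 0 ?_)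
      intro n
      rcases lt_or_gt_of_ne hne with hlt' | hgt
      · refine not_int_of_mem_Ioo (n := 0) ?_ ?_ n
        · simp only [hs0]; push_cast; positivity
        · simp only [hs0]; push_cast; rw [← mul_div_assoc, div_lt_iff₀ hc]; linarith
      · refine not_int_of_mem_Ioo (n := 1) ?_ ?_ n
        · simp only [hs0]; push_cast; rw [← mul_div_assoc, lt_div_iff₀ hc]; linarith
        · simp only [hs0]; push_cast; rw [← mul_div_assoc, div_lt_iff₀ hc]; linarith
    have hle : quad S.s ξ ≤ 1 / 2 := by
      by_contra! hgt
      have h3 : quad S.s ξ < 1 := hξ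
      have := hB l _ hgt.le h3.le rfl
      rw [← hact, hlc] at this
      linarith
    have h4 := hfc (by rw [hact, hlc]; exact ha₀ _ hle (by rw [← hlc]))
    have h5 : ∀ t, push S.φ S.U F (x t) = ξ 0 * ex 1 t := by
      intro t
      have hzs : quad S.s (rot (fun i => l * S.s i) ξ t) = quad S.s ξ := quad_rot _ _ _ _
      rw [hxe]
      change push S.φ S.U F (S.φ (rot (fun i => l * S.s i) ξ t)) = _
      rw [push_apply S.map F (by change quad S.s _ < 1; rw [hzs]; exact hξ)]
      simp only [hF, hzs]
      rw [hχ1 _ (by linarith), one_smul]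
      simp only [rot, ex, hs0, hlc]
      congr 2
      have hcC : (c : ℂ) ≠ 0 := by exact_mod_cast hc.ne'
      push_cast
      field_simp
    have h6 : fc (fun t => push S.φ S.U F (x t)) 1 = ξ 0 := by
      simp only [fc, h5]
      have h7 : ∀ t, ξ 0 * ex 1 t * ex (-1) t = ξ 0 := fun t => by
        rw [mul_assoc, ← ex_add]; simp [ex_zero]
      simp only [h7]
      simp
    exact z0 (h6.symm.trans h4)
  · linarith [S.classify_out hG hx h0]

/-! ### Elementary properties of symplectic embeddings and of `N₂` -/

lemma SympEmb.mono {n : ℕ} {X X' Y Y' : Set (Fin n → ℂ)} (h : SympEmb n X X') (hY : Y ⊆ X)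
    (hY' : X' ⊆ Y') : SympEmb n Y Y' := by
  obtain ⟨φ, h1, h2, h3, h4⟩ := h
  exact ⟨φ, h1.mono hY, ((image_mono hY).trans h2).trans hY', h3.mono (interior_mono hY),
    fun x hx => h4 x (interior_mono hY hx)⟩

lemma SympEmb.refl {n : ℕ} (X : Set (Fin n → ℂ)) : SympEmb n X X :=
  ⟨id, injOn_id _, by simp, contDiffOn_id, fun x _ v w => by simp⟩

lemma SympEmb.of_subset {n : ℕ} {X Y : Set (Fin n → ℂ)} (h : X ⊆ Y) : SympEmb n X Y :=
  (SympEmb.refl X).mono le_rfl h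

lemma SympEmb.trans {X Y Z : Set (Fin 2 → ℂ)} (h : SympEmb 2 X Y) (h' : SympEmb 2 Y Z) :
    SympEmb 2 X Z := by
  obtain ⟨φ, h1, h2, h3, h4⟩ := h
  obtain ⟨ψ, g1, g2, g3, g4⟩ := h'
  have hφ : SympMap φ (interior X) := ⟨isOpen_interior, h3, h1.mono interior_subset, h4⟩
  have hψ : SympMap ψ (interior Y) := ⟨isOpen_interior, g3, g1.mono interior_subset, g4⟩
  have hm : MapsTo φ (interior X) (interior Y) := by
    rw [mapsTo_iff_image_subset]
    exact interior_maximal ((image_mono interior_subset).trans h2) hφ.isOpen_image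
  have hm' : MapsTo φ X Y := mapsTo_iff_image_subset.2 h2
  refine ⟨ψ ∘ φ, g1.comp h1 hm', ?_, g3.comp h3 hm, fun x hx v w => ?_⟩
  · rw [image_comp]; exact (image_mono h2).trans g2
  · rw [((hψ.hasFDerivAt (hm hx)).comp x (hφ.hasFDerivAt hx)).fderiv]
    simp only [ContinuousLinearMap.comp_apply]
    rw [g4 _ (hm hx), h4 x hx]

/-- Exchange of the two coordinates. -/
def swapL : (Fin 2 → ℂ) →L[ℝ] (Fin 2 → ℂ) :=
  ContinuousLinearMap.pi ![ContinuousLinearMap.proj 1, ContinuousLinearMap.proj 0]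

lemma swapL_zero (z : Fin 2 → ℂ) : swapL z 0 = z 1 := rfl
lemma swapL_one (z : Fin 2 → ℂ) : swapL z 1 = z 0 := rfl

lemma ellipsoid_iff {a : Fin 2 → ℝ} {z : Fin 2 → ℂ} :
    z ∈ ellipsoid a ↔ π * ‖z 0‖ ^ 2 / a 0 + π * ‖z 1‖ ^ 2 / a 1 ≤ 1 := by
  simp [ellipsoid, Fin.sum_univ_two]

lemma ellipsoid_mono {a b : Fin 2 → ℝ} (ha : ∀ i, 0 < a i) (h : ∀ i, a i ≤ b i) :
    ellipsoid a ⊆ ellipsoid b := by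
  intro z hz
  rw [ellipsoid_iff] at hz ⊢
  have h0 := ha 0
  have h1 := ha 1
  refine le_trans (add_le_add ?_ ?_) hz
  · exact div_le_div_of_nonneg_left (by positivity) h0 (h 0)
  · exact div_le_div_of_nonneg_left (by positivity) h1 (h 1)

lemma sympEmb_swap (x y : ℝ) : SympEmb 2 (ellipsoid ![x, y]) (ellipsoid ![y, x]) := by
  refine ⟨swapL, fun z _ w _ h => ?_, ?_, swapL.contDiff.contDiffOn, fun z _ v w => ?_⟩
  · have h0 := congrFun h 0
    have h1 := congrFun h 1
    rw [swapL_zero, swapL_zero] at h0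
    rw [swapL_one, swapL_one] at h1
    funext i; fin_cases i; exacts [h1, h0]
  · rintro _ ⟨z, hz, rfl⟩
    rw [ellipsoid_iff] at hz ⊢
    rw [swapL_zero, swapL_one]
    simp at hz ⊢
    linarith
  · rw [swapL.fderiv]
    simp only [stdSymp, Fin.sum_univ_two, swapL_zero, swapL_one]
    ring

lemma nk_two {a : Fin 2 → ℝ} (ha : ∀ i, 0 < a i) :
    Nk 2 a = min (2 * min (a 0) (a 1)) (max (a 0) (a 1)) := by
  set N := min (2 * min (a 0) (a 1)) (max (a 0) (a 1)) with hN
  have h0 := ha 0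
  have h1 := ha 1
  have hset : {t : ℝ | 2 ≤ {p : Fin 2 × ℕ | ((p.2 : ℝ) + 1) * a p.1 ≤ t}.ncard} = Ici N := by
    ext t
    rw [mem_ofPred_eq, mem_Ici]
    constructor
    · intro h
      have hf := Set.finite_of_ncard_pos (s := {p : Fin 2 × ℕ | ((p.2 : ℝ) + 1) * a p.1 ≤ t})
        (by omega)
      obtain ⟨p, q, hp, hq, hne⟩ := (Set.one_lt_ncard_iff hf).1 h
      rw [mem_ofPred_eq] at hp hq
      have hp1 : a p.1 ≤ t := by
        have : (0:ℝ) ≤ p.2 := Nat.cast_nonneg _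
        nlinarith [ha p.1]
      have hq1 : a q.1 ≤ t := by
        have : (0:ℝ) ≤ q.2 := Nat.cast_nonneg _
        nlinarith [ha q.1]
      by_cases hpq : p.1 = q.1
      · have hne2 : p.2 ≠ q.2 := fun h => hne (Prod.ext hpq h)
        have hmin : min (a 0) (a 1) ≤ a p.1 := by
          rcases Fin.exists_fin_two.1 ⟨p.1, rfl⟩ with h | h <;> rw [← h]
          exacts [min_le_left _ _, min_le_right _ _]
        have : 2 * a p.1 ≤ t := by
          rcases lt_or_gt_of_ne hne2 with h | h
          · have h3 : 1 ≤ q.2 := by omega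
            have h4 : (1 : ℝ) ≤ q.2 := by exact_mod_cast h3
            rw [← hpq] at hq
            nlinarith [ha p.1]
          · have h3 : 1 ≤ p.2 := by omega
            have h4 : (1 : ℝ) ≤ p.2 := by exact_mod_cast h3
            nlinarith [ha p.1]
        exact (min_le_left _ _).trans (by linarith)
      · refine (min_le_right _ _).trans ?_
        have : (a 0 ≤ t) ∧ (a 1 ≤ t) := by
          obtain ⟨i, m⟩ := p
          obtain ⟨j, l⟩ := q
          dsimp only at hpq hp1 hq1
          fin_cases i <;> fin_cases j
          · exact absurd rfl hpq
          · exact ⟨hp1, hq1⟩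
          · exact ⟨hq1, hp1⟩
          · exact absurd rfl hpq
        exact max_le this.1 this.2
    · intro h
      have hf : {p : Fin 2 × ℕ | ((p.2 : ℝ) + 1) * a p.1 ≤ t}.Finite := by
        set M := ⌈t / a 0⌉₊ + ⌈t / a 1⌉₊
        refine ((Set.finite_univ (α := Fin 2)).prod (Set.finite_Iic M)).subset fun p hp => ?_
        refine ⟨mem_univ _, ?_⟩
        rw [mem_ofPred_eq] at hp
        have h2 : (p.2 : ℝ) ≤ t / a p.1 := by
          rw [le_div_iff₀ (ha _)]; nlinarith [ha p.1]
        have h3 : p.2 ≤ ⌈t / a p.1⌉₊ := by exact_mod_cast h2.trans (Nat.le_ceil _)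
        refine h3.trans ?_
        rcases Fin.exists_fin_two.1 ⟨p.1, rfl⟩ with h | h <;> rw [h] <;> omega
      have hgoal : 1 < {p : Fin 2 × ℕ | ((p.2 : ℝ) + 1) * a p.1 ≤ t}.ncard := by
        rw [Set.one_lt_ncard_iff hf]
        rcases min_le_iff.1 h with h | h
        · rcases le_total (a 0) (a 1) with hle | hle
          · rw [min_eq_left hle] at h
            refine ⟨(0, 0), (0, 1), ?_, ?_, by simp⟩ <;> simp <;> linarith
          · rw [min_eq_right hle] at h
            refine ⟨(1, 0), (1, 1), ?_, ?_, by simp⟩ <;> simp <;> linarith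
        · obtain ⟨e1, e2⟩ := max_le_iff.1 h
          refine ⟨(0, 0), (1, 0), ?_, ?_, by simp⟩ <;> simp <;> linarith
      omega
  rw [Nk, hset, csInf_Ici]

lemma nk_two' {x y : ℝ} (hx : 0 < x) (hy : 0 < y) :
    Nk 2 ![x, y] = min (2 * min x y) (max x y) :=
  nk_two (a := ![x, y]) (by intro i; fin_cases i <;> simp [hx, hy])

lemma ell_quad {x y : ℝ} {z : Fin 2 → ℂ} :
    z ∈ ellipsoid ![x, y] ↔ quad ![1 / x, 1 / y] z ≤ 1 := by
  rw [ellipsoid_iff, quad, Fin.sum_univ_two]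
  have : π * ‖z 0‖ ^ 2 / x + π * ‖z 1‖ ^ 2 / y = π * (1 / x * ‖z 0‖ ^ 2 + 1 / y * ‖z 1‖ ^ 2) := by ring
  simp only [Matrix.cons_val_zero, Matrix.cons_val_one]
  rw [this]

lemma SympEmb.toMap {c x y : ℝ} (h : SympEmb 2 (ellipsoid ![c / 2, c]) (ellipsoid ![x, y])) :
    ∃ φ, SympMap φ {z | quad ![2 / c, 1 / c] z < 1} ∧
      ∀ z, quad ![2 / c, 1 / c] z < 1 → quad ![1 / x, 1 / y] (φ z) ≤ 1 := by
  obtain ⟨φ, h1, h2, h3, h4⟩ := h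
  have e : (![2 / c, 1 / c] : Fin 2 → ℝ) = ![1 / (c / 2), 1 / c] := by
    rw [one_div_div]
  have hsub : {z | quad ![2 / c, 1 / c] z < 1} ⊆ ellipsoid ![c / 2, c] := by
    intro z hz
    rw [ell_quad, ← e]
    exact le_of_lt hz
  have hφ : SympMap φ (interior (ellipsoid ![c / 2, c])) :=
    ⟨isOpen_interior, h3, h1.mono interior_subset, h4⟩
  refine ⟨φ, hφ.mono (isOpen_quad_lt _ _) (interior_maximal hsub (isOpen_quad_lt _ _)), fun z hz => ?_⟩
  exact ell_quad.1 (h2 (mem_image_of_mem _ (hsub hz)))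

/-- `N₂` is monotone under symplectic embeddings of ellipsoids. -/
theorem nk_mono {a b : Fin 2 → ℝ} (ha : ∀ i, 0 < a i) (hb : ∀ i, 0 < b i)
    (h : SympEmb 2 (ellipsoid b) (ellipsoid a)) : Nk 2 b ≤ Nk 2 a := by
  have key : ∀ x y u v : ℝ, 0 < x → x ≤ y → 0 < u → u ≤ v →
      SympEmb 2 (ellipsoid ![u, v]) (ellipsoid ![x, y]) → min (2 * u) v ≤ min (2 * x) y := by
    intro x y u v hx hxy hu huv h
    set c := min (2 * u) v with hc
    have hv : 0 < v := by linarith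
    have hc0 : 0 < c := lt_min (by linarith) hv
    have hc1 : c ≤ 2 * u := min_le_left _ _
    have hc2 : c ≤ v := min_le_right _ _
    have h1 : SympEmb 2 (ellipsoid ![c / 2, c]) (ellipsoid ![x, y]) := by
      refine h.mono (ellipsoid_mono ?_ ?_) le_rfl
      · intro i; fin_cases i <;> simp [hc0]
      · intro i; fin_cases i
        · simp; linarith
        · simpa using hc2
    by_cases hxy2 : 2 * x ≤ y
    · rw [min_eq_left hxy2]
      obtain ⟨φ, p1, p2⟩ := h1.toMap
      have := obstructionA hc0 hx hxy2 p1 p2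
      linarith
    · push Not at hxy2
      rw [min_eq_right hxy2.le]
      have hy : 0 < y := by linarith
      have h2 : SympEmb 2 (ellipsoid ![c / 2, c]) (ellipsoid ![y, y]) := by
        refine h1.mono le_rfl (ellipsoid_mono ?_ ?_)
        · intro i; fin_cases i <;> simp [hx, hy]
        · intro i; fin_cases i <;> simp [hxy]
      obtain ⟨φ, p1, p2⟩ := h2.toMap
      exact obstructionB hc0 hy p1 p2
  have ea : a = ![a 0, a 1] := by funext i; fin_cases i <;> rfl
  have eb : b = ![b 0, b 1] := by funext i; fin_cases i <;> rfl
  rw [nk_two ha, nk_two hb]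
  rw [ea, eb] at h
  rcases le_total (a 0) (a 1) with h1 | h1 <;> rcases le_total (b 0) (b 1) with h2 | h2
  · rw [min_eq_left h1, max_eq_right h1, min_eq_left h2, max_eq_right h2]
    exact key _ _ _ _ (ha 0) h1 (hb 0) h2 h
  · rw [min_eq_left h1, max_eq_right h1, min_eq_right h2, max_eq_left h2]
    exact key _ _ _ _ (ha 0) h1 (hb 1) h2 ((sympEmb_swap _ _).trans h)
  · rw [min_eq_right h1, max_eq_left h1, min_eq_left h2, max_eq_right h2]
    exact key _ _ _ _ (ha 1) h1 (hb 0) h2 (h.trans (sympEmb_swap _ _))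
  · rw [min_eq_right h1, max_eq_left h1, min_eq_right h2, max_eq_left h2]
    exact key _ _ _ _ (ha 1) h1 (hb 1) h2 (((sympEmb_swap _ _).trans h).trans (sympEmb_swap _ _))

/-! ### Convex toric domains -/

/-- The toric domain over the quadrilateral with vertices `(0,0)`, `(c,0)`, `(p,2c-p)`, `(0,c)`,
described by the sum of the moment coordinates and the first moment coordinate. -/
def quadDomain (c p : ℝ) : Set (Fin 2 → ℂ) :=
  {z | π * ‖z 0‖ ^ 2 + π * ‖z 1‖ ^ 2 ≤ c ∨
    (c ≤ π * ‖z 0‖ ^ 2 + π * ‖z 1‖ ^ 2 ∧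
      p * (π * ‖z 0‖ ^ 2 + π * ‖z 1‖ ^ 2 - c) ≤ c * (π * ‖z 0‖ ^ 2) ∧
      c * (π * ‖z 0‖ ^ 2) ≤ c * (2 * c - (π * ‖z 0‖ ^ 2 + π * ‖z 1‖ ^ 2)) +
        p * (π * ‖z 0‖ ^ 2 + π * ‖z 1‖ ^ 2 - c))}

lemma vec2_eta (x : Fin 2 → ℝ) : x = ![x 0, x 1] := by funext i; fin_cases i <;> rfl

section omega
variable {Ω : Set (Fin 2 → ℝ)}

lemma omega_nonneg (hΩ : IsConvexToricDomain Ω) {x y : ℝ} (h : ![x, y] ∈ Ω) : 0 ≤ x ∧ 0 ≤ y :=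
  ⟨hΩ.1 h 0, hΩ.1 h 1⟩

lemma omega_convex (hΩ : IsConvexToricDomain Ω) : Convex ℝ Ω := by
  have : Ω = {x : Fin 2 → ℝ | (fun i => |x i|) ∈ Ω} ∩ {x | ∀ i, 0 ≤ x i} := by
    ext x
    constructor
    · intro hx
      have h0 := hΩ.1 hx
      refine ⟨?_, h0⟩
      have : (fun i => |x i|) = x := funext fun i => abs_of_nonneg (h0 i)
      rw [mem_ofPred_eq, this]; exact hx
    · rintro ⟨hx, h0⟩
      have : (fun i => |x i|) = x := funext fun i => abs_of_nonneg (h0 i)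
      rw [mem_ofPred_eq, this] at hx; exact hx
  rw [this]
  refine hΩ.2.2.1.inter fun x hx y hy a b ha hb _ i => ?_
  have := hx i
  have := hy i
  simp only [Pi.add_apply, Pi.smul_apply, smul_eq_mul]
  positivity

lemma omega_fst (hΩ : IsConvexToricDomain Ω) {x y : ℝ} (h : ![x, y] ∈ Ω) : ![x, 0] ∈ Ω := by
  obtain ⟨hx, hy⟩ := omega_nonneg hΩ h
  have h1 : ![x, y] ∈ {x : Fin 2 → ℝ | (fun i => |x i|) ∈ Ω} := by
    have : (fun i => |(![x, y] : Fin 2 → ℝ) i|) = ![x, y] := by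
      funext i; fin_cases i <;> simp [hx, hy]
    rw [mem_ofPred_eq, this]; exact h
  have h2 : ![x, -y] ∈ {x : Fin 2 → ℝ | (fun i => |x i|) ∈ Ω} := by
    have : (fun i => |(![x, -y] : Fin 2 → ℝ) i|) = ![x, y] := by
      funext i; fin_cases i <;> simp [hx, hy]
    rw [mem_ofPred_eq, this]; exact h
  have h3 := hΩ.2.2.1 h1 h2 (show (0:ℝ) ≤ 1 / 2 by norm_num) (show (0:ℝ) ≤ 1 / 2 by norm_num)
    (by norm_num)
  have h4 : (fun i => |((1 / 2 : ℝ) • (![x, y] : Fin 2 → ℝ) + (1 / 2 : ℝ) • (![x, -y] : Fin 2 → ℝ)) i|)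
      = ![x, 0] := by
    funext i; fin_cases i
    · simp; rw [show 2⁻¹ * x + 2⁻¹ * x = x by ring, abs_of_nonneg hx]
    · simp
  rw [mem_ofPred_eq, h4] at h3
  exact h3

lemma omega_snd (hΩ : IsConvexToricDomain Ω) {x y : ℝ} (h : ![x, y] ∈ Ω) : ![0, y] ∈ Ω := by
  obtain ⟨hx, hy⟩ := omega_nonneg hΩ h
  have h1 : ![x, y] ∈ {x : Fin 2 → ℝ | (fun i => |x i|) ∈ Ω} := by
    have : (fun i => |(![x, y] : Fin 2 → ℝ) i|) = ![x, y] := by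
      funext i; fin_cases i <;> simp [hx, hy]
    rw [mem_ofPred_eq, this]; exact h
  have h2 : ![-x, y] ∈ {x : Fin 2 → ℝ | (fun i => |x i|) ∈ Ω} := by
    have : (fun i => |(![-x, y] : Fin 2 → ℝ) i|) = ![x, y] := by
      funext i; fin_cases i <;> simp [hx, hy]
    rw [mem_ofPred_eq, this]; exact h
  have h3 := hΩ.2.2.1 h1 h2 (show (0:ℝ) ≤ 1 / 2 by norm_num) (show (0:ℝ) ≤ 1 / 2 by norm_num)
    (by norm_num)
  have h4 : (fun i => |((1 / 2 : ℝ) • (![x, y] : Fin 2 → ℝ) + (1 / 2 : ℝ) • (![-x, y] : Fin 2 → ℝ)) i|)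
      = ![0, y] := by
    funext i; fin_cases i
    · simp
    · simp; rw [show 2⁻¹ * y + 2⁻¹ * y = y by ring, abs_of_nonneg hy]
  rw [mem_ofPred_eq, h4] at h3
  exact h3

lemma omega_zero (hΩ : IsConvexToricDomain Ω) {x y : ℝ} (h : ![x, y] ∈ Ω) : ![0, 0] ∈ Ω := omega_fst hΩ (omega_snd hΩ h)

/-- Subconvex combinations of three points of `Ω` belong to `Ω`. -/
lemma omega_comb (hΩ : IsConvexToricDomain Ω) {x₁ y₁ x₂ y₂ x₃ y₃ r s t : ℝ} (h1 : ![x₁, y₁] ∈ Ω) (h2 : ![x₂, y₂] ∈ Ω)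
    (h3 : ![x₃, y₃] ∈ Ω) (hr : 0 ≤ r) (hs : 0 ≤ s) (ht : 0 ≤ t) (hrst : r + s + t ≤ 1) :
    ![r * x₁ + s * x₂ + t * x₃, r * y₁ + s * y₂ + t * y₃] ∈ Ω := by
  have h0 := omega_zero hΩ h1
  have hmem := (omega_convex hΩ).sum_mem (t := Finset.univ) (w := ![r, s, t, 1 - (r + s + t)])
    (z := ![![x₁, y₁], ![x₂, y₂], ![x₃, y₃], ![0, 0]])
    (by intro i _; fin_cases i <;> simp <;> linarith)
    (by simp [Fin.sum_univ_four])
    (by intro i _; fin_cases i <;> simp <;> assumption)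
  convert hmem using 1
  funext i; fin_cases i <;> simp [Fin.sum_univ_four]

lemma omega_pos (hΩ : IsConvexToricDomain Ω) : ∃ x y, 0 < x ∧ 0 < y ∧ ![x, y] ∈ Ω := by
  obtain ⟨V, hV, ⟨v, hvV, hv0⟩, rfl⟩ := hΩ.2.2.2
  have hc : Continuous fun e : ℝ => (fun i => v i + e : Fin 2 → ℝ) := by fun_prop
  have h1 : ∀ᶠ e in nhds (0:ℝ), (fun i => v i + e : Fin 2 → ℝ) ∈ V :=
    hc.continuousAt.eventually_mem (by simpa using hV.mem_nhds hvV)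
  obtain ⟨ε, hε, hball⟩ := Metric.eventually_nhds_iff.1 h1
  have h2 := hball (y := ε / 2) (by simp [abs_of_pos hε]; linarith)
  have p0 : 0 ≤ v 0 := hv0 0
  have p1 : 0 ≤ v 1 := hv0 1
  refine ⟨v 0 + ε / 2, v 1 + ε / 2, by positivity, by positivity, subset_closure ⟨?_, ?_⟩⟩
  · have : (fun i => v i + ε / 2 : Fin 2 → ℝ) = ![v 0 + ε / 2, v 1 + ε / 2] := vec2_eta _
    rw [← this]; exact h2
  · intro i; fin_cases i <;> simp <;> positivity

lemma quadDomain_subset (hΩ : IsConvexToricDomain Ω) {c p : ℝ} (hc : 0 < c) (h1 : ![c, 0] ∈ Ω) (h2 : ![0, c] ∈ Ω)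
    (h3 : ![p, 2 * c - p] ∈ Ω) : quadDomain c p ⊆ toricDomain Ω := by
  intro z hz
  change momentMap 2 z ∈ Ω
  set x := π * ‖z 0‖ ^ 2 with hx
  set y := π * ‖z 1‖ ^ 2 with hy
  have hm : momentMap 2 z = ![x, y] := vec2_eta _
  have hx0 : 0 ≤ x := by positivity
  have hy0 : 0 ≤ y := by positivity
  rw [hm]
  rcases hz with h | ⟨h, h', h''⟩
  · have := omega_comb hΩ h1 h2 (omega_zero hΩ h1) (r := x / c) (s := y / c) (t := 0)
      (by positivity) (by positivity) le_rfl (by rw [add_zero, ← add_div, div_le_one hc]; exact h)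
    convert this using 2
    · field_simp; ring
    · congr 1; field_simp; ring
  · rw [← hx, ← hy] at h h' h''
    have := omega_comb hΩ h1 h2 h3 (r := (c * x - p * (x + y - c)) / c ^ 2)
      (s := (c * (2 * c - (x + y)) + p * (x + y - c) - c * x) / c ^ 2) (t := (x + y - c) / c)
      (div_nonneg (by linarith) (by positivity)) (div_nonneg (by linarith) (by positivity))
      (div_nonneg (by linarith) hc.le) (le_of_eq (by field_simp; ring))
    convert this using 2
    · field_simp; ring
    · congr 1; field_simp; ring

end omega

/-- Both capacities, given embeddings of ellipsoids into toric domains over quadrilaterals. -/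
theorem main_of_emb (hemb : ∀ c c' p : ℝ, 0 < c' → c' < c → 0 ≤ p → p ≤ 2 * c →
      SympEmb 2 (ellipsoid ![c', 2 * c']) (quadDomain c p))
    (Ω : Set (Fin 2 → ℝ)) (hΩ : IsConvexToricDomain Ω) (a b w : ℝ)
    (ha : IsGreatest {x : ℝ | ![x, 0] ∈ Ω} a)
    (hb : IsGreatest {y : ℝ | ![0, y] ∈ Ω} b)
    (hw : IsGreatest ((fun p : Fin 2 → ℝ => p 0 + p 1) '' Ω) w) :
    ckmin 2 2 (toricDomain Ω) = min (2 * min a b) w ∧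
    ckmax 2 2 (toricDomain Ω) = min (2 * min a b) w := by
  obtain ⟨x₀, y₀, hx₀, hy₀, hmem₀⟩ := omega_pos hΩ
  have ha0 : 0 < a := hx₀.trans_le (ha.2 (omega_fst hΩ hmem₀))
  have hb0 : 0 < b := hy₀.trans_le (hb.2 (omega_snd hΩ hmem₀))
  have haΩ : ![a, 0] ∈ Ω := ha.1
  have hbΩ : ![0, b] ∈ Ω := hb.1
  have hwΩ : ∀ x y, ![x, y] ∈ Ω → x + y ≤ w := fun x y h => hw.2 ⟨_, h, by simp⟩
  have hw0 : 0 < w := by linarith [hwΩ _ _ haΩ]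
  obtain ⟨P, hPΩ, hPw⟩ := hw.1
  rw [vec2_eta P] at hPΩ
  have hPw' : P 0 + P 1 = w := hPw
  obtain ⟨hP0, hP1⟩ := omega_nonneg hΩ hPΩ
  set M := min (2 * min a b) w with hM
  have hM0 : 0 < M := lt_min (by have := lt_min ha0 hb0; linarith) hw0
  have hMa : M ≤ 2 * a := (min_le_left _ _).trans (by linarith [min_le_left a b])
  have hMb : M ≤ 2 * b := (min_le_left _ _).trans (by linarith [min_le_right a b])
  have hMw : M ≤ w := min_le_right _ _
  set c := M / 2 with hc
  have hc0 : 0 < c := by positivity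
  -- the inclusions of the toric domain in ellipsoids
  have hX : ∀ z ∈ toricDomain Ω, π * ‖z 0‖ ^ 2 ≤ a ∧ π * ‖z 1‖ ^ 2 ≤ b ∧
      π * ‖z 0‖ ^ 2 + π * ‖z 1‖ ^ 2 ≤ w := by
    intro z hz
    have hz' : momentMap 2 z ∈ Ω := hz
    rw [vec2_eta (momentMap 2 z)] at hz'
    exact ⟨ha.2 (omega_fst hΩ hz'), hb.2 (omega_snd hΩ hz'), hwΩ _ _ hz'⟩
  have hincw : toricDomain Ω ⊆ ellipsoid ![w, w] := by
    intro z hz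
    rw [ellipsoid_iff]
    simp only [Matrix.cons_val_zero, Matrix.cons_val_one]
    rw [← add_div, div_le_one hw0]
    exact (hX z hz).2.2
  have hincb : ∀ A B : ℝ, 0 < A → 0 < B → a / A + b / B ≤ 1 → toricDomain Ω ⊆ ellipsoid ![A, B] := by
    intro A B hA hB hAB z hz
    rw [ellipsoid_iff]
    obtain ⟨e1, e2, -⟩ := hX z hz
    refine le_trans (add_le_add ?_ ?_) hAB
    · exact div_le_div_of_nonneg_right e1 hA.le
    · exact div_le_div_of_nonneg_right e2 hB.le
  have hup : ∀ M', M < M' → ∃ A B : ℝ, 0 < A ∧ 0 < B ∧ toricDomain Ω ⊆ ellipsoid ![A, B] ∧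
      Nk 2 ![A, B] < M' := by
    intro M' hM'
    rcases min_lt_iff.1 hM' with h | h
    · have aux : ∀ a b : ℝ, 0 < a → 0 < b → 2 * a < M' → ∃ A B : ℝ, 0 < A ∧ 0 < B ∧
          a / A + b / B ≤ 1 ∧ 2 * A < M' := by
        intro a b ha0 hb0 h
        obtain ⟨A, hA1, hA2⟩ := exists_between (show a < M' / 2 by linarith)
        have hA : 0 < A := by linarith
        have hAa : 0 < A - a := by linarith
        refine ⟨A, b * A / (A - a), hA, by positivity, le_of_eq ?_, by linarith⟩
        field_simp; ring
      have h' : min a b < M' / 2 := by linarith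
      rcases min_lt_iff.1 h' with h | h
      · obtain ⟨A, B, hA, hB, hAB, hlt⟩ := aux a b ha0 hb0 (by linarith)
        refine ⟨A, B, hA, hB, hincb A B hA hB hAB, ?_⟩
        rw [nk_two' hA hB]
        exact (min_le_left _ _).trans_lt (by linarith [min_le_left A B])
      · obtain ⟨A, B, hA, hB, hAB, hlt⟩ := aux b a hb0 ha0 (by linarith)
        refine ⟨B, A, hB, hA, hincb B A hB hA (by linarith), ?_⟩
        rw [nk_two' hB hA]
        exact (min_le_left _ _).trans_lt (by linarith [min_le_right B A])
    · refine ⟨w, w, hw0, hw0, hincw, ?_⟩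
      rw [nk_two' hw0 hw0]
      exact (min_le_right _ _).trans_lt (by simpa using h)
  have pos2 : ∀ {A B : ℝ}, 0 < A → 0 < B → ∀ i, 0 < (![A, B] : Fin 2 → ℝ) i := by
    intro A B hA hB i; fin_cases i <;> simp [hA, hB]
  -- the embedded ellipsoids
  have hlow : ∀ c', 0 < c' → c' < c → SympEmb 2 (ellipsoid ![c', 2 * c']) (toricDomain Ω) := by
    intro c' hc' hcc'
    have e1 : ![c, 0] ∈ Ω := by
      have := omega_comb hΩ haΩ haΩ haΩ (r := c / a) (s := 0) (t := 0) (by positivity) le_rfl le_rfl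
        (by simp only [add_zero]; rw [div_le_one ha0]; linarith)
      convert this using 2
      · field_simp; ring
      · simp
    have e2 : ![0, c] ∈ Ω := by
      have := omega_comb hΩ hbΩ hbΩ hbΩ (r := c / b) (s := 0) (t := 0) (by positivity) le_rfl le_rfl
        (by simp only [add_zero]; rw [div_le_one hb0]; linarith)
      convert this using 2
      · simp
      · congr 1; field_simp; ring
    have e3 : ![M / w * P 0, 2 * c - M / w * P 0] ∈ Ω := by
      have := omega_comb hΩ hPΩ hPΩ hPΩ (r := M / w) (s := 0) (t := 0) (by positivity) le_rfl le_rfl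
        (by simp only [add_zero]; rw [div_le_one hw0]; linarith)
      convert this using 2
      · ring
      · congr 1
        have : P 0 = w - P 1 := by linarith
        rw [this, hc]; field_simp; ring
    obtain ⟨q1, q2⟩ := omega_nonneg hΩ e3
    exact (hemb c c' _ hc' hcc' q1 (by linarith)).mono le_rfl (quadDomain_subset hΩ hc0 e1 e2 e3)
  have hnkc : ∀ c', 0 < c' → Nk 2 ![c', 2 * c'] = 2 * c' := by
    intro c' hc'
    rw [nk_two' hc' (by linarith), min_eq_left (by linarith : c' ≤ 2 * c'),
      max_eq_right (by linarith : c' ≤ 2 * c'), min_self]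
  constructor
  · refine csSup_eq_of_forall_le_of_forall_lt_exists_gt ?_ ?_ ?_
    · exact ⟨_, ![c / 2, 2 * (c / 2)], pos2 (by linarith) (by linarith),
        hlow (c / 2) (by linarith) (by linarith), rfl⟩
    · rintro _ ⟨e, he, hE, rfl⟩
      refine le_of_forall_gt_imp_ge_of_dense fun M' hM' => ?_
      obtain ⟨A, B, hA, hB, hsub, hlt⟩ := hup M' hM'
      exact (nk_mono (pos2 hA hB) he (hE.mono le_rfl hsub)).trans hlt.le
    · intro M' hM'
      obtain ⟨c', h1, h2⟩ := exists_between (show max 0 (M' / 2) < c from max_lt hc0 (by linarith))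
      have hc' : 0 < c' := (le_max_left _ _).trans_lt h1
      have hc'' : M' / 2 < c' := (le_max_right _ _).trans_lt h1
      exact ⟨_, ⟨![c', 2 * c'], pos2 hc' (by linarith), hlow c' hc' h2, rfl⟩, by
        rw [hnkc c' hc']; linarith⟩
  · refine csInf_eq_of_forall_ge_of_forall_gt_exists_lt ?_ ?_ ?_
    · exact ⟨_, ![w, w], pos2 hw0 hw0, SympEmb.of_subset hincw, rfl⟩
    · rintro _ ⟨e, he, hE, rfl⟩
      refine le_of_forall_lt_imp_le_of_dense fun M' hM' => ?_
      obtain ⟨c', h1, h2⟩ := exists_between (show max 0 (M' / 2) < c from max_lt hc0 (by linarith))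
      have hc' : 0 < c' := (le_max_left _ _).trans_lt h1
      have hc'' : M' / 2 < c' := (le_max_right _ _).trans_lt h1
      have := nk_mono he (pos2 hc' (by linarith)) ((hlow c' hc' h2).trans hE)
      rw [hnkc c' hc'] at this
      linarith
    · intro M' hM'
      obtain ⟨A, B, hA, hB, hsub, hlt⟩ := hup M' hM'
      exact ⟨_, ⟨![A, B], pos2 hA hB, SympEmb.of_subset hsub, rfl⟩, hlt⟩

/-! ### Area preserving maps of the plane -/

/-- `f` is smooth near `z` and its derivative at `z` preserves the area form of `ℂ`. -/
def AreaAt (f : ℂ → ℂ) (z : ℂ) : Prop :=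
  ContDiffAt ℝ (⊤ : ℕ∞) f z ∧ ∃ L : ℂ →L[ℝ] ℂ, HasFDerivAt f L z ∧
    ∀ v w, (L v).re * (L w).im - (L v).im * (L w).re = v.re * w.im - v.im * w.re

lemma AreaAt.comp {f g : ℂ → ℂ} {z : ℂ} (hg : AreaAt g (f z)) (hf : AreaAt f z) :
    AreaAt (fun z => g (f z)) z := by
  obtain ⟨h1, L, h2, h3⟩ := hf
  obtain ⟨g1, M, g2, g3⟩ := hg
  exact ⟨g1.comp z h1, M.comp L, g2.comp z h2, fun v w => by
    simp only [ContinuousLinearMap.comp_apply]; rw [g3, h3]⟩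

lemma areaAt_id (z : ℂ) : AreaAt (fun z => z) z :=
  ⟨contDiffAt_id, ContinuousLinearMap.id ℝ ℂ, hasFDerivAt_id z, fun _ _ => rfl⟩

lemma complex_mk_eq (a b : ℝ) : (⟨a, b⟩ : ℂ) = (a : ℂ) + (b : ℂ) * Complex.I := Complex.mk_eq_add_mul_I a b

lemma contDiffAt_mk {E : Type*} [NormedAddCommGroup E] [NormedSpace ℝ E] {a b : E → ℝ} {z : E}
    (ha : ContDiffAt ℝ (⊤ : ℕ∞) a z) (hb : ContDiffAt ℝ (⊤ : ℕ∞) b z) :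
    ContDiffAt ℝ (⊤ : ℕ∞) (fun z => (⟨a z, b z⟩ : ℂ)) z := by
  simp only [complex_mk_eq]
  exact (Complex.ofRealCLM.contDiff.contDiffAt.comp z ha).add
    ((Complex.ofRealCLM.contDiff.contDiffAt.comp z hb).mul contDiffAt_const)

/-- The `ℂ`-valued linear map with given real and imaginary part. -/
def mkL {E : Type*} [NormedAddCommGroup E] [NormedSpace ℝ E] (a b : E →L[ℝ] ℝ) : E →L[ℝ] ℂ :=
  Complex.ofRealCLM.comp a + (b.smulRight Complex.I)

lemma mkL_re {E : Type*} [NormedAddCommGroup E] [NormedSpace ℝ E] (a b : E →L[ℝ] ℝ) (v : E) :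
    (mkL a b v).re = a v := by simp [mkL]

lemma mkL_im {E : Type*} [NormedAddCommGroup E] [NormedSpace ℝ E] (a b : E →L[ℝ] ℝ) (v : E) :
    (mkL a b v).im = b v := by simp [mkL]

lemma hasFDerivAt_mk {E : Type*} [NormedAddCommGroup E] [NormedSpace ℝ E] {a b : E → ℝ}
    {a' b' : E →L[ℝ] ℝ} {z : E} (ha : HasFDerivAt a a' z) (hb : HasFDerivAt b b' z) :
    HasFDerivAt (fun z => (⟨a z, b z⟩ : ℂ)) (mkL a' b') z := by
  have h1 := (Complex.ofRealCLM.hasFDerivAt (x := a z)).comp z ha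
  have h2 := hb.smul_const Complex.I
  refine (h1.add h2).congr_of_eventuallyEq (Filter.Eventually.of_forall fun z => ?_)
  simp [complex_mk_eq]

lemma re_smooth {z : ℂ} : ContDiffAt ℝ (⊤ : ℕ∞) (fun z : ℂ => z.re) z :=
  Complex.reCLM.contDiff.contDiffAt

lemma im_smooth {z : ℂ} : ContDiffAt ℝ (⊤ : ℕ∞) (fun z : ℂ => z.im) z :=
  Complex.imCLM.contDiff.contDiffAt

lemma hasFDerivAt_re (z : ℂ) : HasFDerivAt (fun z : ℂ => z.re) Complex.reCLM z :=
  Complex.reCLM.hasFDerivAt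

lemma hasFDerivAt_im (z : ℂ) : HasFDerivAt (fun z : ℂ => z.im) Complex.imCLM z :=
  Complex.imCLM.hasFDerivAt

/-- Symplectic polar coordinates `r + iθ` with `r = |z|² / 2`, on the slit plane. -/
def polLog (z : ℂ) : ℂ := ⟨(z.re ^ 2 + z.im ^ 2) / 2, z.arg⟩

/-- The inverse of symplectic polar coordinates. -/
def polExp (z : ℂ) : ℂ := ⟨√(2 * z.re) * Real.cos z.im, √(2 * z.re) * Real.sin z.im⟩

lemma polLog_area {z : ℂ} (hz : z ∈ Complex.slitPlane) : AreaAt polLog z := by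
  have hne : z ≠ 0 := Complex.slitPlane_ne_zero hz
  have hpos : 0 < z.re ^ 2 + z.im ^ 2 := by
    have := Complex.normSq_pos.2 hne
    rw [Complex.normSq_apply] at this; nlinarith
  have hlog : HasFDerivAt (fun z : ℂ => z.arg)
      (Complex.imCLM.comp ((ContinuousLinearMap.toSpanSingleton ℂ z⁻¹).restrictScalars ℝ)) z := by
    have h1 := ((Complex.hasDerivAt_log hz).hasFDerivAt).restrictScalars ℝ
    have h2 := (Complex.imCLM.hasFDerivAt (x := Complex.log z)).comp z h1
    refine h2.congr_of_eventuallyEq (Filter.Eventually.of_forall fun z => ?_)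
    simp [Complex.log_im]
  have hsm : ContDiffAt ℝ (⊤ : ℕ∞) (fun z : ℂ => z.arg) z := by
    have h1 : ContDiffAt ℝ (⊤ : ℕ∞) Complex.log z := (Complex.contDiffAt_log hz).restrict_scalars ℝ
    refine (Complex.imCLM.contDiff.contDiffAt.comp z h1).congr_of_eventuallyEq
      (Filter.Eventually.of_forall fun z => ?_)
    simp [Complex.log_im]
  have hr := (((hasFDerivAt_re z).pow 2).add ((hasFDerivAt_im z).pow 2)).mul_const (2⁻¹ : ℝ)
  have hr' : HasFDerivAt (fun z : ℂ => (z.re ^ 2 + z.im ^ 2) / 2) _ z := hr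
  refine ⟨contDiffAt_mk (((re_smooth.pow 2).add (im_smooth.pow 2)).div_const 2) hsm, _,
    hasFDerivAt_mk hr' hlog, fun v w => ?_⟩
  simp only [mkL_re, mkL_im]
  simp [Complex.inv_re, Complex.inv_im, Complex.normSq_apply, Complex.mul_im]
  have : z.re * z.re + z.im * z.im ≠ 0 := by nlinarith
  field_simp
  ring

lemma polExp_area {z : ℂ} (hz : 0 < z.re) : AreaAt polExp z := by
  have h2 : 0 < 2 * z.re := by linarith
  have hs : HasFDerivAt (fun z : ℂ => √(2 * z.re)) _ z :=
    ((hasFDerivAt_re z).const_mul 2).sqrt h2.ne'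
  have hss : ContDiffAt ℝ (⊤ : ℕ∞) (fun z : ℂ => √(2 * z.re)) z :=
    (contDiffAt_const.mul re_smooth).sqrt h2.ne'
  refine ⟨contDiffAt_mk (hss.mul (Real.contDiff_cos.contDiffAt.comp z im_smooth))
    (hss.mul (Real.contDiff_sin.contDiffAt.comp z im_smooth)), _,
    hasFDerivAt_mk (hs.mul (hasFDerivAt_im z).cos) (hs.mul (hasFDerivAt_im z).sin), fun v w => ?_⟩
  simp only [mkL_re, mkL_im]
  have hpos : √(2 * z.re) ≠ 0 := (Real.sqrt_pos.2 h2).ne'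
  simp only [add_apply, smul_apply, Complex.reCLM_apply, Complex.imCLM_apply, smul_eq_mul]
  have hcs := Real.sin_sq_add_cos_sq z.im
  generalize √(2 * z.re) = S at hpos ⊢
  field_simp
  linear_combination S ^ 2 * (v.re * w.im - v.im * w.re) * hcs

lemma polExp_norm {z : ℂ} (hz : 0 ≤ z.re) : ‖polExp z‖ ^ 2 = 2 * z.re := by
  rw [← Complex.normSq_eq_norm_sq, Complex.normSq_apply]
  have hcs := Real.sin_sq_add_cos_sq z.im
  have := Real.sq_sqrt (show 0 ≤ 2 * z.re by linarith)
  simp only [polExp]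
  linear_combination (√(2 * z.re)) ^ 2 * hcs + this

lemma polExp_inj {z w : ℂ} (hz : 0 < z.re) (hw : 0 < w.re) (h : polExp z = polExp w) :
    z.re = w.re ∧ ∃ n : ℤ, z.im - w.im = n * (2 * π) := by
  have h1 : z.re = w.re := by
    have := polExp_norm hz.le
    rw [h, polExp_norm hw.le] at this; linarith
  refine ⟨h1, ?_⟩
  have hp : √(2 * w.re) ≠ 0 := (Real.sqrt_pos.2 (by linarith)).ne'
  have hc := congrArg Complex.re h
  have hs := congrArg Complex.im h
  simp only [polExp, h1] at hc hs
  have hc' := mul_left_cancel₀ hp hc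
  have hs' := mul_left_cancel₀ hp hs
  have : Real.cos (z.im - w.im) = 1 := by
    rw [Real.cos_sub, hc', hs']; nlinarith [Real.sin_sq_add_cos_sq w.im]
  obtain ⟨n, hn⟩ := (Real.cos_eq_one_iff _).1 this
  exact ⟨n, hn.symm⟩

lemma polLog_inj {z w : ℂ} (h : polLog z = polLog w) : z = w := by
  have h1 := congrArg Complex.re h
  have h2 := congrArg Complex.im h
  simp only [polLog] at h1 h2
  refine Complex.ext_norm_arg ?_ h2
  have : ‖z‖ ^ 2 = ‖w‖ ^ 2 := by
    rw [← Complex.normSq_eq_norm_sq, ← Complex.normSq_eq_norm_sq, Complex.normSq_apply,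
      Complex.normSq_apply]
    linarith
  exact (sq_eq_sq₀ (norm_nonneg _) (norm_nonneg _)).1 this

/-! ### Opening a slit by an area preserving map -/

/-- Two maps `G₁`, `G₂` of the plane which multiply area by the same nonzero factor, `G₁` being
bijective, induce the area preserving map `G₂ ∘ G₁⁻¹`. -/
lemma areaAt_quot {G₁ G₂ g : ℂ → ℂ} {z : ℂ} {d : ℝ} (hd : d ≠ 0) {L₁ L₂ : ℂ →L[ℝ] ℂ}
    (hg : ∀ z, g (G₁ z) = z) (hs₁ : ContDiffAt ℝ (⊤ : ℕ∞) G₁ z) (hs₂ : ContDiffAt ℝ (⊤ : ℕ∞) G₂ z)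
    (h₁ : HasFDerivAt G₁ L₁ z) (h₂ : HasFDerivAt G₂ L₂ z)
    (hd₁ : ∀ v w, (L₁ v).re * (L₁ w).im - (L₁ v).im * (L₁ w).re = d * (v.re * w.im - v.im * w.re))
    (hd₂ : ∀ v w, (L₂ v).re * (L₂ w).im - (L₂ v).im * (L₂ w).re = d * (v.re * w.im - v.im * w.re)) :
    AreaAt (fun z => G₂ (g z)) (G₁ z) := by
  have hinj : Function.Injective (L₁ : ℂ →ₗ[ℝ] ℂ) := by
    rw [← LinearMap.ker_eq_bot, LinearMap.ker_eq_bot']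
    intro v hv
    have hv' : L₁ v = 0 := hv
    have e1 := hd₁ v 1
    have e2 := hd₁ v Complex.I
    rw [hv'] at e1 e2
    simp [hd] at e1 e2
    exact Complex.ext e2 e1
  obtain ⟨e, he⟩ : ∃ e : ℂ ≃L[ℝ] ℂ, (e : ℂ →L[ℝ] ℂ) = L₁ :=
    ⟨(LinearEquiv.ofInjectiveEndo _ hinj).toContinuousLinearEquiv, by ext v; rfl⟩
  have h1 : HasFDerivAt G₁ (e : ℂ →L[ℝ] ℂ) z := by rw [he]; exact h₁
  have h2 := hs₁.hasStrictFDerivAt' h1 (by simp)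
  have h3 := hs₁.to_localInverse h1 (by simp)
  have hsg : ContDiffAt ℝ (⊤ : ℕ∞) g (G₁ z) := by
    refine h3.congr_of_eventuallyEq ?_
    filter_upwards [h2.eventually_right_inverse] with y hy
    have hy' : G₁ (hs₁.localInverse h1 (by simp) y) = y := hy
    conv_lhs => rw [← hy']
    exact hg _
  have hsm : ContDiffAt ℝ (⊤ : ℕ∞) (fun z => G₂ (g z)) (G₁ z) := by
    refine ContDiffAt.comp (G₁ z) ?_ hsg
    rw [hg]; exact hs₂
  refine ⟨hsm, _, (hsm.differentiableAt (by simp)).hasFDerivAt, ?_⟩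
  set M := fderiv ℝ (fun z => G₂ (g z)) (G₁ z) with hM
  have hcomp : HasFDerivAt G₂ (M.comp L₁) z := by
    have h := ((hsm.differentiableAt (by simp)).hasFDerivAt).comp z h₁
    refine h.congr_of_eventuallyEq (Filter.Eventually.of_forall fun y => ?_)
    simp [hg]
  have hML : M.comp L₁ = L₂ := hcomp.unique h₂
  intro v w
  obtain ⟨v', rfl⟩ : ∃ v', L₁ v' = v := ⟨e.symm v, by rw [← he]; simp⟩
  obtain ⟨w', rfl⟩ : ∃ w', L₁ w' = w := ⟨e.symm w, by rw [← he]; simp⟩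
  have e1 : ∀ u, M (L₁ u) = L₂ u := fun u => by rw [← hML]; rfl
  rw [e1, e1, hd₁, hd₂]

/-- The area preserving map with generating function `q P + b(q) W(P)`. -/
lemma exists_genMap {b b₁ W w : ℝ → ℝ} (hb : ContDiff ℝ (⊤ : ℕ∞) b) (hb₁ : ContDiff ℝ (⊤ : ℕ∞) b₁)
    (hW : ContDiff ℝ (⊤ : ℕ∞) W) (hw : ContDiff ℝ (⊤ : ℕ∞) w)
    (hbd : ∀ q, HasDerivAt b (b₁ q) q) (hWd : ∀ q, HasDerivAt W (w q) q)
    (hpos : ∀ q P, 0 < 1 + b₁ q * w P) {m : ℝ} (hm : ∀ q P, |b₁ q * W P| ≤ m) :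
    ∃ κ : ℂ → ℂ, (∀ z, AreaAt κ z) ∧ Function.Injective κ ∧
      ∀ z, ∃ P, z.im = P + b₁ z.re * W P ∧ κ z = ⟨z.re + b z.re * w P, P⟩ := by
  set G₁ : ℂ → ℂ := fun z => ⟨z.re, z.im + b₁ z.re * W z.im⟩ with hG₁
  set G₂ : ℂ → ℂ := fun z => ⟨z.re + b z.re * w z.im, z.im⟩ with hG₂
  have hmono1 : ∀ q, StrictMono fun P => P + b₁ q * W P := fun q =>
    strictMono_of_deriv_pos fun P => by
      rw [((hasDerivAt_id' P).fun_add ((hWd P).const_mul (b₁ q))).deriv]; exact hpos q P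
  have hmono2 : ∀ P, StrictMono fun q => q + b q * w P := fun P =>
    strictMono_of_deriv_pos fun q => by
      rw [((hasDerivAt_id' q).fun_add ((hbd q).mul_const (w P))).deriv]; exact hpos q P
  have hsurj : ∀ q, Function.Surjective fun P => P + b₁ q * W P := fun q => by
    have hc : Continuous fun P => P + b₁ q * W P := by
      have := hW.continuous; fun_prop
    refine hc.surjective ?_ ?_
    · refine Filter.tendsto_atTop_mono (fun P => ?_) (Filter.tendsto_atTop_add_const_right _ (-m) Filter.tendsto_id)
      have := abs_le.1 (hm q P); simp; linarith
    · refine Filter.tendsto_atBot_mono (fun P => ?_) (Filter.tendsto_atBot_add_const_right _ m Filter.tendsto_id)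
      have := abs_le.1 (hm q P); simp; linarith
  have hinj₁ : Function.Injective G₁ := fun z y h => by
    have e1 := congrArg Complex.re h
    have e2 := congrArg Complex.im h
    simp only [hG₁] at e1 e2
    rw [e1] at e2
    exact Complex.ext e1 ((hmono1 _).injective e2)
  have hsurj₁ : Function.Surjective G₁ := fun y => by
    obtain ⟨P, hP⟩ := hsurj y.re y.im
    exact ⟨⟨y.re, P⟩, Complex.ext rfl hP⟩
  have hinj₂ : Function.Injective G₂ := fun z y h => by
    have e1 := congrArg Complex.re h
    have e2 := congrArg Complex.im h
    simp only [hG₂] at e1 e2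
    rw [e2] at e1
    exact Complex.ext ((hmono2 _).injective e1) e2
  have hg : ∀ z, Function.invFun G₁ (G₁ z) = z := Function.leftInverse_invFun hinj₁
  have hg' : ∀ z, G₁ (Function.invFun G₁ z) = z := Function.rightInverse_invFun hsurj₁
  refine ⟨fun z => G₂ (Function.invFun G₁ z), fun y => ?_, ?_, fun y => ?_⟩
  · obtain ⟨z, rfl⟩ := hsurj₁ y
    obtain ⟨b₂, hb₂⟩ : ∃ c, HasDerivAt b₁ c z.re :=
      ⟨_, (hb₁.differentiable (by simp) _).hasDerivAt⟩
    obtain ⟨w₁, hw₁⟩ : ∃ c, HasDerivAt w c z.im :=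
      ⟨_, (hw.differentiable (by simp) _).hasDerivAt⟩
    have dre := hasFDerivAt_re z
    have dim := hasFDerivAt_im z
    have c1 := dim.add ((hb₂.comp_hasFDerivAt z dre).mul ((hWd z.im).comp_hasFDerivAt z dim))
    have c2 := dre.add (((hbd z.re).comp_hasFDerivAt z dre).mul (hw₁.comp_hasFDerivAt z dim))
    refine areaAt_quot (d := 1 + b₁ z.re * w z.im) (hpos _ _).ne' hg
      (contDiffAt_mk re_smooth (im_smooth.add ((hb₁.contDiffAt.comp z re_smooth).mul
        (hW.contDiffAt.comp z im_smooth))))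
      (contDiffAt_mk (re_smooth.add ((hb.contDiffAt.comp z re_smooth).mul
        (hw.contDiffAt.comp z im_smooth))) im_smooth)
      (hasFDerivAt_mk dre c1) (hasFDerivAt_mk c2 dim) (fun v u => ?_) (fun v u => ?_)
    · simp only [mkL_re, mkL_im]
      simp
      ring
    · simp only [mkL_re, mkL_im]
      simp
      ring
  · intro x y h
    have h2 := hinj₂ h
    rw [← hg' x, ← hg' y, h2]
  · have hre : (G₁ (Function.invFun G₁ y)).re = y.re := congrArg Complex.re (hg' y)
    have him : (G₁ (Function.invFun G₁ y)).im = y.im := congrArg Complex.im (hg' y)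
    have hre' : (Function.invFun G₁ y).re = y.re := hre
    refine ⟨(Function.invFun G₁ y).im, ?_, ?_⟩
    · rw [← him, ← hre']
    · rw [← hre']

/-- An area preserving embedding of the plane into the slit plane which increases the absolute
values of the coordinates by an arbitrarily small amount. -/
lemma exists_slit {η : ℝ} (hη : 0 < η) :
    ∃ κ : ℂ → ℂ, (∀ z, AreaAt κ z) ∧ Function.Injective κ ∧ (∀ z, κ z ∈ Complex.slitPlane) ∧
      ∀ z, |(κ z).re| ≤ |z.re| + 2 * η ∧ |(κ z).im| ≤ |z.im| + 2 * η := by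
  have hpos : ∀ q : ℝ, 0 < q ^ 2 + 4 * η ^ 2 := fun q => by positivity
  have hS : ∀ q : ℝ, 0 < √(q ^ 2 + 4 * η ^ 2) := fun q => Real.sqrt_pos.2 (hpos q)
  have hS2 : ∀ q : ℝ, √(q ^ 2 + 4 * η ^ 2) ^ 2 = q ^ 2 + 4 * η ^ 2 := fun q =>
    Real.sq_sqrt (hpos q).le
  have hqS : ∀ q : ℝ, |q| < √(q ^ 2 + 4 * η ^ 2) := fun q => by
    rw [← Real.sqrt_sq_eq_abs]
    exact Real.sqrt_lt_sqrt (sq_nonneg _) (by nlinarith)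
  have hSc : ContDiff ℝ (⊤ : ℕ∞) fun q : ℝ => √(q ^ 2 + 4 * η ^ 2) :=
    ((contDiff_id.pow 2).add contDiff_const).sqrt fun q => (hpos q).ne'
  have hb₁b : ∀ q : ℝ, -1 < (q / √(q ^ 2 + 4 * η ^ 2) - 1) / 2 ∧
      (q / √(q ^ 2 + 4 * η ^ 2) - 1) / 2 < 0 := fun q => by
    obtain ⟨h1, h2⟩ := abs_lt.1 (hqS q)
    have h3 : -1 < q / √(q ^ 2 + 4 * η ^ 2) := by rw [lt_div_iff₀ (hS q)]; linarith
    have h4 : q / √(q ^ 2 + 4 * η ^ 2) < 1 := by rw [div_lt_iff₀ (hS q)]; linarith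
    constructor <;> linarith
  have hwb : ∀ P : ℝ, 0 < 1 / (1 + (P / η) ^ 2) ∧ 1 / (1 + (P / η) ^ 2) ≤ 1 := fun P => by
    refine ⟨by positivity, ?_⟩
    rw [div_le_one (by positivity)]; nlinarith [sq_nonneg (P / η)]
  have hWb : ∀ P : ℝ, |η * Real.arctan (P / η)| ≤ 2 * η := fun P => by
    have h1 := Real.arctan_lt_pi_div_two (P / η)
    have h2 := Real.neg_pi_div_two_lt_arctan (P / η)
    rw [abs_mul, abs_of_pos hη, mul_comm]
    refine mul_le_mul_of_nonneg_right (abs_le.2 ⟨?_, ?_⟩) hη.le <;> linarith [Real.pi_le_four]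
  have hbW : ∀ q P : ℝ,
      |(q / √(q ^ 2 + 4 * η ^ 2) - 1) / 2 * (η * Real.arctan (P / η))| ≤ 2 * η := fun q P => by
    rw [abs_mul]
    have h1 : |(q / √(q ^ 2 + 4 * η ^ 2) - 1) / 2| ≤ 1 :=
      abs_le.2 ⟨(hb₁b q).1.le, by linarith [(hb₁b q).2]⟩
    calc _ ≤ 1 * (2 * η) := mul_le_mul h1 (hWb P) (abs_nonneg _) (by norm_num)
      _ = 2 * η := one_mul _
  obtain ⟨κ, h1, h2, h3⟩ := exists_genMap
    (b := fun q => (√(q ^ 2 + 4 * η ^ 2) - q) / 2)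
    (b₁ := fun q => (q / √(q ^ 2 + 4 * η ^ 2) - 1) / 2)
    (W := fun P => η * Real.arctan (P / η)) (w := fun P => 1 / (1 + (P / η) ^ 2))
    ((hSc.sub contDiff_id).div_const 2)
    (((contDiff_id.div hSc fun q => (hS q).ne').sub contDiff_const).div_const 2)
    (contDiff_const.mul (Real.contDiff_arctan.comp (contDiff_id.div_const η)))
    (contDiff_const.div (contDiff_const.add ((contDiff_id.div_const η).pow 2))
      fun P => by positivity)
    (fun q => by
      have h := ((((hasDerivAt_id' q).pow 2).add_const (4 * η ^ 2)).sqrt (hpos q).ne').sub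
        (hasDerivAt_id' q)
      refine (h.div_const 2).congr_deriv ?_
      have := (hS q).ne'
      simp
      field_simp)
    (fun P => by
      refine ((((hasDerivAt_id' P).div_const η).arctan).const_mul η).congr_deriv ?_
      field_simp)
    (fun q P => by nlinarith [hb₁b q, hwb P]) hbW
  refine ⟨κ, h1, h2, fun z => ?_, fun z => ?_⟩
  · obtain ⟨P, hP, hκ⟩ := h3 z
    rw [hκ, Complex.mem_slitPlane_iff]
    by_cases h0 : P = 0
    · left
      subst h0
      have := (abs_lt.1 (hqS z.re)).1
      simp; linarith
    · right; exact h0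
  · obtain ⟨P, hP, hκ⟩ := h3 z
    have e1 := abs_le.1 (hbW z.re P)
    rw [hκ]
    dsimp only at hP ⊢
    constructor
    · set S := √(z.re ^ 2 + 4 * η ^ 2)
      have hSl : S ≤ |z.re| + 2 * η := by
        refine Real.sqrt_le_iff.2 ⟨by positivity, ?_⟩
        nlinarith [sq_abs z.re, abs_nonneg z.re]
      have hq := abs_lt.1 (hqS z.re)
      have hw := hwb P
      set ww := 1 / (1 + (P / η) ^ 2)
      have hb0 : 0 ≤ (S - z.re) / 2 := by linarith
      have hbw : 0 ≤ (S - z.re) / 2 * ww := mul_nonneg hb0 hw.1.le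
      have hbw' : (S - z.re) / 2 * ww ≤ (S - z.re) / 2 := mul_le_of_le_one_right hb0 hw.2
      rw [abs_le]
      have := le_abs_self z.re
      have := neg_abs_le z.re
      constructor <;> linarith
    · rw [abs_le]
      have := le_abs_self z.im
      have := neg_abs_le z.im
      constructor <;> linarith

/-- An area preserving embedding of the plane into the half strip `(0,∞) × (-π,π)` of symplectic
polar coordinates, whose first coordinate exceeds `|z|² / 2` by at most `ε` on a given disc. -/
lemma exists_strip {R ε : ℝ} (hR : 0 < R) (hε : 0 < ε) :
    ∃ f : ℂ → ℂ, (∀ z, AreaAt f z) ∧ Function.Injective f ∧ (∀ z, 0 < (f z).re) ∧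
      (∀ z, |(f z).im| < π) ∧ ∀ z, ‖z‖ ≤ R → (f z).re ≤ ‖z‖ ^ 2 / 2 + ε := by
  obtain ⟨η, hη, hη1, hη2⟩ : ∃ η : ℝ, 0 < η ∧ 4 * R * η ≤ ε / 2 ∧ 4 * η ^ 2 ≤ ε / 2 := by
    refine ⟨min (ε / (8 * R)) (min 1 (ε / 8)), by positivity, ?_, ?_⟩
    · have := min_le_left (ε / (8 * R)) (min 1 (ε / 8))
      calc _ ≤ 4 * R * (ε / (8 * R)) := by gcongr
        _ = ε / 2 := by field_simp; norm_num
    · have h1 := (min_le_right (ε / (8 * R)) (min 1 (ε / 8))).trans (min_le_left _ _)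
      have h2 := (min_le_right (ε / (8 * R)) (min 1 (ε / 8))).trans (min_le_right _ _)
      have h3 : 0 < min (ε / (8 * R)) (min 1 (ε / 8)) := by positivity
      nlinarith
  obtain ⟨κ, h1, h2, h3, h4⟩ := exists_slit hη
  refine ⟨fun z => polLog (κ z), fun z => (polLog_area (h3 z)).comp (h1 z),
    fun x y h => h2 (polLog_inj h), fun z => ?_, fun z => ?_, fun z hz => ?_⟩
  · have := Complex.normSq_pos.2 (Complex.slitPlane_ne_zero (h3 z))
    rw [Complex.normSq_apply] at this
    simp only [polLog]; nlinarith
  · have h := (Complex.mem_slitPlane_iff_arg.1 (h3 z)).1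
    exact lt_of_le_of_ne (Complex.abs_arg_le_pi _) fun h5 => by
      rcases (abs_eq Real.pi_pos.le).1 h5 with h6 | h6
      · exact h h6
      · have := Complex.neg_pi_lt_arg (κ z); simp only [polLog] at h6; linarith
  · obtain ⟨e1, e2⟩ := h4 z
    have hn : ‖z‖ ^ 2 = z.re ^ 2 + z.im ^ 2 := by
      rw [← Complex.normSq_eq_norm_sq, Complex.normSq_apply]; ring
    have f1 : (κ z).re ^ 2 ≤ (|z.re| + 2 * η) ^ 2 := sq_le_sq' (by linarith [neg_abs_le (κ z).re])
      ((le_abs_self _).trans e1)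
    have f2 : (κ z).im ^ 2 ≤ (|z.im| + 2 * η) ^ 2 := sq_le_sq' (by linarith [neg_abs_le (κ z).im])
      ((le_abs_self _).trans e2)
    have g1 := (Complex.abs_re_le_norm z).trans hz
    have g2 := (Complex.abs_im_le_norm z).trans hz
    simp only [polLog]
    have k1 : |z.re| * η ≤ R * η := by gcongr
    have k2 : |z.im| * η ≤ R * η := by gcongr
    rw [hn]
    nlinarith [sq_abs z.re, sq_abs z.im]

/-! ### The ellipsoid `E(c', 2 * c')` inside a quadrilateral toric domain -/

/-- `f` is smooth near `z` and its derivative at `z` preserves the symplectic form of `ℂ²`. -/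
def SympAt (f : (Fin 2 → ℂ) → (Fin 2 → ℂ)) (z : Fin 2 → ℂ) : Prop :=
  ContDiffAt ℝ (⊤ : ℕ∞) f z ∧ ∃ L : (Fin 2 → ℂ) →L[ℝ] (Fin 2 → ℂ), HasFDerivAt f L z ∧
    ∀ v w, stdSymp 2 (L v) (L w) = stdSymp 2 v w

lemma SympAt.comp {f g : (Fin 2 → ℂ) → (Fin 2 → ℂ)} {z : Fin 2 → ℂ} (hg : SympAt g (f z))
    (hf : SympAt f z) : SympAt (fun z => g (f z)) z := by
  obtain ⟨h1, L, h2, h3⟩ := hf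
  obtain ⟨g1, M, g2, g3⟩ := hg
  exact ⟨g1.comp z h1, M.comp L, g2.comp z h2, fun v w => by
    simp only [ContinuousLinearMap.comp_apply]; rw [g3, h3]⟩

lemma stdSymp_eq (v w : Fin 2 → ℂ) : stdSymp 2 v w =
    ((v 0).re * (w 0).im - (v 0).im * (w 0).re) + ((v 1).re * (w 1).im - (v 1).im * (w 1).re) := by
  simp [stdSymp, Fin.sum_univ_two, Complex.mul_im]; ring

/-- The evaluation at the coordinate `i` as a real linear map. -/
def coordL (i : Fin 2) : (Fin 2 → ℂ) →L[ℝ] ℂ := ContinuousLinearMap.proj i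

lemma coordL_apply (i : Fin 2) (v : Fin 2 → ℂ) : coordL i v = v i := rfl

lemma coord_smooth {i : Fin 2} {z : Fin 2 → ℂ} :
    ContDiffAt ℝ (⊤ : ℕ∞) (fun z : Fin 2 → ℂ => z i) z := (coordL i).contDiff.contDiffAt

lemma coord_deriv (i : Fin 2) (z : Fin 2 → ℂ) :
    HasFDerivAt (fun z : Fin 2 → ℂ => z i) (coordL i) z := (coordL i).hasFDerivAt

/-- The linear map with given components. -/
def pairL (A B : (Fin 2 → ℂ) →L[ℝ] ℂ) : (Fin 2 → ℂ) →L[ℝ] (Fin 2 → ℂ) :=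
  ContinuousLinearMap.pi ![A, B]

lemma pairL_zero (A B : (Fin 2 → ℂ) →L[ℝ] ℂ) (v : Fin 2 → ℂ) : pairL A B v 0 = A v := rfl
lemma pairL_one (A B : (Fin 2 → ℂ) →L[ℝ] ℂ) (v : Fin 2 → ℂ) : pairL A B v 1 = B v := rfl

lemma SympAt.mk' {f g : (Fin 2 → ℂ) → ℂ} {A B : (Fin 2 → ℂ) →L[ℝ] ℂ} {z : Fin 2 → ℂ}
    (hf : ContDiffAt ℝ (⊤ : ℕ∞) f z) (hg : ContDiffAt ℝ (⊤ : ℕ∞) g z)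
    (hA : HasFDerivAt f A z) (hB : HasFDerivAt g B z)
    (h : ∀ v w, ((A v).re * (A w).im - (A v).im * (A w).re) +
      ((B v).re * (B w).im - (B v).im * (B w).re) =
      ((v 0).re * (w 0).im - (v 0).im * (w 0).re) + ((v 1).re * (w 1).im - (v 1).im * (w 1).re)) :
    SympAt (fun z => ![f z, g z]) z := by
  refine ⟨contDiffAt_pi.2 fun i => ?_, pairL A B, hasFDerivAt_pi'.2 fun i => ?_, fun v w => ?_⟩
  · fin_cases i; exacts [hf, hg]
  · fin_cases i
    · exact hA
    · exact hB
  · rw [stdSymp_eq, stdSymp_eq]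
    exact h v w

lemma AreaAt.prod {f g : ℂ → ℂ} {z : Fin 2 → ℂ} (hf : AreaAt f (z 0)) (hg : AreaAt g (z 1)) :
    SympAt (fun z => ![f (z 0), g (z 1)]) z := by
  obtain ⟨h1, L, h2, h3⟩ := hf
  obtain ⟨g1, M, g2, g3⟩ := hg
  refine SympAt.mk' (h1.comp z coord_smooth) (g1.comp z coord_smooth)
    (h2.comp z (coord_deriv 0 z)) (g2.comp z (coord_deriv 1 z)) fun v w => ?_
  simp only [ContinuousLinearMap.comp_apply, coordL_apply]
  rw [h3, g3]

/-- Untwisting: `(z, s + iθ) ↦ (e^{-iθ} z, s + |z|²/2 + iθ)`. -/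
def twist (z : Fin 2 → ℂ) : Fin 2 → ℂ :=
  ![⟨(z 0).re * Real.cos (z 1).im + (z 0).im * Real.sin (z 1).im,
      (z 0).im * Real.cos (z 1).im - (z 0).re * Real.sin (z 1).im⟩,
    ⟨(z 1).re + ((z 0).re ^ 2 + (z 0).im ^ 2) / 2, (z 1).im⟩]

/-- The shear `(r + iθ, R + iΘ) ↦ (A + i(θ + Θ'), R - A + iΘ')` with `A = r + χ(R)` and
`Θ' = Θ - χ'(R) θ`. -/
def shear (χ χ₁ : ℝ → ℝ) (z : Fin 2 → ℂ) : Fin 2 → ℂ :=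
  ![⟨(z 0).re + χ (z 1).re, (z 0).im + ((z 1).im - χ₁ (z 1).re * (z 0).im)⟩,
    ⟨(z 1).re - ((z 0).re + χ (z 1).re), (z 1).im - χ₁ (z 1).re * (z 0).im⟩]

lemma rec_smooth {i : Fin 2} {z : Fin 2 → ℂ} :
    ContDiffAt ℝ (⊤ : ℕ∞) (fun z : Fin 2 → ℂ => (z i).re) z :=
  re_smooth.comp z coord_smooth

lemma imc_smooth {i : Fin 2} {z : Fin 2 → ℂ} :
    ContDiffAt ℝ (⊤ : ℕ∞) (fun z : Fin 2 → ℂ => (z i).im) z :=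
  im_smooth.comp z coord_smooth

lemma rec_deriv (i : Fin 2) (z : Fin 2 → ℂ) :
    HasFDerivAt (fun z : Fin 2 → ℂ => (z i).re) (Complex.reCLM.comp (coordL i)) z :=
  (Complex.reCLM.comp (coordL i)).hasFDerivAt

lemma imc_deriv (i : Fin 2) (z : Fin 2 → ℂ) :
    HasFDerivAt (fun z : Fin 2 → ℂ => (z i).im) (Complex.imCLM.comp (coordL i)) z :=
  (Complex.imCLM.comp (coordL i)).hasFDerivAt

lemma twist_symp (z : Fin 2 → ℂ) : SympAt twist z := by
  have x0 := rec_deriv 0 z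
  have y0 := imc_deriv 0 z
  have x1 := rec_deriv 1 z
  have y1 := imc_deriv 1 z
  have sc : ContDiffAt ℝ (⊤ : ℕ∞) (fun z : Fin 2 → ℂ => Real.cos (z 1).im) z :=
    Real.contDiff_cos.contDiffAt.comp z imc_smooth
  have ss : ContDiffAt ℝ (⊤ : ℕ∞) (fun z : Fin 2 → ℂ => Real.sin (z 1).im) z :=
    Real.contDiff_sin.contDiffAt.comp z imc_smooth
  refine SympAt.mk' (contDiffAt_mk ((rec_smooth.mul sc).add (imc_smooth.mul ss))
      ((imc_smooth.mul sc).sub (rec_smooth.mul ss)))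
    (contDiffAt_mk (rec_smooth.add (((rec_smooth.pow 2).add (imc_smooth.pow 2)).div_const 2))
      imc_smooth)
    (hasFDerivAt_mk ((x0.fun_mul y1.cos).fun_add (y0.fun_mul y1.sin))
      ((y0.fun_mul y1.cos).fun_sub (x0.fun_mul y1.sin)))
    (hasFDerivAt_mk (x1.fun_add (((x0.pow 2).fun_add (y0.pow 2)).mul_const (2⁻¹ : ℝ))) y1)
    fun v w => ?_
  simp only [mkL_re, mkL_im]
  have hcs := Real.sin_sq_add_cos_sq (z 1).im
  generalize Real.sin (z 1).im = s at hcs ⊢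
  generalize Real.cos (z 1).im = c at hcs ⊢
  simp [coordL_apply]
  have hc2 : c ^ 2 = 1 - s ^ 2 := by linarith
  ring_nf
  simp only [hc2]
  ring

lemma shear_symp {χ χ₁ : ℝ → ℝ} (hχ : ContDiff ℝ (⊤ : ℕ∞) χ) (hχ₁ : ContDiff ℝ (⊤ : ℕ∞) χ₁)
    (hd : ∀ t, HasDerivAt χ (χ₁ t) t) (z : Fin 2 → ℂ) : SympAt (shear χ χ₁) z := by
  have x0 := rec_deriv 0 z
  have y0 := imc_deriv 0 z
  have x1 := rec_deriv 1 z
  have y1 := imc_deriv 1 z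
  obtain ⟨d, hd2⟩ : ∃ c, HasDerivAt χ₁ c (z 1).re :=
    ⟨_, (hχ₁.differentiable (by simp) _).hasDerivAt⟩
  have sχ : ContDiffAt ℝ (⊤ : ℕ∞) (fun z : Fin 2 → ℂ => χ (z 1).re) z :=
    hχ.contDiffAt.comp z rec_smooth
  have sχ₁ : ContDiffAt ℝ (⊤ : ℕ∞) (fun z : Fin 2 → ℂ => χ₁ (z 1).re) z :=
    hχ₁.contDiffAt.comp z rec_smooth
  have e1 : HasFDerivAt (fun z : Fin 2 → ℂ => χ (z 1).re) _ z := (hd (z 1).re).comp_hasFDerivAt z x1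
  have e2 : HasFDerivAt (fun z : Fin 2 → ℂ => χ₁ (z 1).re) _ z := hd2.comp_hasFDerivAt z x1
  have sA := (rec_smooth (i := 0) (z := z)).add sχ
  have sB := (imc_smooth (i := 1) (z := z)).sub (sχ₁.mul (imc_smooth (i := 0)))
  have dA := x0.fun_add e1
  have dB := y1.fun_sub (e2.fun_mul y0)
  refine SympAt.mk' (contDiffAt_mk sA (imc_smooth.add sB)) (contDiffAt_mk (rec_smooth.sub sA) sB)
    (hasFDerivAt_mk dA (y0.fun_add dB)) (hasFDerivAt_mk (x1.fun_sub dA) dB) fun v w => ?_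
  simp only [mkL_re, mkL_im]
  simp [coordL_apply]
  ring

/-- A smooth function close to `t ↦ k max(t - C, 0)`. -/
lemma exists_hinge (k C : ℝ) (hk : 0 ≤ k) {η : ℝ} (hη : 0 < η) :
    ∃ χ χ₁ : ℝ → ℝ, ContDiff ℝ (⊤ : ℕ∞) χ ∧ ContDiff ℝ (⊤ : ℕ∞) χ₁ ∧
      (∀ t, HasDerivAt χ (χ₁ t) t) ∧ (∀ t, 0 ≤ χ t) ∧ (∀ t, k * (t - C) ≤ χ t) ∧
      (∀ t, t ≤ C → χ t ≤ k * η) ∧ ∀ t, C ≤ t → χ t ≤ k * (t - C) + k * η := by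
  have hpos : ∀ t : ℝ, 0 < (t - C) ^ 2 + 4 * η ^ 2 := fun t => by positivity
  have hsm : ContDiff ℝ (⊤ : ℕ∞) fun t : ℝ => k * ((t - C) + √((t - C) ^ 2 + 4 * η ^ 2)) / 2 :=
    (contDiff_const.mul ((contDiff_id.sub contDiff_const).add
      ((((contDiff_id.sub contDiff_const).pow 2).add contDiff_const).sqrt
        fun t => (hpos t).ne'))).div_const 2
  have habs : ∀ t : ℝ, |t - C| ≤ √((t - C) ^ 2 + 4 * η ^ 2) := fun t => by
    rw [← Real.sqrt_sq_eq_abs]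
    exact Real.sqrt_le_sqrt (by nlinarith)
  have hup : ∀ t : ℝ, √((t - C) ^ 2 + 4 * η ^ 2) ≤ |t - C| + 2 * η := fun t => by
    refine Real.sqrt_le_iff.2 ⟨by positivity, ?_⟩
    nlinarith [sq_abs (t - C), abs_nonneg (t - C)]
  refine ⟨_, deriv _, hsm, (contDiff_infty_iff_deriv.1 hsm).2,
    fun t => (hsm.differentiable (by simp) t).hasDerivAt, fun t => ?_, fun t => ?_, fun t ht => ?_,
    fun t ht => ?_⟩
  · have := abs_le.1 (habs t)
    have : 0 ≤ k * ((t - C) + √((t - C) ^ 2 + 4 * η ^ 2)) := mul_nonneg hk (by linarith)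
    linarith
  · have := abs_le.1 (habs t)
    have := mul_le_mul_of_nonneg_left this.2 hk
    nlinarith
  · have h1 := hup t
    rw [abs_of_nonpos (by linarith)] at h1
    have := mul_le_mul_of_nonneg_left h1 hk
    nlinarith
  · have h1 := hup t
    rw [abs_of_nonneg (by linarith)] at h1
    have := mul_le_mul_of_nonneg_left h1 hk
    nlinarith

lemma int_mul_two_pi {x : ℝ} {n : ℤ} (h : x = n * (2 * π)) (hx : |x| < 2 * π) : x = 0 := by
  have hp := Real.pi_pos
  rw [h, abs_mul, abs_of_pos (by linarith : 0 < 2 * π)] at hx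
  have h1 : |(n : ℝ)| < 1 := by
    by_contra hcon
    push Not at hcon
    nlinarith
  have h2 : n = 0 := Int.abs_lt_one_iff.1 (by exact_mod_cast h1)
  rw [h, h2]; simp

/-- The embedding takes polar coordinates in `z 1`, untwists, takes polar coordinates in `z 0`,
applies the shear for a smooth approximation `χ` of `t ↦ k max(t - C, 0)`, and returns from polar
coordinates in both factors. In the coordinates `r + iθ`, `ρ + iΘ` before the shear, the sum of the
moment coordinates of the image is `2πρ` and the first one is `2π(r + χ(ρ))`. -/
lemma emb_ellipsoid (c c' p : ℝ) (hc' : 0 < c') (hcc : c' < c) (hp : 0 ≤ p) (hp2 : p ≤ 2 * c) :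
    SympEmb 2 (ellipsoid ![c', 2 * c']) (quadDomain c p) := by
  have hpi := Real.pi_pos
  have hc : 0 < c := hc'.trans hcc
  set k := p / c with hk
  have hk0 : 0 ≤ k := by positivity
  have hk2 : k ≤ 2 := by rw [hk, div_le_iff₀ hc]; exact hp2
  set C := c / (2 * π) with hC
  set C' := c' / (2 * π) with hC'
  have hCc : 2 * π * C = c := by rw [hC]; field_simp
  have hCc' : 2 * π * C' = c' := by rw [hC']; field_simp
  have hC'pos : 0 < C' := by positivity
  have hCC : C' < C := by rw [hC, hC']; gcongr
  set ε := C - C' with hε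
  have hεpos : 0 < ε := by linarith
  set R := 2 * C' + 1 with hR
  have hRpos : 0 < R := by linarith
  have hRn : ∀ x : ℝ, 0 ≤ x → x ^ 2 ≤ 4 * C' → x ≤ R := fun x hx h => by nlinarith
  obtain ⟨f, f1, f2, f3, f4, f5⟩ := exists_strip hRpos hεpos
  obtain ⟨δ, hδ, hδf⟩ : ∃ δ : ℝ, 0 < δ ∧ ∀ z, ‖z‖ ≤ R → δ ≤ (f z).re := by
    have hcomp := isCompact_closedBall (0 : ℂ) R
    have hcont : ContinuousOn (fun z => (f z).re) (Metric.closedBall 0 R) := fun z _ =>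
      (Complex.continuous_re.continuousAt.comp (f1 z).1.continuousAt).continuousWithinAt
    obtain ⟨z0, _, hz0⟩ := hcomp.exists_isMinOn ⟨0, by simp [hRpos.le]⟩ hcont
    exact ⟨_, f3 z0, fun z hz => hz0 (by simpa using hz)⟩
  set e := min ε δ / 4 with he
  have hepos : 0 < e := by positivity
  have heε : 4 * e ≤ ε := by have := min_le_left ε δ; linarith
  have heδ : 4 * e ≤ δ := by have := min_le_right ε δ; linarith
  obtain ⟨g, g1, g2, g3, g4, g5⟩ := exists_strip hRpos hepos
  obtain ⟨χ, χ₁, c1, c2, c3, c4, c5, c6, c7⟩ := exists_hinge k C hk0 (half_pos hepos)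
  set Φ₁ : (Fin 2 → ℂ) → (Fin 2 → ℂ) := fun z => ![z 0, f (z 1)] with hΦ₁
  set Φ₃ : (Fin 2 → ℂ) → (Fin 2 → ℂ) := fun z => ![g (z 0), z 1] with hΦ₃
  set Φ₅ : (Fin 2 → ℂ) → (Fin 2 → ℂ) := fun z => ![polExp (z 0), polExp (z 1)] with hΦ₅
  set Ψ : (Fin 2 → ℂ) → (Fin 2 → ℂ) := fun z => Φ₃ (twist (Φ₁ z)) with hΨ
  have hsh0 : ∀ u, (shear χ χ₁ u 0).re = (u 0).re + χ (u 1).re := fun _ => rfl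
  have hsh1 : ∀ u, (shear χ χ₁ u 1).re = (u 1).re - ((u 0).re + χ (u 1).re) := fun _ => rfl
  -- In the coordinates `r + iθ`, `ρ + iΘ` of `Ψ z`, the last bound confines the bent triangle to
  -- the quadrilateral, and the fourth one keeps the second action `ρ - r - χ(ρ)` positive.
  have key : ∀ z ∈ ellipsoid ![c', 2 * c'], 0 < (Ψ z 0).re ∧ |(Ψ z 0).im| < π ∧
      |(Ψ z 1).im| < π ∧ (Ψ z 0).re + χ (Ψ z 1).re < (Ψ z 1).re ∧
      (C ≤ (Ψ z 1).re → (Ψ z 0).re + χ (Ψ z 1).re ≤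
        2 * C - (Ψ z 1).re + k * ((Ψ z 1).re - C)) := by
    intro z hz
    rw [ellipsoid_iff] at hz
    simp only [Matrix.cons_val_zero, Matrix.cons_val_one] at hz
    have hz' : ‖z 0‖ ^ 2 + ‖z 1‖ ^ 2 / 2 ≤ 2 * C' := by
      rw [← hCc'] at hz
      have : π * ‖z 0‖ ^ 2 / (2 * π * C') + π * ‖z 1‖ ^ 2 / (2 * (2 * π * C')) =
        (‖z 0‖ ^ 2 + ‖z 1‖ ^ 2 / 2) / (2 * C') := by field_simp
      rw [this, div_le_one (by positivity)] at hz
      exact hz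
    have n0 : ‖z 0‖ ≤ R := hRn _ (norm_nonneg _) (by nlinarith [sq_nonneg ‖z 1‖])
    have n1 : ‖z 1‖ ≤ R := hRn _ (norm_nonneg _) (by nlinarith [sq_nonneg ‖z 0‖])
    have hn : ∀ u : ℂ, ‖u‖ ^ 2 = u.re ^ 2 + u.im ^ 2 := fun u => by
      rw [← Complex.normSq_eq_norm_sq, Complex.normSq_apply]; ring
    have ht : ‖twist (Φ₁ z) 0‖ ^ 2 = ‖z 0‖ ^ 2 := by
      have hcs := Real.sin_sq_add_cos_sq (f (z 1)).im
      rw [hn, hn]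
      simp only [twist, hΦ₁, Matrix.cons_val_zero, Matrix.cons_val_one]
      linear_combination ((z 0).re ^ 2 + (z 0).im ^ 2) * hcs
    have ht' : ‖twist (Φ₁ z) 0‖ ≤ R := by
      rw [(sq_eq_sq₀ (norm_nonneg _) (norm_nonneg _)).1 ht]; exact n0
    have h0 : (Ψ z 0) = g (twist (Φ₁ z) 0) := rfl
    have h1 : (Ψ z 1).re = (f (z 1)).re + ‖z 0‖ ^ 2 / 2 := by rw [hn]; rfl
    have h1' : (Ψ z 1).im = (f (z 1)).im := rfl
    have hg5 := g5 _ ht'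
    rw [ht, ← h0] at hg5
    have hf5 := f5 _ n1
    have hδ1 := hδf _ n1
    have hkη : k * (e / 2) ≤ e := by nlinarith
    rw [h1']
    generalize (Ψ z 1).re = ρ at *
    refine ⟨by rw [h0]; exact g3 _, by rw [h0]; exact g4 _, f4 _, ?_, fun hρ => ?_⟩
    · rcases le_total ρ C with hρ | hρ
      · have := c6 ρ hρ
        linarith
      · have := c7 ρ hρ
        have : k * (ρ - C) ≤ 2 * (ρ - C) := mul_le_mul_of_nonneg_right hk2 (by linarith)
        linarith
    · have := c7 ρ hρ
      linarith
  have hsymp : ∀ z ∈ ellipsoid ![c', 2 * c'], SympAt (fun z => Φ₅ (shear χ χ₁ (Ψ z))) z := by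
    intro z hz
    obtain ⟨k1, k2, k3, k4, k5⟩ := key z hz
    have a1 : SympAt Φ₁ z := AreaAt.prod (areaAt_id _) (f1 _)
    have a3 : SympAt Φ₃ (twist (Φ₁ z)) := AreaAt.prod (g1 _) (areaAt_id _)
    have a4 : SympAt Ψ z := SympAt.comp (g := fun y => Φ₃ (twist y)) (a3.comp (twist_symp _)) a1
    have a5 : SympAt Φ₅ (shear χ χ₁ (Ψ z)) := by
      refine AreaAt.prod (polExp_area ?_) (polExp_area ?_)
      · have := c4 (Ψ z 1).re
        rw [hsh0]; linarith
      · rw [hsh1]; linarith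
    exact SympAt.comp (g := fun y => Φ₅ (shear χ χ₁ y)) (a5.comp (shear_symp c1 c2 c3 _)) a4
  refine ⟨fun z => Φ₅ (shear χ χ₁ (Ψ z)), ?_, ?_, ?_, ?_⟩
  · intro z hz y hy h
    obtain ⟨k1, k2, k3, k4, k5⟩ := key z hz
    obtain ⟨l1, l2, l3, l4, l5⟩ := key y hy
    have hcz := c4 (Ψ z 1).re
    have hcy := c4 (Ψ y 1).re
    have h0 : polExp (shear χ χ₁ (Ψ z) 0) = polExp (shear χ χ₁ (Ψ y) 0) := congrFun h 0
    have h1 : polExp (shear χ χ₁ (Ψ z) 1) = polExp (shear χ χ₁ (Ψ y) 1) := congrFun h 1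
    obtain ⟨e0, n0, e0'⟩ := polExp_inj (by rw [hsh0]; linarith)
      (by rw [hsh0]; linarith) h0
    obtain ⟨e1, n1, e1'⟩ := polExp_inj (by rw [hsh1]; linarith)
      (by rw [hsh1]; linarith) h1
    simp only [shear, Matrix.cons_val_zero, Matrix.cons_val_one] at e0 e0' e1 e1'
    have m1 : (Ψ z 1).re = (Ψ y 1).re := by linarith
    have m0 : (Ψ z 0).re = (Ψ y 0).re := by rw [m1] at e0; linarith
    have m2 : (Ψ z 0).im = (Ψ y 0).im := by
      have := int_mul_two_pi (x := (Ψ z 0).im - (Ψ y 0).im) (n := n0 - n1)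
        (by push_cast; linarith) (by
          have := abs_lt.1 k2
          have := abs_lt.1 l2
          rw [abs_lt]; constructor <;> linarith)
      linarith
    have m3 : (Ψ z 1).im = (Ψ y 1).im := by
      rw [m1, m2] at e1'
      have := int_mul_two_pi (x := (Ψ z 1).im - (Ψ y 1).im) (n := n1)
        (by linarith) (by
          have := abs_lt.1 k3
          have := abs_lt.1 l3
          rw [abs_lt]; constructor <;> linarith)
      linarith
    have q0 : g (twist (Φ₁ z) 0) = g (twist (Φ₁ y) 0) := Complex.ext m0 m2
    have q1 : twist (Φ₁ z) 1 = twist (Φ₁ y) 1 := Complex.ext m1 m3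
    have q2 := g2 q0
    have r1 := congrArg Complex.re q2
    have r2 := congrArg Complex.im q2
    have r3 := congrArg Complex.re q1
    have r4 := congrArg Complex.im q1
    simp only [twist, hΦ₁, Matrix.cons_val_zero, Matrix.cons_val_one] at r1 r2 r3 r4
    rw [r4] at r1 r2
    have hcs := Real.sin_sq_add_cos_sq (f (y 1)).im
    set S := Real.sin (f (y 1)).im
    set T := Real.cos (f (y 1)).im
    have t1 : (z 0).re = (y 0).re := by
      linear_combination T * r1 - S * r2 - ((z 0).re - (y 0).re) * hcs
    have t2 : (z 0).im = (y 0).im := by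
      linear_combination S * r1 + T * r2 - ((z 0).im - (y 0).im) * hcs
    have t3 : f (z 1) = f (y 1) := by
      refine Complex.ext ?_ r4
      rw [t1, t2] at r3; linarith
    funext i
    fin_cases i
    · exact Complex.ext t1 t2
    · exact f2 t3
  · rintro _ ⟨z, hz, rfl⟩
    obtain ⟨k1, k2, k3, k4, k5⟩ := key z hz
    have hcz := c4 (Ψ z 1).re
    have hcz' := c5 (Ψ z 1).re
    have n0 : ‖Φ₅ (shear χ χ₁ (Ψ z)) 0‖ ^ 2 = 2 * ((Ψ z 0).re + χ (Ψ z 1).re) :=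
      polExp_norm (z := shear χ χ₁ (Ψ z) 0) (by rw [hsh0]; linarith)
    have n1 : ‖Φ₅ (shear χ χ₁ (Ψ z)) 1‖ ^ 2 = 2 * ((Ψ z 1).re - ((Ψ z 0).re + χ (Ψ z 1).re)) :=
      polExp_norm (z := shear χ χ₁ (Ψ z) 1) (by rw [hsh1]; linarith)
    have hpk : p = k * c := by rw [hk]; field_simp
    simp only [quadDomain, mem_ofPred_eq]
    rw [n0, n1]
    generalize (Ψ z 1).re = ρ at *
    have hA : k * (ρ - C) ≤ (Ψ z 0).re + χ ρ := by linarith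
    generalize (Ψ z 0).re + χ ρ = A at *
    have hsum : π * (2 * A) + π * (2 * (ρ - A)) = 2 * π * ρ := by ring
    rw [hsum]
    have h2c : 2 * π * ρ - c = 2 * π * (ρ - C) := by rw [← hCc]; ring
    have hKpos : 0 < c * (2 * π) := by positivity
    rcases le_total ρ C with hρ | hρ
    · left
      nlinarith
    · refine Or.inr ⟨by nlinarith, ?_, ?_⟩
      · rw [h2c]
        calc p * (2 * π * (ρ - C)) = c * (2 * π) * (k * (ρ - C)) := by rw [hpk]; ring
          _ ≤ c * (2 * π) * A := by gcongr
          _ = _ := by ring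
      · rw [h2c]
        calc c * (π * (2 * A)) = c * (2 * π) * A := by ring
          _ ≤ c * (2 * π) * (2 * C - ρ + k * (ρ - C)) :=
            mul_le_mul_of_nonneg_left (k5 hρ) hKpos.le
          _ = c * (2 * (2 * π * C) - 2 * π * ρ) + k * c * (2 * π * (ρ - C)) := by ring
          _ = _ := by rw [hCc, ← hpk]
  · exact fun z hz => (hsymp z (interior_subset hz)).1.contDiffWithinAt
  · intro z hz v w
    obtain ⟨_, L, h1, h2⟩ := hsymp z (interior_subset hz)
    rw [h1.fderiv]; exact h2 v w

/-- For a convex toric domain `X_Ω ⊂ ℂ²` with axis intercepts `a`, `b` and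
`w = max{x+y : (x,y) ∈ Ω}`, we have `c₂ᵐⁱⁿ(X_Ω) = c₂ᵐᵃˣ(X_Ω) = min(2·min(a,b), w)`. -/
theorem stmt1 (Ω : Set (Fin 2 → ℝ)) (hΩ : IsConvexToricDomain Ω) (a b w : ℝ)
    (ha : IsGreatest {x : ℝ | ![x, 0] ∈ Ω} a)
    (hb : IsGreatest {y : ℝ | ![0, y] ∈ Ω} b)
    (hw : IsGreatest ((fun p : Fin 2 → ℝ => p 0 + p 1) '' Ω) w) :
    ckmin 2 2 (toricDomain Ω) = min (2 * min a b) w ∧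
    ckmax 2 2 (toricDomain Ω) = min (2 * min a b) w := by
  exact main_of_emb emb_ellipsoid Ω hΩ a b w ha hb hw

end
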